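/- Let n ≥ 2, −∞ < μ < 1/4, 1 < p < p_c := 1 + 2/(n−2+α₊), and let F be a nonempty closed subset of the boundary hyperplane ∂ℝⁿ₊ = {x ∈ ℝⁿ : x₁ = 0}. Then there exist a constant c > 0 depending only on n, μ, p, and a positive classical solution U of ΔU + (μ/x₁²)U = U^p on ℝⁿ₊ such that: (i) U(x) → 0 as x → y for every boundary point y ∈ ∂ℝⁿ₊ \ F; (ii) for every point (0,ξ) ∈ F one has c⁻¹ x₁^{−2/(p−1)} ≤ U(x₁,ξ) ≤ c x₁^{−2/(p−1)} for all x₁ ∈ (0,1); and (iii) c⁻¹ x₁^{α₊} dist(x,F)^{−α₊−2/(p−1)} ≤ U(x) ≤ c x₁^{α₊} dist(x,F)^{−α₊−2/(p−1)} for all x ∈ ℝⁿ₊. -/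

import Mathlib

open Real Set

noncomputable def lap {n : ℕ} (u : EuclideanSpace ℝ (Fin n) → ℝ)
    (x : EuclideanSpace ℝ (Fin n)) : ℝ :=
  ∑ i : Fin n, iteratedFDeriv ℝ 2 u x ![EuclideanSpace.single i 1, EuclideanSpace.single i 1]

noncomputable def x1 {n : ℕ} (x : EuclideanSpace ℝ (Fin n)) : ℝ :=
  if h : 0 < n then x ⟨0, h⟩ else 0

def halfSpace (n : ℕ) : Set (EuclideanSpace ℝ (Fin n)) := {x | 0 < x1 x}

noncomputable def aPlus (μ : ℝ) : ℝ := 1 / 2 + Real.sqrt (1 / 4 - μ)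

noncomputable def aMinus (μ : ℝ) : ℝ := 1 / 2 - Real.sqrt (1 / 4 - μ)

noncomputable def Lam (n : ℕ) (s : ℝ) : ℝ := s * (s + n - 2)

/-- First coordinate unit vector of `ℝⁿ`. -/
noncomputable def e1 (n : ℕ) : EuclideanSpace ℝ (Fin n) :=
  if h : 0 < n then EuclideanSpace.single ⟨0, h⟩ 1 else 0

set_option linter.unusedSectionVars false
set_option maxSynthPendingDepth 3

/-- Laplacian on a Euclidean space with general finite index type. -/
noncomputable def lapG {ι : Type} [Fintype ι] [DecidableEq ι] (u : EuclideanSpace ℝ ι → ℝ)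
    (x : EuclideanSpace ℝ ι) : ℝ :=
  ∑ i : ι, iteratedFDeriv ℝ 2 u x ![EuclideanSpace.single i 1, EuclideanSpace.single i 1]

lemma lap_eq_lapG {n : ℕ} (u : EuclideanSpace ℝ (Fin n) → ℝ) (x : EuclideanSpace ℝ (Fin n)) :
    lap u x = lapG u x := rfl

lemma iter2_eq {V : Type*} [NormedAddCommGroup V] [NormedSpace ℝ V] {u : V → ℝ} {x : V}
    (hu : ContDiffAt ℝ 2 u x) (v : V) :
    iteratedFDeriv ℝ 2 u x ![v, v] = fderiv ℝ (fun y => fderiv ℝ u y v) x v := by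
  rw [iteratedFDeriv_two_apply]
  have h1 : DifferentiableAt ℝ (fderiv ℝ u) x :=
    (hu.fderiv_right (m := 1) (by norm_num)).differentiableAt (by norm_num)
  have := fderiv_clm_apply h1 (differentiableAt_const (c := v))
  rw [this]
  simp

/-- `u` is `C²` at `x` with gradient `g` and Laplacian `l`. -/
structure HL {ι : Type} [Fintype ι] [DecidableEq ι] (u : EuclideanSpace ℝ ι → ℝ)
    (x : EuclideanSpace ℝ ι) (g : ι → ℝ) (l : ℝ) : Prop where
  cd : ContDiffAt ℝ 2 u x
  gr : ∀ i, fderiv ℝ u x (EuclideanSpace.single i 1) = g i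
  la : lapG u x = l

section HLsec
variable {ι : Type} [Fintype ι] [DecidableEq ι] {u v : EuclideanSpace ℝ ι → ℝ}
  {x : EuclideanSpace ℝ ι} {g g' : ι → ℝ} {l l' : ℝ}

lemma cd_ev {V : Type*} [NormedAddCommGroup V] [NormedSpace ℝ V] {u : V → ℝ} {x : V}
    (hu : ContDiffAt ℝ 2 u x) : ∀ᶠ y in nhds x, DifferentiableAt ℝ u y := by
  filter_upwards [hu.eventually (by simp)] with y hy
  exact hy.differentiableAt (by norm_num)

lemma cd_dir {V : Type*} [NormedAddCommGroup V] [NormedSpace ℝ V] {u : V → ℝ} {x : V}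
    (hu : ContDiffAt ℝ 2 u x) (e : V) : DifferentiableAt ℝ (fun y => fderiv ℝ u y e) x :=
  ((hu.fderiv_right (m := 1) (by norm_num)).differentiableAt (by norm_num)).clm_apply
    (differentiableAt_const _)

lemma HL.of_cd (hu : ContDiffAt ℝ 2 u x) :
    HL u x (fun i => fderiv ℝ u x (EuclideanSpace.single i 1)) (lapG u x) := ⟨hu, fun _ => rfl, rfl⟩

lemma HL.add (h : HL u x g l) (h' : HL v x g' l') :
    HL (fun y => u y + v y) x (fun i => g i + g' i) (l + l') := by
  refine ⟨h.cd.add h'.cd, fun i => ?_, ?_⟩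
  · rw [fderiv_fun_add (h.cd.differentiableAt (by norm_num)) (h'.cd.differentiableAt (by norm_num))]
    simp [h.gr, h'.gr]
  · rw [← h.la, ← h'.la]
    unfold lapG
    rw [← Finset.sum_add_distrib]
    refine Finset.sum_congr rfl fun i _ => ?_
    rw [iter2_eq (h.cd.add h'.cd), iter2_eq h.cd, iter2_eq h'.cd]
    have : (fun y => fderiv ℝ (fun y => u y + v y) y (EuclideanSpace.single i 1)) =ᶠ[nhds x]
        fun y => fderiv ℝ u y (EuclideanSpace.single i 1) + fderiv ℝ v y (EuclideanSpace.single i 1) := by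
      filter_upwards [cd_ev h.cd, cd_ev h'.cd] with y h1 h2
      rw [fderiv_fun_add h1 h2]; simp
    rw [this.fderiv_eq, fderiv_fun_add (cd_dir h.cd _) (cd_dir h'.cd _)]
    simp

lemma HL.mul (h : HL u x g l) (h' : HL v x g' l') :
    HL (fun y => u y * v y) x (fun i => u x * g' i + v x * g i)
      (u x * l' + v x * l + 2 * ∑ i, g i * g' i) := by
  refine ⟨h.cd.mul h'.cd, fun i => ?_, ?_⟩
  · rw [fderiv_fun_mul (h.cd.differentiableAt (by norm_num)) (h'.cd.differentiableAt (by norm_num))]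
    simp [h.gr, h'.gr]
  · rw [← h.la, ← h'.la]
    unfold lapG
    rw [Finset.mul_sum, Finset.mul_sum, Finset.mul_sum, ← Finset.sum_add_distrib,
      ← Finset.sum_add_distrib]
    refine Finset.sum_congr rfl fun i _ => ?_
    rw [iter2_eq (h.cd.mul h'.cd), iter2_eq h.cd, iter2_eq h'.cd]
    have : (fun y => fderiv ℝ (fun y => u y * v y) y (EuclideanSpace.single i 1)) =ᶠ[nhds x]
        fun y => u y * fderiv ℝ v y (EuclideanSpace.single i 1) +
          v y * fderiv ℝ u y (EuclideanSpace.single i 1) := by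
      filter_upwards [cd_ev h.cd, cd_ev h'.cd] with y h1 h2
      rw [fderiv_fun_mul h1 h2]; simp
    have hu := (h.cd.differentiableAt (by norm_num))
    have hv := (h'.cd.differentiableAt (by norm_num))
    rw [this.fderiv_eq, fderiv_fun_add (hu.fun_mul (cd_dir h'.cd _)) (hv.fun_mul (cd_dir h.cd _)),
      fderiv_fun_mul hu (cd_dir h'.cd _), fderiv_fun_mul hv (cd_dir h.cd _)]
    simp [h.gr, h'.gr]
    ring

lemma HL.const (c : ℝ) : HL (fun _ => c) x (fun _ => 0) 0 := by
  refine ⟨contDiffAt_const, fun i => by simp, ?_⟩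
  unfold lapG
  refine Finset.sum_eq_zero fun i _ => ?_
  rw [iter2_eq contDiffAt_const]
  simp

lemma HL.congr (h : HL u x g l) {g₂ : ι → ℝ} {l₂ : ℝ} (hg : ∀ i, g i = g₂ i) (hl : l = l₂) :
    HL u x g₂ l₂ := by
  have : g = g₂ := funext hg
  subst this; subst hl; exact h

lemma HL.const_mul (h : HL u x g l) (c : ℝ) :
    HL (fun y => c * u y) x (fun i => c * g i) (c * l) :=
  ((HL.const c).mul h).congr (fun i => by simp) (by simp)

lemma HL.sub (h : HL u x g l) (h' : HL v x g' l') :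
    HL (fun y => u y - v y) x (fun i => g i - g' i) (l - l') := by
  have := (h.add (h'.const_mul (-1))).congr (g₂ := fun i => g i - g' i) (l₂ := l - l')
    (fun i => by ring) (by ring)
  have e : (fun y => u y - v y) = fun y => u y + -1 * v y := by funext y; ring
  rw [e]; exact this

lemma HL.comp (h : HL u x g l) {φ φ' : ℝ → ℝ} {φ'' : ℝ} (hφ : ContDiffAt ℝ 2 φ (u x))
    (h1 : ∀ᶠ t in nhds (u x), HasDerivAt φ (φ' t) t) (h2 : HasDerivAt φ' φ'' (u x)) :
    HL (fun y => φ (u y)) x (fun i => φ' (u x) * g i) (φ' (u x) * l + φ'' * ∑ i, g i ^ 2) := by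
  have hcd : ContDiffAt ℝ 2 (fun y => φ (u y)) x := ContDiffAt.comp x hφ h.cd
  have hu := (h.cd.differentiableAt (by norm_num))
  have key : ∀ y, DifferentiableAt ℝ u y → HasDerivAt φ (φ' (u y)) (u y) → ∀ e,
      fderiv ℝ (fun y => φ (u y)) y e = φ' (u y) * fderiv ℝ u y e := by
    intro y hy hd e
    have := (hd.comp_hasFDerivAt y hy.hasFDerivAt).fderiv
    have e2 : (φ ∘ u) = fun y => φ (u y) := rfl
    rw [e2] at this
    rw [this]; simp
  refine ⟨hcd, fun i => ?_, ?_⟩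
  · rw [key x hu h1.self_of_nhds, h.gr]
  · rw [← h.la]
    unfold lapG
    rw [Finset.mul_sum, Finset.mul_sum, ← Finset.sum_add_distrib]
    refine Finset.sum_congr rfl fun i _ => ?_
    rw [iter2_eq hcd, iter2_eq h.cd]
    have : (fun y => fderiv ℝ (fun y => φ (u y)) y (EuclideanSpace.single i 1)) =ᶠ[nhds x]
        fun y => φ' (u y) * fderiv ℝ u y (EuclideanSpace.single i 1) := by
      filter_upwards [cd_ev h.cd, hu.continuousAt.eventually h1] with y h3 h4
      exact key y h3 h4 _
    have hd : HasFDerivAt (fun y => φ' (u y)) (φ'' • fderiv ℝ u x) x :=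
      h2.comp_hasFDerivAt x hu.hasFDerivAt
    rw [this.fderiv_eq, fderiv_fun_mul hd.differentiableAt (cd_dir h.cd _), hd.fderiv]
    simp [h.gr]
    ring

lemma HL.rpow (h : HL u x g l) (hpos : 0 < u x) (γ : ℝ) :
    HL (fun y => u y ^ γ) x (fun i => γ * u x ^ (γ - 1) * g i)
      (γ * u x ^ (γ - 1) * l + γ * (γ - 1) * u x ^ (γ - 2) * ∑ i, g i ^ 2) := by
  refine (h.comp (φ := fun t => t ^ γ) (φ' := fun t => γ * t ^ (γ - 1))
    (φ'' := γ * ((γ - 1) * u x ^ (γ - 2))) (Real.contDiffAt_rpow_const_of_ne hpos.ne') ?_ ?_).congr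
    (fun i => rfl) (by ring)
  · filter_upwards [lt_mem_nhds hpos] with t ht
    exact Real.hasDerivAt_rpow_const (Or.inl ht.ne')
  · have := (Real.hasDerivAt_rpow_const (p := γ - 1) (Or.inl hpos.ne')).const_mul γ
    rwa [show γ - 1 - 1 = γ - 2 by ring] at this

lemma HL.coord (i : ι) : HL (fun y : EuclideanSpace ℝ ι => y i) x (Pi.single i 1) 0 := by
  have e : (fun y : EuclideanSpace ℝ ι => y i) = (EuclideanSpace.proj i : EuclideanSpace ℝ ι →L[ℝ] ℝ) := rfl
  have hcd : ContDiffAt ℝ 2 (fun y : EuclideanSpace ℝ ι => y i) x := by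
    rw [e]; exact ContinuousLinearMap.contDiff _ |>.contDiffAt
  refine ⟨hcd, fun j => ?_, ?_⟩
  · rw [e, ContinuousLinearMap.fderiv]
    simp [Pi.single_apply, eq_comm]
  · unfold lapG
    refine Finset.sum_eq_zero fun j _ => ?_
    rw [iter2_eq hcd, e]
    simp only [ContinuousLinearMap.fderiv]
    simp

lemma HL.sq (h : HL u x g l) :
    HL (fun y => u y ^ 2) x (fun i => 2 * u x * g i) (2 * u x * l + 2 * ∑ i, g i ^ 2) := by
  have := (h.mul h).congr (g₂ := fun i => 2 * u x * g i)
    (l₂ := 2 * u x * l + 2 * ∑ i, g i ^ 2) (fun i => by ring) (by simp only [_root_.sq]; ring)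
  simpa only [_root_.sq] using this

lemma HL.sum {κ : Type} (s : Finset κ) {u : κ → EuclideanSpace ℝ ι → ℝ} {g : κ → ι → ℝ} {l : κ → ℝ}
    (h : ∀ k ∈ s, HL (u k) x (g k) (l k)) :
    HL (fun y => ∑ k ∈ s, u k y) x (fun i => ∑ k ∈ s, g k i) (∑ k ∈ s, l k) := by
  classical
  induction s using Finset.induction_on with
  | empty => simpa using HL.const 0
  | insert a s ha ih =>
    simp only [Finset.sum_insert ha]
    exact (h a (by simp)).add (ih fun k hk => h k (by simp [hk]))

lemma HL.normsq (ξ : EuclideanSpace ℝ ι) : HL (fun y : EuclideanSpace ℝ ι => ‖y - ξ‖ ^ 2) x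
    (fun i => 2 * (x i - ξ i)) (2 * Fintype.card ι) := by
  have e : (fun y : EuclideanSpace ℝ ι => ‖y - ξ‖ ^ 2) = fun y => ∑ i, (y i - ξ i) ^ 2 := by
    funext y; rw [EuclideanSpace.norm_sq_eq]; simp
  rw [e]
  refine (HL.sum Finset.univ (fun k _ => ((HL.coord k).sub (HL.const (ξ k))).sq)).congr
    (fun i => ?_) ?_
  · simp [Pi.single_apply]
  · simp [Pi.single_apply]
    ring

end HLsec


open MeasureTheory Metric Filter Topology in
/-- Uniform convergence of convolution type integrals. -/
lemma conv_unif {V A F W : Type*} [NormedAddCommGroup V] [InnerProductSpace ℝ V]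
    [FiniteDimensional ℝ V] [MeasurableSpace V] [BorelSpace V]
    [NormedAddCommGroup A] [NormedSpace ℝ A] [NormedAddCommGroup F] [NormedSpace ℝ F]
    [NormedAddCommGroup W] [NormedSpace ℝ W]
    (L : A →L[ℝ] F →L[ℝ] W) {g : V → F} (hg : StronglyMeasurable g) {C R : ℝ}
    (hC : ∀ y, ‖g y‖ ≤ C) (hR : ∀ y, R ≤ ‖y‖ → g y = 0)
    {K : V → A} (hK : StronglyMeasurable K) (hKi : ∀ r, IntegrableOn K (ball 0 r)) :
    (∀ x, Integrable fun y => L (K (x - y)) (g y)) ∧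
    ∀ (x₀ x : V), x ∈ ball x₀ 1 → ‖∫ y, L (K (x - y)) (g y)‖ ≤
      ‖L‖ * C * ∫ z in ball (0 : V) (R + ‖x₀‖ + 1), ‖K z‖ := by
  have bd : ∀ (x₀ x : V), x ∈ ball x₀ 1 → ∀ y, ‖L (K (x - y)) (g y)‖ ≤
      ‖L‖ * C * (ball (0 : V) (R + ‖x₀‖ + 1)).indicator (fun z => ‖K z‖) (x - y) := by
    intro x₀ x hx y
    have hC0 : 0 ≤ C := (norm_nonneg _).trans (hC y)
    by_cases hy : R ≤ ‖y‖
    · rw [hR y hy]; simp only [map_zero, norm_zero]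
      refine mul_nonneg (by positivity) (indicator_nonneg (fun _ _ => norm_nonneg _) _)
    · push Not at hy
      have hx' : ‖x - x₀‖ < 1 := by rwa [mem_ball, dist_eq_norm] at hx
      have : x - y ∈ ball (0 : V) (R + ‖x₀‖ + 1) := by
        rw [mem_ball_zero_iff]
        calc ‖x - y‖ = ‖(x - x₀) + x₀ - y‖ := by congr 1; abel
          _ ≤ ‖(x - x₀) + x₀‖ + ‖y‖ := norm_sub_le _ _
          _ ≤ ‖x - x₀‖ + ‖x₀‖ + ‖y‖ := by gcongr; exact norm_add_le _ _
          _ < _ := by linarith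
      rw [indicator_of_mem this]
      calc _ ≤ ‖L‖ * ‖K (x - y)‖ * ‖g y‖ := L.le_opNorm₂ _ _
        _ ≤ ‖L‖ * ‖K (x - y)‖ * C := by gcongr; exact hC y
        _ = _ := by ring
  have int1 : ∀ (x : V) (r : ℝ), Integrable fun y => (ball (0 : V) r).indicator (fun z => ‖K z‖) (x - y) := by
    intro x r
    exact (IntegrableOn.integrable_indicator ((hKi r).norm) measurableSet_ball).comp_sub_left x
  constructor
  · intro x
    refine Integrable.mono' ((int1 x _).const_mul (‖L‖ * C)) ?_
      (Eventually.of_forall (bd x x (mem_ball_self one_pos)))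
    have hm : StronglyMeasurable fun y => K (x - y) :=
      hK.comp_measurable (measurable_const.sub measurable_id)
    exact (L.aestronglyMeasurable_comp₂ hm.aestronglyMeasurable hg.aestronglyMeasurable)
  · intro x₀ x hx
    refine (norm_integral_le_of_norm_le ((int1 x _).const_mul (‖L‖ * C))
      (Eventually.of_forall (bd x₀ x hx))).trans ?_
    rw [integral_const_mul,
      integral_sub_left_eq_self ((ball (0 : V) (R + ‖x₀‖ + 1)).indicator (fun z => ‖K z‖)) volume x,
      integral_indicator measurableSet_ball]

section kernels
variable {V : Type*} [NormedAddCommGroup V] [InnerProductSpace ℝ V]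

/-- Regularised power kernel. -/
noncomputable def kap (ε γ : ℝ) (z : V) : ℝ := (‖z‖ ^ 2 + ε) ^ γ

/-- Its derivative. -/
noncomputable def dkap (ε γ : ℝ) (z : V) : V →L[ℝ] ℝ :=
  (2 * γ * (‖z‖ ^ 2 + ε) ^ (γ - 1)) • innerSL ℝ z

lemma kap_hasFDerivAt {ε γ : ℝ} {z : V} (h : 0 < ‖z‖ ^ 2 + ε) :
    HasFDerivAt (kap ε γ) (dkap ε γ z) z := by
  have h1 : HasFDerivAt (fun z : V => ‖z‖ ^ 2 + ε) (2 • innerSL ℝ z) z :=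
    (hasStrictFDerivAt_norm_sq z).hasFDerivAt.add_const ε
  have := (Real.hasDerivAt_rpow_const (p := γ) (Or.inl h.ne')).comp_hasFDerivAt z h1
  have e : dkap ε γ z = (γ * (‖z‖ ^ 2 + ε) ^ (γ - 1)) • (2 • innerSL ℝ z) := by
    unfold dkap
    ext v
    simp
    ring
  rw [e]
  exact this

lemma dkap_norm_le {ε γ : ℝ} (hε : 0 ≤ ε) (hγ : γ < 0) {z : V} (hz : z ≠ 0) :
    ‖dkap ε γ z‖ ≤ 2 * |γ| * ‖z‖ ^ (-(1 - 2 * γ)) := by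
  have hz' : 0 < ‖z‖ := norm_pos_iff.mpr hz
  unfold dkap
  rw [norm_smul, innerSL_apply_norm, Real.norm_eq_abs, abs_mul, abs_mul,
    abs_of_nonneg (a := (‖z‖ ^ 2 + ε) ^ (γ - 1)) (by positivity), abs_two]
  have h1 : (‖z‖ ^ 2 + ε) ^ (γ - 1) ≤ (‖z‖ ^ 2) ^ (γ - 1) :=
    Real.rpow_le_rpow_of_nonpos (by positivity) (by linarith) (by linarith)
  have h2 : (‖z‖ ^ 2) ^ (γ - 1) * ‖z‖ = ‖z‖ ^ (-(1 - 2 * γ)) := by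
    rw [← Real.rpow_natCast, ← Real.rpow_mul hz'.le]
    nth_rewrite 2 [← Real.rpow_one ‖z‖]
    rw [← Real.rpow_add hz']
    congr 1; push_cast; ring
  calc _ ≤ 2 * |γ| * (‖z‖ ^ 2) ^ (γ - 1) * ‖z‖ := by gcongr
    _ = _ := by rw [mul_assoc, h2]

lemma dkap_norm_le' {ε γ : ℝ} (hε : 0 < ε) (hγ : γ < 0) (z : V) :
    ‖dkap ε γ z‖ ≤ 2 * |γ| * ε ^ (γ - 1 / 2) := by
  unfold dkap
  rw [norm_smul, innerSL_apply_norm, Real.norm_eq_abs, abs_mul, abs_mul,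
    abs_of_nonneg (a := (‖z‖ ^ 2 + ε) ^ (γ - 1)) (by positivity), abs_two]
  have h0 : 0 < ‖z‖ ^ 2 + ε := by positivity
  have h1 : ‖z‖ ≤ (‖z‖ ^ 2 + ε) ^ (1 / 2 : ℝ) := by
    rw [← Real.sqrt_eq_rpow]
    exact Real.le_sqrt_of_sq_le (by linarith)
  calc _ ≤ 2 * |γ| * (‖z‖ ^ 2 + ε) ^ (γ - 1) * (‖z‖ ^ 2 + ε) ^ (1 / 2 : ℝ) := by gcongr
    _ = 2 * |γ| * (‖z‖ ^ 2 + ε) ^ (γ - 1 / 2) := by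
      rw [mul_assoc, ← Real.rpow_add h0]; congr 2; ring
    _ ≤ _ := by
      have : (‖z‖ ^ 2 + ε) ^ (γ - 1 / 2) ≤ ε ^ (γ - 1 / 2) :=
        Real.rpow_le_rpow_of_nonpos hε (le_add_of_nonneg_left (by positivity)) (by linarith)
      gcongr

lemma kap_nonneg {ε γ : ℝ} (hε : 0 ≤ ε) (z : V) : 0 ≤ kap ε γ z := by
  unfold kap; positivity

lemma kap_zero (γ : ℝ) (z : V) : kap 0 γ z = ‖z‖ ^ (2 * γ) := by
  unfold kap
  rw [add_zero, ← Real.rpow_natCast, ← Real.rpow_mul (norm_nonneg _)]; norm_num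

lemma kap_le {ε γ : ℝ} (hε : 0 ≤ ε) (hγ : γ < 0) {z : V} (hz : z ≠ 0) :
    kap ε γ z ≤ ‖z‖ ^ (-(- 2 * γ)) := by
  have hz' : 0 < ‖z‖ := norm_pos_iff.mpr hz
  rw [show -(-2 * γ) = 2 * γ by ring, ← kap_zero]
  unfold kap
  exact Real.rpow_le_rpow_of_nonpos (by positivity) (by linarith) hγ.le

lemma kap_le' {ε γ : ℝ} (hε : 0 < ε) (hγ : γ < 0) (z : V) : kap ε γ z ≤ ε ^ γ := by
  unfold kap
  exact Real.rpow_le_rpow_of_nonpos hε (by nlinarith [norm_nonneg z]) hγ.le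

lemma kap_continuous {ε γ : ℝ} (hε : 0 < ε) : Continuous (kap ε γ : V → ℝ) := by
  unfold kap
  exact Continuous.rpow_const (by fun_prop) (fun z => Or.inl (by positivity))

lemma dkap_continuous {ε γ : ℝ} (hε : 0 < ε) : Continuous (dkap ε γ : V → V →L[ℝ] ℝ) := by
  unfold dkap
  refine Continuous.smul (continuous_const.mul
    (Continuous.rpow_const (by fun_prop) (fun z => Or.inl (by positivity)))) (innerSL ℝ).continuous

variable [FiniteDimensional ℝ V] [MeasurableSpace V] [BorelSpace V]

lemma kap_sm {ε γ : ℝ} : MeasureTheory.StronglyMeasurable (kap ε γ : V → ℝ) := by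
  unfold kap
  exact Measurable.stronglyMeasurable (by fun_prop)

lemma dkap_sm {ε γ : ℝ} : MeasureTheory.StronglyMeasurable (dkap ε γ : V → V →L[ℝ] ℝ) := by
  unfold dkap
  refine MeasureTheory.StronglyMeasurable.smul (f := fun z : V => 2 * γ * (‖z‖ ^ 2 + ε) ^ (γ - 1))
    (Measurable.stronglyMeasurable (by fun_prop)) (innerSL ℝ).continuous.stronglyMeasurable

open MeasureTheory Metric Filter Topology

lemma ae_ne_zero (hV : 1 ≤ Module.finrank ℝ V) : ∀ᵐ z : V, z ≠ 0 := by
  have : Nontrivial V := Module.nontrivial_of_finrank_pos (R := ℝ) (by omega)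
  exact Measure.ae_ne volume 0

lemma kap_int {ε γ : ℝ} (hε : 0 ≤ ε) (hγ : γ < 0) (hV : 1 - 2 * γ < Module.finrank ℝ V) (r : ℝ) :
    IntegrableOn (kap ε γ : V → ℝ) (ball 0 r) := by
  have hV1 : 1 ≤ Module.finrank ℝ V := by
    have : (0 : ℝ) < Module.finrank ℝ V := by linarith
    exact_mod_cast this
  refine integrableOn_ball_of_norm_le_rpow (C := 1) (α := -2 * γ) hV1 (by linarith) ?_
    kap_sm.aestronglyMeasurable
  refine ae_restrict_of_ae ?_
  filter_upwards [ae_ne_zero hV1] with z hz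
  rw [Real.norm_of_nonneg (kap_nonneg hε z), one_mul]
  exact kap_le hε hγ hz

lemma dkap_int {ε γ : ℝ} (hε : 0 ≤ ε) (hγ : γ < 0) (hV : 1 - 2 * γ < Module.finrank ℝ V) (r : ℝ) :
    IntegrableOn (dkap ε γ : V → V →L[ℝ] ℝ) (ball 0 r) := by
  have hV1 : 1 ≤ Module.finrank ℝ V := by
    have : (0 : ℝ) < Module.finrank ℝ V := by linarith
    exact_mod_cast this
  refine integrableOn_ball_of_norm_le_rpow (C := 2 * |γ|) (α := 1 - 2 * γ) hV1 (by linarith) ?_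
    dkap_sm.aestronglyMeasurable
  refine ae_restrict_of_ae ?_
  filter_upwards [ae_ne_zero hV1] with z hz
  exact dkap_norm_le hε hγ hz

lemma eps_tendsto : Tendsto (fun j : ℕ => 1 / ((j : ℝ) + 1)) atTop (𝓝 0) :=
  tendsto_one_div_add_atTop_nhds_zero_nat

lemma pow_eps_tendsto {γ : ℝ} {z : V} (hz : z ≠ 0) :
    Tendsto (fun j : ℕ => (‖z‖ ^ 2 + 1 / ((j : ℝ) + 1)) ^ γ) atTop (𝓝 ((‖z‖ ^ 2 + 0) ^ γ)) := by
  have hz' : 0 < ‖z‖ := norm_pos_iff.mpr hz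
  refine Tendsto.rpow_const (tendsto_const_nhds.add eps_tendsto) (Or.inl (by positivity))

lemma kap_tendsto_L1 {γ : ℝ} (hγ : γ < 0) (hV : 1 - 2 * γ < Module.finrank ℝ V) (r : ℝ) :
    Tendsto (fun j : ℕ => ∫ z in ball (0 : V) r, ‖kap (1 / ((j : ℝ) + 1)) γ z - kap 0 γ z‖)
      atTop (𝓝 0) := by
  have hV1 : 1 ≤ Module.finrank ℝ V := by
    have : (0 : ℝ) < Module.finrank ℝ V := by linarith
    exact_mod_cast this
  suffices key : Tendsto (fun j : ℕ => ∫ z in ball (0 : V) r, ‖kap (1 / ((j : ℝ) + 1)) γ z - kap 0 γ z‖)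
      atTop (𝓝 (∫ z in ball (0 : V) r, (0 : ℝ))) by simpa using key
  refine tendsto_integral_of_dominated_convergence (F := fun (j : ℕ) (z : V) => ‖kap (1 / ((j : ℝ) + 1)) γ z - kap 0 γ z‖)
    (f := fun _ => 0) (fun z => 2 * ‖kap 0 γ z‖) ?_ ?_ ?_ ?_
  · intro j; exact (kap_sm.sub kap_sm).norm.aestronglyMeasurable
  · exact ((kap_int le_rfl hγ hV r).norm).const_mul 2
  · intro j
    refine ae_restrict_of_ae ?_
    filter_upwards [ae_ne_zero hV1] with z hz
    have h1 := kap_le (ε := 1 / ((j : ℝ) + 1)) (by positivity) hγ hz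
    have h2 := kap_nonneg (γ := γ) (ε := 1 / ((j : ℝ) + 1)) (by positivity) z
    have h3 := kap_nonneg (γ := γ) (ε := 0) le_rfl z
    rw [show -(-2 * γ) = 2 * γ by ring, ← kap_zero] at h1
    rw [norm_norm, Real.norm_eq_abs, Real.norm_eq_abs, abs_of_nonneg h3, abs_le]
    constructor <;> linarith
  · refine ae_restrict_of_ae ?_
    filter_upwards [ae_ne_zero hV1] with z hz
    have := ((pow_eps_tendsto (γ := γ) hz).sub (tendsto_const_nhds (x := (‖z‖ ^ 2 + 0) ^ γ))).norm
    simpa [kap] using this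

lemma dkap_tendsto {γ : ℝ} {z : V} (hz : z ≠ 0) :
    Tendsto (fun j : ℕ => dkap (1 / ((j : ℝ) + 1)) γ z) atTop (𝓝 (dkap 0 γ z)) :=
  ((pow_eps_tendsto (γ := γ - 1) hz).const_mul (2 * γ)).smul_const (innerSL ℝ z)

lemma dkap_tendsto_L1 {γ : ℝ} (hγ : γ < 0) (hV : 1 - 2 * γ < Module.finrank ℝ V) (r : ℝ) :
    Tendsto (fun j : ℕ => ∫ z in ball (0 : V) r, ‖dkap (1 / ((j : ℝ) + 1)) γ z - dkap 0 γ z‖)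
      atTop (𝓝 0) := by
  have hV1 : 1 ≤ Module.finrank ℝ V := by
    have : (0 : ℝ) < Module.finrank ℝ V := by linarith
    exact_mod_cast this
  suffices key : Tendsto (fun j : ℕ => ∫ z in ball (0 : V) r, ‖dkap (1 / ((j : ℝ) + 1)) γ z - dkap 0 γ z‖)
      atTop (𝓝 (∫ z in ball (0 : V) r, (0 : ℝ))) by simpa using key
  have hb : IntegrableOn (fun z : V => ‖z‖ ^ (-(1 - 2 * γ))) (ball 0 r) := by
    refine integrableOn_ball_of_norm_le_rpow (C := 1) (α := 1 - 2 * γ) hV1 (by linarith) ?_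
      (Measurable.aestronglyMeasurable (by fun_prop))
    refine Eventually.of_forall fun z => ?_
    rw [Real.norm_of_nonneg (by positivity), one_mul]
  refine tendsto_integral_of_dominated_convergence (F := fun (j : ℕ) (z : V) => ‖dkap (1 / ((j : ℝ) + 1)) γ z - dkap 0 γ z‖)
    (f := fun _ => 0)
    (fun z => 2 * (2 * |γ| * ‖z‖ ^ (-(1 - 2 * γ)))) ?_ ?_ ?_ ?_
  · intro j; exact (dkap_sm.sub dkap_sm).norm.aestronglyMeasurable
  · exact (hb.const_mul _).const_mul 2
  · intro j
    refine ae_restrict_of_ae ?_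
    filter_upwards [ae_ne_zero hV1] with z hz
    have h1 := dkap_norm_le (ε := 1 / ((j : ℝ) + 1)) (by positivity) hγ hz
    have h2 := dkap_norm_le (ε := 0) le_rfl hγ hz
    rw [norm_norm]
    refine (norm_sub_le _ _).trans (by linarith)
  · refine ae_restrict_of_ae ?_
    filter_upwards [ae_ne_zero hV1] with z hz
    have := ((dkap_tendsto (γ := γ) hz).sub (tendsto_const_nhds (x := dkap 0 γ z))).norm
    simpa using this

lemma conv_tunif {F A W : Type*} [NormedAddCommGroup F] [NormedSpace ℝ F]
    [NormedAddCommGroup A] [NormedSpace ℝ A] [NormedAddCommGroup W] [NormedSpace ℝ W]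
    {g : V → F} (hg : StronglyMeasurable g) {C R : ℝ}
    (hC : ∀ y, ‖g y‖ ≤ C) (hR : ∀ y, R ≤ ‖y‖ → g y = 0) (L : A →L[ℝ] F →L[ℝ] W) (K : ℝ → V → A)
    (hK : ∀ ε, StronglyMeasurable (K ε)) (hKi : ∀ ε, 0 ≤ ε → ∀ r, IntegrableOn (K ε) (ball 0 r))
    (hKt : ∀ r, Tendsto (fun j : ℕ => ∫ z in ball (0 : V) r, ‖K (1 / ((j : ℝ) + 1)) z - K 0 z‖)
        atTop (𝓝 0)) (x₀ : V) : TendstoUniformlyOn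
        (fun (j : ℕ) x => ∫ y, L (K (1 / ((j : ℝ) + 1)) (x - y)) (g y))
        (fun x => ∫ y, L (K 0 (x - y)) (g y)) atTop (ball x₀ 1) := by
  rw [Metric.tendstoUniformlyOn_iff]
  intro δ hδ
  have ht := ((hKt (R + ‖x₀‖ + 1)).const_mul (‖L‖ * C))
  rw [mul_zero] at ht
  filter_upwards [ht.eventually (gt_mem_nhds hδ)] with j hj x hx
  have hpos : (0 : ℝ) ≤ 1 / ((j : ℝ) + 1) := by positivity
  have i1 := (conv_unif L hg hC hR (hK (1 / ((j : ℝ) + 1))) (hKi _ hpos)).1 x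
  have i2 := (conv_unif L hg hC hR (hK 0) (hKi 0 le_rfl)).1 x
  have i3 := (conv_unif L hg hC hR (K := fun z => K (1 / ((j : ℝ) + 1)) z - K 0 z)
    ((hK _).sub (hK _)) (fun r => (hKi _ hpos r).sub (hKi 0 le_rfl r))).2 x₀ x hx
  rw [dist_comm, dist_eq_norm, ← integral_sub i1 i2]
  refine lt_of_le_of_lt ?_ hj
  refine le_trans (le_of_eq ?_) i3
  congr 1
  refine integral_congr_ae (Eventually.of_forall fun y => ?_)
  simp

/-- `C¹` regularity of the potential of a bounded, compactly supported density. -/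
lemma near_C1 {F : Type*} [NormedAddCommGroup F] [NormedSpace ℝ F] [CompleteSpace F] {γ : ℝ} (hγ : γ < 0)
    (hV : 1 - 2 * γ < Module.finrank ℝ V) {g : V → F} (hg : StronglyMeasurable g) {C R : ℝ}
    (hC : ∀ y, ‖g y‖ ≤ C) (hR : ∀ y, R ≤ ‖y‖ → g y = 0) :
    (∀ x, HasFDerivAt (fun x => ∫ y, kap 0 γ (x - y) • g y)
      (∫ y, (dkap 0 γ (x - y)).smulRight (g y)) x) ∧
    Continuous (fun x => ∫ y, (dkap 0 γ (x - y)).smulRight (g y)) := by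
  set L1 : ℝ →L[ℝ] F →L[ℝ] F := ContinuousLinearMap.lsmul ℝ ℝ with hL1
  set L2 : (V →L[ℝ] ℝ) →L[ℝ] F →L[ℝ] (V →L[ℝ] F) := ContinuousLinearMap.smulRightL ℝ V F with hL2
  have gint : Integrable (fun y => g y) := by
    have hb : Integrable ((ball (0 : V) R).indicator fun _ => C) :=
      (integrable_indicator_iff measurableSet_ball).mpr
        (integrableOn_const (measure_ball_lt_top.ne))
    refine hb.mono' hg.aestronglyMeasurable (Eventually.of_forall fun y => ?_)
    by_cases hy : R ≤ ‖y‖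
    · rw [hR y hy, norm_zero]
      exact indicator_nonneg (fun _ _ => (norm_nonneg _).trans (hC 0)) _
    · rw [indicator_of_mem (by simpa using hy)]; exact hC y
  have D : ∀ ε : ℝ, 0 < ε → ∀ x, HasFDerivAt (fun x => ∫ y, L1 (kap ε γ (x - y)) (g y))
      (∫ y, L2 (dkap ε γ (x - y)) (g y)) x := by
    intro ε hε x
    refine hasFDerivAt_integral_of_dominated_of_fderiv_le (𝕜 := ℝ) (s := univ)
      (F' := fun x y => L2 (dkap ε γ (x - y)) (g y)) (F := fun x y => L1 (kap ε γ (x - y)) (g y))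
      (bound := fun y => 2 * |γ| * ε ^ (γ - 1 / 2) * ‖g y‖) Filter.univ_mem ?_ ?_ ?_ ?_ ?_ ?_
    · exact Eventually.of_forall fun x =>
        ((conv_unif L1 hg hC hR (kap_sm (ε := ε) (γ := γ)) (kap_int hε.le hγ hV)).1 x).aestronglyMeasurable
    · exact (conv_unif L1 hg hC hR (kap_sm (ε := ε) (γ := γ)) (kap_int hε.le hγ hV)).1 x
    · exact ((conv_unif L2 hg hC hR (dkap_sm (ε := ε) (γ := γ)) (dkap_int hε.le hγ hV)).1 x).aestronglyMeasurable
    · refine Eventually.of_forall fun y x _ => ?_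
      change ‖(dkap ε γ (x - y)).smulRight (g y)‖ ≤ _
      rw [ContinuousLinearMap.norm_smulRight_apply]
      gcongr
      exact dkap_norm_le' hε hγ _
    · exact gint.norm.const_mul _
    · refine Eventually.of_forall fun y x _ => ?_
      have h1 : HasFDerivAt (fun x => kap ε γ (x - y)) (dkap ε γ (x - y)) x := by
        have := (kap_hasFDerivAt (γ := γ) (z := x - y) (ε := ε) (by positivity)).comp x
          ((hasFDerivAt_id x).sub_const y)
        rw [ContinuousLinearMap.comp_id] at this
        exact this
      exact h1.smul_const (g y)
  have Cn : ∀ ε : ℝ, 0 < ε → Continuous (fun x => ∫ y, L2 (dkap ε γ (x - y)) (g y)) := by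
    intro ε hε
    refine continuous_of_dominated (bound := fun y => 2 * |γ| * ε ^ (γ - 1 / 2) * ‖g y‖) ?_ ?_ ?_ ?_
    · intro x
      exact ((conv_unif L2 hg hC hR (dkap_sm (ε := ε) (γ := γ)) (dkap_int hε.le hγ hV)).1 x).aestronglyMeasurable
    · intro x
      refine Eventually.of_forall fun y => ?_
      change ‖(dkap ε γ (x - y)).smulRight (g y)‖ ≤ _
      rw [ContinuousLinearMap.norm_smulRight_apply]
      gcongr
      exact dkap_norm_le' hε hγ _
    · exact gint.norm.const_mul _
    · refine Eventually.of_forall fun y => ?_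
      exact (L2.continuous.comp ((dkap_continuous hε).comp (continuous_id.sub continuous_const))).clm_apply
        continuous_const
  have U1 := conv_tunif hg hC hR L1 (fun ε => kap ε γ) (fun ε => kap_sm) (fun ε hε => kap_int hε hγ hV)
    (kap_tendsto_L1 hγ hV)
  have U2 := conv_tunif hg hC hR L2 (fun ε => dkap ε γ) (fun ε => dkap_sm) (fun ε hε => dkap_int hε hγ hV)
    (dkap_tendsto_L1 hγ hV)
  constructor
  · intro x
    exact hasFDerivAt_of_tendstoUniformlyOn (isOpen_ball (x := x) (ε := 1)) (U2 x)
      (fun j x' _ => D _ (by positivity) x') (fun x' hx' => (U1 x).tendsto_at hx')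
      (mem_ball_self one_pos)
  · rw [continuous_iff_continuousAt]
    intro x
    exact ((U2 x).continuousOn (Eventually.of_forall fun j => (Cn _ (by positivity)).continuousOn).frequently).continuousAt
      (ball_mem_nhds x one_pos)

end kernels


section far
open MeasureTheory Metric Filter Topology
variable {V : Type*} [NormedAddCommGroup V] [InnerProductSpace ℝ V]

/-- Real inner product as a bilinear map. -/
noncomputable def inr (V : Type*) [NormedAddCommGroup V] [InnerProductSpace ℝ V] :
    V →L[ℝ] V →L[ℝ] ℝ := innerSL ℝ

lemma inr_apply (z : V) : inr V z = innerSL ℝ z := rfl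

/-- Second derivative of the regularised kernel. -/
noncomputable def d2kap (ε γ : ℝ) (z : V) : V →L[ℝ] V →L[ℝ] ℝ :=
  (2 * γ * (‖z‖ ^ 2 + ε) ^ (γ - 1)) • inr V +
    ((2 * γ) • dkap ε (γ - 1) z).smulRight (innerSL ℝ z)

lemma dkap_hasFDerivAt {ε γ : ℝ} {z : V} (h : 0 < ‖z‖ ^ 2 + ε) :
    HasFDerivAt (dkap ε γ) (d2kap ε γ z) z := by
  have h1 := (kap_hasFDerivAt (γ := γ - 1) h).const_mul (2 * γ)
  have h2 : HasFDerivAt (fun z : V => inr V z) (inr V) z := (inr V).hasFDerivAt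
  exact h1.smul h2

lemma kap_cont_at {γ : ℝ} {z : V} (h : z ≠ 0) : ContinuousAt (kap 0 γ) z :=
  (kap_hasFDerivAt (by have := norm_pos_iff.mpr h; positivity)).continuousAt

lemma dkap_cont_at {γ : ℝ} {z : V} (h : z ≠ 0) : ContinuousAt (dkap 0 γ) z :=
  (dkap_hasFDerivAt (by have := norm_pos_iff.mpr h; positivity)).continuousAt

lemma d2kap_cont_at {γ ε : ℝ} {z : V} (h : 0 < ‖z‖ ^ 2 + ε) : ContinuousAt (d2kap ε γ) z := by
  have h1 : ContinuousAt (fun z : V => 2 * γ * (‖z‖ ^ 2 + ε) ^ (γ - 1)) z :=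
    ((kap_hasFDerivAt (γ := γ - 1) h).const_mul (2 * γ)).continuousAt
  have h2 : ContinuousAt (fun z : V => (2 * γ) • dkap ε (γ - 1) z) z :=
    ((dkap_hasFDerivAt (γ := γ - 1) h).const_smul (2 * γ)).continuousAt
  have h3 : ContinuousAt (fun z : V => innerSL ℝ z) z := (innerSL ℝ).continuous.continuousAt
  refine (h1.smul continuousAt_const).add ?_
  have hc : Continuous (fun p : (V →L[ℝ] ℝ) × (V →L[ℝ] ℝ) => p.1.smulRight p.2) :=
    ((ContinuousLinearMap.smulRightL ℝ V (V →L[ℝ] ℝ)).continuous.comp continuous_fst).clm_apply continuous_snd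
  exact hc.continuousAt.comp (h2.prodMk h3)

lemma kap_bound {γ δ r : ℝ} (hδ : 0 ≤ δ) (hr : 0 < r) {z : V} (hz : r ≤ ‖z‖) :
    ‖z‖ ^ (2 * γ - δ) ≤ r ^ (-δ) * kap 0 γ z := by
  rw [kap_zero, sub_eq_add_neg, Real.rpow_add (hr.trans_le hz), mul_comm]
  exact mul_le_mul_of_nonneg_right (Real.rpow_le_rpow_of_nonpos hr hz (by linarith)) (by positivity)

lemma dkap_bound {γ r : ℝ} (hγ : γ < 0) (hr : 0 < r) {z : V} (hz : r ≤ ‖z‖) :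
    ‖dkap 0 γ z‖ ≤ 2 * |γ| * r ^ (-1 : ℝ) * kap 0 γ z := by
  have hz0 : z ≠ 0 := norm_pos_iff.mp (hr.trans_le hz)
  refine (dkap_norm_le le_rfl hγ hz0).trans ?_
  have := kap_bound (γ := γ) zero_le_one hr hz
  rw [show -(1 - 2 * γ) = 2 * γ - 1 by ring, mul_assoc (2 * |γ|)]
  gcongr

lemma d2kap_bound {γ r : ℝ} (hγ : γ < 0) (hr : 0 < r) {z : V} (hz : r ≤ ‖z‖) :
    ‖d2kap 0 γ z‖ ≤ (2 * |γ| + 2 * |γ| * (2 * |γ - 1|)) * r ^ (-2 : ℝ) * kap 0 γ z := by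
  have hz' : 0 < ‖z‖ := hr.trans_le hz
  have hz0 : z ≠ 0 := norm_pos_iff.mp hz'
  have h1 : ‖(2 * γ * (‖z‖ ^ 2 + 0) ^ (γ - 1)) • inr V‖ ≤ 2 * |γ| * ‖z‖ ^ (2 * γ - 2) := by
    rw [norm_smul]
    have : ‖inr V‖ ≤ 1 := by
      refine ContinuousLinearMap.opNorm_le_bound _ zero_le_one fun v => ?_
      rw [inr_apply, innerSL_apply_norm, one_mul]
    have e : (‖z‖ ^ 2 + 0) ^ (γ - 1) = ‖z‖ ^ (2 * γ - 2) := by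
      have := kap_zero (γ - 1) z
      unfold kap at this
      rw [this]; congr 1; ring
    rw [e, Real.norm_eq_abs, abs_mul, abs_mul, abs_two,
      abs_of_nonneg (a := ‖z‖ ^ (2 * γ - 2)) (by positivity)]
    exact mul_le_of_le_one_right (by positivity) this
  have h2 : ‖((2 * γ) • dkap 0 (γ - 1) z).smulRight (innerSL ℝ z)‖
      ≤ 2 * |γ| * (2 * |γ - 1|) * ‖z‖ ^ (2 * γ - 2) := by
    rw [ContinuousLinearMap.norm_smulRight_apply, norm_smul, innerSL_apply_norm, Real.norm_eq_abs,
      abs_mul, abs_two]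
    have h3 := dkap_norm_le (ε := 0) (γ := γ - 1) le_rfl (by linarith) hz0
    have h4 : ‖z‖ ^ (-(1 - 2 * (γ - 1))) * ‖z‖ = ‖z‖ ^ (2 * γ - 2) := by
      nth_rewrite 2 [← Real.rpow_one ‖z‖]
      rw [← Real.rpow_add hz']; congr 1; ring
    calc _ ≤ 2 * |γ| * (2 * |γ - 1| * ‖z‖ ^ (-(1 - 2 * (γ - 1)))) * ‖z‖ := by gcongr
      _ = _ := by rw [← h4]; ring
  have h5 := kap_bound (γ := γ) zero_le_two hr hz
  calc _ ≤ _ := norm_add_le _ _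
    _ ≤ (2 * |γ| + 2 * |γ| * (2 * |γ - 1|)) * ‖z‖ ^ (2 * γ - 2) := by rw [add_mul]; exact add_le_add h1 h2
    _ ≤ _ := by
      rw [mul_assoc _ (r ^ (-2 : ℝ))]
      exact mul_le_mul_of_nonneg_left h5 (by positivity)

lemma far_ge {x₀ x y : V} {r : ℝ} (hx : x ∈ ball x₀ r) (hy : 2 * r ≤ ‖x₀ - y‖) :
    ‖x₀ - y‖ / 2 ≤ ‖x - y‖ ∧ r ≤ ‖x - y‖ := by
  have h1 : ‖x₀ - x‖ < r := by rwa [mem_ball, dist_comm, dist_eq_norm] at hx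
  have h2 : ‖x₀ - y‖ ≤ ‖x₀ - x‖ + ‖x - y‖ := by simpa using norm_sub_le_norm_sub_add_norm_sub x₀ x y
  constructor <;> linarith

lemma far_kap {γ : ℝ} (hγ : γ < 0) {x₀ x y : V} {r : ℝ} (hr : 0 < r) (hx : x ∈ ball x₀ r)
    (hy : 2 * r ≤ ‖x₀ - y‖) : kap 0 γ (x - y) ≤ (1 / 2) ^ (2 * γ) * kap 0 γ (x₀ - y) := by
  have h := (far_ge hx hy).1
  rw [kap_zero, kap_zero, ← Real.mul_rpow (by norm_num) (norm_nonneg _)]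
  exact Real.rpow_le_rpow_of_nonpos (by linarith) (by linarith) (by linarith)

variable [FiniteDimensional ℝ V] [MeasurableSpace V] [BorelSpace V]

lemma d2kap_sm {γ : ℝ} : StronglyMeasurable (d2kap 0 γ : V → V →L[ℝ] V →L[ℝ] ℝ) := by
  unfold d2kap
  refine StronglyMeasurable.add ?_ ?_
  · exact StronglyMeasurable.smul (f := fun z : V => 2 * γ * (‖z‖ ^ 2 + 0) ^ (γ - 1))
      (g := fun _ => inr V) (Measurable.stronglyMeasurable (by fun_prop)) stronglyMeasurable_const
  · have h1 : StronglyMeasurable (fun z : V => (2 * γ) • dkap 0 (γ - 1) z) :=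
      (dkap_sm (ε := 0) (γ := γ - 1)).const_smul (2 * γ)
    have h2 : StronglyMeasurable (fun z : V => innerSL ℝ z) := (innerSL ℝ).continuous.stronglyMeasurable
    have hc : Continuous (fun p : (V →L[ℝ] ℝ) × (V →L[ℝ] ℝ) => p.1.smulRight p.2) :=
      ((ContinuousLinearMap.smulRightL ℝ V (V →L[ℝ] ℝ)).continuous.comp continuous_fst).clm_apply continuous_snd
    exact hc.comp_stronglyMeasurable (h1.prodMk h2)

section step
variable {F : Type*} [NormedAddCommGroup F] [NormedSpace ℝ F] {γ : ℝ} {K : V → F} {g : V → ℝ}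
  {x₀ : V} {r B B' : ℝ}

lemma far_dom (hγ : γ < 0) (hr : 0 < r) (hB : ∀ z : V, r ≤ ‖z‖ → ‖K z‖ ≤ B * kap 0 γ z)
    (hB0 : 0 ≤ B) (hg0 : ∀ y ∈ ball x₀ (2 * r), g y = 0)
    (x : V) (hx : x ∈ ball x₀ r) (y : V) :
    ‖g y • K (x - y)‖ ≤ (B * (1 / 2) ^ (2 * γ)) * ‖kap 0 γ (x₀ - y) * g y‖ := by
  by_cases hy : y ∈ ball x₀ (2 * r)
  · rw [hg0 y hy]; simp
  · have hy' : 2 * r ≤ ‖x₀ - y‖ := by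
      rw [mem_ball, dist_comm, dist_eq_norm] at hy; push Not at hy; exact hy
    rw [norm_smul, norm_mul, Real.norm_of_nonneg (kap_nonneg le_rfl _)]
    have h1 := hB (x - y) (far_ge hx hy').2
    have h2 := far_kap hγ hr hx hy'
    have h3 : ‖K (x - y)‖ ≤ B * ((1 / 2) ^ (2 * γ) * kap 0 γ (x₀ - y)) :=
      h1.trans (mul_le_mul_of_nonneg_left h2 hB0)
    calc _ ≤ ‖g y‖ * (B * ((1 / 2) ^ (2 * γ) * kap 0 γ (x₀ - y))) := by gcongr
      _ = _ := by ring

lemma far_meas (hg : StronglyMeasurable g) (hK : StronglyMeasurable K) (x : V) :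
    AEStronglyMeasurable (fun y => g y • K (x - y)) volume :=
  (hg.smul (hK.comp_measurable (measurable_const.sub measurable_id))).aestronglyMeasurable

lemma far_int (hγ : γ < 0) (hr : 0 < r) (hg : StronglyMeasurable g) (hK : StronglyMeasurable K)
    (hB : ∀ z : V, r ≤ ‖z‖ → ‖K z‖ ≤ B * kap 0 γ z)
    (hB0 : 0 ≤ B) (hg0 : ∀ y ∈ ball x₀ (2 * r), g y = 0)
    (hi : Integrable fun y => kap 0 γ (x₀ - y) * g y) (x : V) (hx : x ∈ ball x₀ r) :
    Integrable fun y => g y • K (x - y) :=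
  (hi.norm.const_mul _).mono' (far_meas hg hK x)
    (Eventually.of_forall (far_dom hγ hr hB hB0 hg0 x hx))

lemma far_cont (hγ : γ < 0) (hr : 0 < r) (hg : StronglyMeasurable g) (hK : StronglyMeasurable K)
    (hB : ∀ z : V, r ≤ ‖z‖ → ‖K z‖ ≤ B * kap 0 γ z)
    (hB0 : 0 ≤ B) (hg0 : ∀ y ∈ ball x₀ (2 * r), g y = 0)
    (hi : Integrable fun y => kap 0 γ (x₀ - y) * g y) (hKc : ∀ z, z ≠ 0 → ContinuousAt K z)
    (x : V) (hx : x ∈ ball x₀ r) :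
    ContinuousAt (fun x => ∫ y, g y • K (x - y)) x := by
  refine continuousAt_of_dominated
    (bound := fun y => (B * (1 / 2) ^ (2 * γ)) * ‖kap 0 γ (x₀ - y) * g y‖)
    (Eventually.of_forall fun x => far_meas hg hK x) ?_ (hi.norm.const_mul _) ?_
  · filter_upwards [isOpen_ball.mem_nhds hx] with x hx
    exact Eventually.of_forall (far_dom hγ hr hB hB0 hg0 x hx)
  · refine Eventually.of_forall fun y => ?_
    by_cases hy : y ∈ ball x₀ (2 * r)
    · rw [hg0 y hy]; simp only [zero_smul]; exact continuousAt_const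
    · have hy' : 2 * r ≤ ‖x₀ - y‖ := by
        rw [mem_ball, dist_comm, dist_eq_norm] at hy; push Not at hy; exact hy
      have : x - y ≠ 0 := norm_pos_iff.mp (hr.trans_le (far_ge hx hy').2)
      exact continuousAt_const.smul ((hKc _ this).comp_of_eq (by fun_prop) rfl)

lemma far_deriv (hγ : γ < 0) (hr : 0 < r) (hg : StronglyMeasurable g) (hK : StronglyMeasurable K)
    (hB : ∀ z : V, r ≤ ‖z‖ → ‖K z‖ ≤ B * kap 0 γ z)
    (hB0 : 0 ≤ B) (hg0 : ∀ y ∈ ball x₀ (2 * r), g y = 0)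
    (hi : Integrable fun y => kap 0 γ (x₀ - y) * g y) {K' : V → V →L[ℝ] F}
    (hK' : StronglyMeasurable K') (hB' : ∀ z : V, r ≤ ‖z‖ → ‖K' z‖ ≤ B' * kap 0 γ z)
    (hB0' : 0 ≤ B') (hKd : ∀ z, z ≠ 0 → HasFDerivAt K (K' z) z)
    (x : V) (hx : x ∈ ball x₀ r) :
    HasFDerivAt (fun x => ∫ y, g y • K (x - y)) (∫ y, g y • K' (x - y)) x := by
  refine hasFDerivAt_integral_of_dominated_of_fderiv_le (𝕜 := ℝ) (s := ball x₀ r)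
    (F' := fun x y => g y • K' (x - y))
    (bound := fun y => (B' * (1 / 2) ^ (2 * γ)) * ‖kap 0 γ (x₀ - y) * g y‖)
    (isOpen_ball.mem_nhds hx) (Eventually.of_forall fun x => far_meas hg hK x)
    (far_int hγ hr hg hK hB hB0 hg0 hi x hx) (far_meas hg hK' x)
    (Eventually.of_forall fun y x hx => far_dom hγ hr hB' hB0' hg0 x hx y) (hi.norm.const_mul _) ?_
  refine Eventually.of_forall fun y x hx => ?_
  by_cases hy : y ∈ ball x₀ (2 * r)
  · rw [hg0 y hy]; simp only [zero_smul]; exact hasFDerivAt_const _ _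
  · have hy' : 2 * r ≤ ‖x₀ - y‖ := by
      rw [mem_ball, dist_comm, dist_eq_norm] at hy; push Not at hy; exact hy
    have hne : x - y ≠ 0 := norm_pos_iff.mp (hr.trans_le (far_ge hx hy').2)
    have := (hKd _ hne).comp x ((hasFDerivAt_id x).sub_const y)
    rw [ContinuousLinearMap.comp_id] at this
    exact this.const_smul (g y)

end step

/-- Data of the far field: derivatives up to order two. -/
lemma far_all {γ : ℝ} (hγ : γ < 0) {g : V → ℝ} {x₀ : V} {r : ℝ} (hr : 0 < r)
    (hg : StronglyMeasurable g) (hg0 : ∀ y ∈ ball x₀ (2 * r), g y = 0)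
    (hi : Integrable fun y => kap 0 γ (x₀ - y) * g y) :
    (∀ x ∈ ball x₀ r, HasFDerivAt (fun x => ∫ y, g y • kap 0 γ (x - y)) (∫ y, g y • dkap 0 γ (x - y)) x) ∧
    (∀ x ∈ ball x₀ r, HasFDerivAt (fun x => ∫ y, g y • dkap 0 γ (x - y)) (∫ y, g y • d2kap 0 γ (x - y)) x) ∧
    (∀ x ∈ ball x₀ r, ContinuousAt (fun x => ∫ y, g y • d2kap 0 γ (x - y)) x) ∧
    (∀ x ∈ ball x₀ r, Integrable (fun y => g y • kap 0 γ (x - y))) ∧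
    (∀ x ∈ ball x₀ r, Integrable (fun y => g y • d2kap 0 γ (x - y))) := by
  have hk : ∀ z : V, r ≤ ‖z‖ → ‖kap 0 γ z‖ ≤ 1 * kap 0 γ z := fun z _ => by
    rw [one_mul, Real.norm_of_nonneg (kap_nonneg le_rfl z)]
  have hd : ∀ z : V, z ≠ 0 → 0 < ‖z‖ ^ 2 + 0 := fun z hz => by
    have := norm_pos_iff.mpr hz; positivity
  refine ⟨?_, ?_, ?_, ?_, ?_⟩
  · exact far_deriv hγ hr hg kap_sm hk zero_le_one hg0 hi dkap_sm (fun z hz => dkap_bound hγ hr hz)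
      (by positivity) (fun z hz => kap_hasFDerivAt (hd z hz))
  · exact far_deriv hγ hr hg dkap_sm (fun z hz => dkap_bound hγ hr hz)
      (by positivity) hg0 hi d2kap_sm (fun z hz => d2kap_bound hγ hr hz)
      (by positivity) (fun z hz => dkap_hasFDerivAt (hd z hz))
  · exact far_cont hγ hr hg d2kap_sm (fun z hz => d2kap_bound hγ hr hz)
      (by positivity) hg0 hi (fun z hz => d2kap_cont_at (hd z hz))
  · exact far_int hγ hr hg kap_sm hk zero_le_one hg0 hi
  · exact far_int hγ hr hg d2kap_sm (fun z hz => d2kap_bound hγ hr hz) (by positivity) hg0 hi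

end far


section near
open MeasureTheory Metric Filter Topology
variable {V : Type*} [NormedAddCommGroup V] [InnerProductSpace ℝ V]

lemma c2_of {u : V → ℝ} {u' : V → V →L[ℝ] ℝ} {u'' : V → V →L[ℝ] V →L[ℝ] ℝ} {x₀ : V}
    (h1 : ∀ᶠ x in 𝓝 x₀, HasFDerivAt u (u' x) x) (h2 : ∀ᶠ x in 𝓝 x₀, HasFDerivAt u' (u'' x) x)
    (h3 : ∀ᶠ x in 𝓝 x₀, ContinuousAt u'' x) : ContDiffAt ℝ 2 u x₀ := by
  have c1 : ContDiffAt ℝ 1 u' x₀ := by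
    rw [contDiffAt_one_iff]
    refine ⟨u'', _, h2.and h3, fun x hx => hx.2.continuousWithinAt, fun x hx => hx.1⟩
  rw [show (2 : WithTop ℕ∞) = ((1 : ℕ) : WithTop ℕ∞) + 1 by norm_num, contDiffAt_succ_iff_hasFDerivAt]
  exact ⟨u', ⟨_, h1, fun x hx => hx⟩, by exact_mod_cast c1⟩

variable {ι : Type} [Fintype ι] [DecidableEq ι]

lemma lapG_of {u : EuclideanSpace ℝ ι → ℝ} {u' : EuclideanSpace ℝ ι → EuclideanSpace ℝ ι →L[ℝ] ℝ}
    {u'' : EuclideanSpace ℝ ι →L[ℝ] EuclideanSpace ℝ ι →L[ℝ] ℝ} {x₀ : EuclideanSpace ℝ ι}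
    (h0 : ContDiffAt ℝ 2 u x₀)
    (h1 : ∀ᶠ x in 𝓝 x₀, HasFDerivAt u (u' x) x) (h2 : HasFDerivAt u' u'' x₀) :
    lapG u x₀ = ∑ i, u'' (EuclideanSpace.single i 1) (EuclideanSpace.single i 1) := by
  unfold lapG
  refine Finset.sum_congr rfl fun i _ => ?_
  rw [iter2_eq h0]
  have e : (fun y => fderiv ℝ u y (EuclideanSpace.single i 1)) =ᶠ[𝓝 x₀]
      fun y => u' y (EuclideanSpace.single i 1) := by
    filter_upwards [h1] with y hy
    rw [hy.fderiv]
  rw [e.fderiv_eq]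
  have := (h2.clm_apply (hasFDerivAt_const (EuclideanSpace.single i (1:ℝ)) x₀)).fderiv
  rw [this]
  simp

lemma trace_d2kap {ε γ : ℝ} (hγ : γ = 1 - (Fintype.card ι : ℝ) / 2) {z : EuclideanSpace ℝ ι}
    (hz : 0 < ‖z‖ ^ 2 + ε) :
    ∑ i, d2kap ε γ z (EuclideanSpace.single i 1) (EuclideanSpace.single i 1) =
      2 * γ * Fintype.card ι * (ε * (‖z‖ ^ 2 + ε) ^ (γ - 2)) := by
  have e1 : ∀ i, d2kap ε γ z (EuclideanSpace.single i 1) (EuclideanSpace.single i 1) =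
      2 * γ * (‖z‖ ^ 2 + ε) ^ (γ - 1) + 2 * γ * (2 * (γ - 1) * (‖z‖ ^ 2 + ε) ^ (γ - 2)) * (z i) ^ 2 := by
    intro i
    simp [d2kap, dkap, inr_apply, EuclideanSpace.inner_single_right]
    rw [show γ - 1 - 1 = γ - 2 by ring]
    ring
  simp only [e1]
  rw [Finset.sum_add_distrib, Finset.sum_const, Finset.card_univ, nsmul_eq_mul, ← Finset.mul_sum]
  have e2 : ∑ i, z i ^ 2 = ‖z‖ ^ 2 := by rw [EuclideanSpace.norm_sq_eq]; simp
  have e3 : (‖z‖ ^ 2 + ε) ^ (γ - 1) = (‖z‖ ^ 2 + ε) ^ (γ - 2) * (‖z‖ ^ 2 + ε) := by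
    nth_rewrite 3 [← Real.rpow_one (‖z‖ ^ 2 + ε)]
    rw [← Real.rpow_add hz]; congr 1; ring
  rw [e2, e3]
  have : (Fintype.card ι : ℝ) = 2 - 2 * γ := by linarith
  rw [this]; ring

variable [FiniteDimensional ℝ V] [MeasurableSpace V] [BorelSpace V]

lemma int_apply2 {Φ : V → V →L[ℝ] V →L[ℝ] ℝ} (h : Integrable Φ) (v : V) :
    (∫ y, Φ y) v v = ∫ y, Φ y v v := by
  have h2 : Integrable fun y => Φ y v := (ContinuousLinearMap.apply ℝ _ v).integrable_comp h
  rw [ContinuousLinearMap.integral_apply h, ContinuousLinearMap.integral_apply h2]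

lemma near_grad {γ : ℝ} (hγ : γ < 0) (hV : 1 - 2 * γ < Module.finrank ℝ V) {g : V → ℝ}
    (hg : ContDiff ℝ 1 g) (hc : HasCompactSupport g) (x : V) :
    HasFDerivAt (fun x => ∫ y, kap 0 γ (x - y) • g y) (∫ y, kap 0 γ (x - y) • fderiv ℝ g y) x := by
  have hl : LocallyIntegrable (kap 0 γ : V → ℝ) := by
    rw [locallyIntegrable_iff]
    intro k hk
    obtain ⟨r, hr⟩ := hk.isBounded.subset_ball 0
    exact (kap_int le_rfl hγ hV r).mono_set hr
  have h := hc.hasFDerivAt_convolution_right (μ := volume) (ContinuousLinearMap.lsmul ℝ ℝ) hl hg x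
  have e1 : (convolution (kap 0 γ) g (ContinuousLinearMap.lsmul ℝ ℝ) volume) =
      fun x => ∫ y, kap 0 γ (x - y) • g y := by
    funext x
    unfold convolution
    rw [← integral_sub_left_eq_self _ volume x]
    simp
  have e2 : (convolution (kap 0 γ) (fderiv ℝ g)
      ((ContinuousLinearMap.lsmul ℝ ℝ).precompR V) volume) x =
      ∫ y, kap 0 γ (x - y) • fderiv ℝ g y := by
    unfold convolution
    rw [← integral_sub_left_eq_self _ volume x]
    refine integral_congr_ae (Eventually.of_forall fun y => ?_)
    ext v
    simp
  rw [e1, e2] at h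
  exact h

lemma cs_bdd {F : Type*} [NormedAddCommGroup F] {g : V → F} (hg : Continuous g)
    (hc : HasCompactSupport g) : ∃ C R : ℝ, (∀ y, ‖g y‖ ≤ C) ∧ ∀ y, R ≤ ‖y‖ → g y = 0 := by
  obtain ⟨C, hC⟩ := hg.bounded_above_of_compact_support hc
  obtain ⟨R, hR⟩ := hc.isCompact.isBounded.subset_ball 0
  refine ⟨C, R, hC, fun y hy => ?_⟩
  by_contra h
  have := hR (subset_tsupport _ (Function.mem_support.mpr h))
  rw [mem_ball_zero_iff] at this
  linarith

lemma ibp {ε γ : ℝ} (hε : 0 < ε) {g : V → ℝ}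
    (hg : ContDiff ℝ 1 g) (hc : HasCompactSupport g) (x v : V) :
    ∫ y, dkap ε γ (x - y) v * fderiv ℝ g y v = ∫ y, d2kap ε γ (x - y) v v * g y ∧
    Integrable (fun y => d2kap ε γ (x - y) v v * g y) := by
  have hd : ∀ y, HasFDerivAt (fun y => dkap ε γ (x - y) v) (-((d2kap ε γ (x - y)).flip v)) y := by
    intro y
    have h1 := (dkap_hasFDerivAt (γ := γ) (z := x - y) (ε := ε) (by positivity)).comp y
      ((hasFDerivAt_id y).const_sub x)
    have h2 := h1.clm_apply (hasFDerivAt_const v y)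
    refine h2.congr_fderiv ?_
    ext w
    simp
  have hdc : Continuous fun y => dkap ε γ (x - y) v :=
    ((dkap_continuous hε).comp (continuous_const.sub continuous_id)).clm_apply continuous_const
  have hd2c : Continuous fun y => d2kap ε γ (x - y) v v := by
    have : Continuous (d2kap ε γ : V → _) :=
      continuous_iff_continuousAt.mpr fun z => d2kap_cont_at (by positivity)
    exact ((this.comp (continuous_const.sub continuous_id)).clm_apply continuous_const).clm_apply
      continuous_const
  have hfd : ∀ y, fderiv ℝ (fun y => dkap ε γ (x - y) v) y v = - d2kap ε γ (x - y) v v := by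
    intro y; rw [(hd y).fderiv]; simp
  have i1 : Integrable fun y => d2kap ε γ (x - y) v v * g y :=
    (hd2c.mul hg.continuous).integrable_of_hasCompactSupport hc.mul_left
  refine ⟨?_, i1⟩
  rw [integral_mul_fderiv_eq_neg_fderiv_mul_of_integrable]
  · simp only [hfd, neg_mul, integral_neg, neg_neg]
  · simp only [hfd, neg_mul]; exact i1.neg
  · have hgc : Continuous fun y => fderiv ℝ g y v :=
      (hg.continuous_fderiv (by norm_num)).clm_apply continuous_const
    exact (hdc.mul hgc).integrable_of_hasCompactSupport (hc.fderiv_apply ℝ v).mul_left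
  · exact (hdc.mul hg.continuous).integrable_of_hasCompactSupport hc.mul_left
  · intro y _; exact (hd y).differentiableAt
  · intro y _; exact (hg.differentiable (by norm_num)) y

end near

section newton
open MeasureTheory Metric Filter Topology
variable {ι : Type} [Fintype ι] [DecidableEq ι]

/-- Exponent of the Newton kernel. -/
noncomputable def gam (ι : Type) [Fintype ι] : ℝ := 1 - (Fintype.card ι : ℝ) / 2

/-- Normalising constant. -/
noncomputable def omg (ι : Type) [Fintype ι] : ℝ :=
  ∫ z : EuclideanSpace ℝ ι, -(2 * gam ι * Fintype.card ι) * (1 + ‖z‖ ^ 2) ^ (gam ι - 2)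

/-- Newton potential. -/
noncomputable def Nw (g : EuclideanSpace ℝ ι → ℝ) (x : EuclideanSpace ℝ ι) : ℝ :=
  ∫ y, kap 0 (gam ι) (x - y) • g y

lemma gam_neg (hM : 3 ≤ Fintype.card ι) : gam ι < 0 := by
  have : (3 : ℝ) ≤ Fintype.card ι := by exact_mod_cast hM
  unfold gam; linarith

lemma gam_dim : 1 - 2 * gam ι < Module.finrank ℝ (EuclideanSpace ℝ ι) := by
  rw [finrank_euclideanSpace]; unfold gam; linarith

lemma omg_int : Integrable fun z : EuclideanSpace ℝ ι => (1 + ‖z‖ ^ 2) ^ (gam ι - 2) := by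
  have := integrable_rpow_neg_one_add_norm_sq (E := EuclideanSpace ℝ ι) (μ := volume)
    (r := Fintype.card ι + 2) (by rw [finrank_euclideanSpace]; linarith)
  have e : gam ι - 2 = -((Fintype.card ι : ℝ) + 2) / 2 := by unfold gam; ring
  rw [e]; exact this

lemma omg_pos (hM : 3 ≤ Fintype.card ι) : 0 < omg ι := by
  have hg := gam_neg hM
  have hM' : (3 : ℝ) ≤ Fintype.card ι := by exact_mod_cast hM
  have hpos : 0 < -(2 * gam ι * Fintype.card ι) := by nlinarith
  unfold omg
  rw [integral_const_mul]
  refine mul_pos hpos ?_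
  rw [integral_pos_iff_support_of_nonneg (fun z => by positivity) omg_int]
  have : Function.support (fun z : EuclideanSpace ℝ ι => (1 + ‖z‖ ^ 2) ^ (gam ι - 2)) = univ := by
    ext z
    simp only [Function.mem_support, mem_univ, iff_true]
    exact (Real.rpow_pos_of_pos (by positivity) _).ne'
  rw [this]
  exact isOpen_univ.measure_pos volume univ_nonempty

lemma approx_id (hM : 3 ≤ Fintype.card ι) {g : EuclideanSpace ℝ ι → ℝ} (hg : Continuous g)
    (hc : HasCompactSupport g) (x : EuclideanSpace ℝ ι) :
    Tendsto (fun j : ℕ => ∫ y, (2 * gam ι * Fintype.card ι * ((1 / ((j : ℝ) + 1)) *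
      (‖x - y‖ ^ 2 + (1 / ((j : ℝ) + 1))) ^ (gam ι - 2))) * g y) atTop (𝓝 (-(omg ι) * g x)) := by
  have ho := omg_pos hM
  have hgm := gam_neg hM
  have hM' : (3 : ℝ) ≤ Fintype.card ι := by exact_mod_cast hM
  set m := -(2 * gam ι * Fintype.card ι) with hm
  have hmpos : 0 < m := by rw [hm]; nlinarith
  have key := tendsto_integral_comp_smul_smul_of_integrable' (μ := volume)
    (φ := fun z : EuclideanSpace ℝ ι => (omg ι)⁻¹ * (m * (1 + ‖z‖ ^ 2) ^ (gam ι - 2)))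
    (fun z => by positivity) ?_ ?_ (hg.integrable_of_hasCompactSupport hc) (hg.continuousAt (x := x))
  · have h2 : Tendsto (fun j : ℕ => √((j : ℝ) + 1)) atTop atTop :=
      Real.tendsto_sqrt_atTop.comp (tendsto_atTop_add_const_right _ _ tendsto_natCast_atTop_atTop)
    have h3 := (key.comp h2).const_mul (-(omg ι))
    refine h3.congr fun j => ?_
    simp only [Function.comp]
    rw [← integral_const_mul]
    refine integral_congr_ae (Eventually.of_forall fun y => ?_)
    simp only [smul_eq_mul, finrank_euclideanSpace, norm_smul]
    have hj : (0 : ℝ) < (j : ℝ) + 1 := by positivity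
    rw [Real.norm_of_nonneg (Real.sqrt_nonneg _), mul_pow, Real.sq_sqrt hj.le]
    have e1 : ‖x - y‖ ^ 2 + 1 / ((j : ℝ) + 1) = (1 + ((j : ℝ) + 1) * ‖x - y‖ ^ 2) * ((j : ℝ) + 1)⁻¹ := by
      field_simp; ring
    have e2 : √((j : ℝ) + 1) ^ Fintype.card ι = ((j : ℝ) + 1)⁻¹ ^ (gam ι - 2) * (1 / ((j : ℝ) + 1)) := by
      have e5 : 1 / ((j : ℝ) + 1) = ((j : ℝ) + 1) ^ (-1 : ℝ) := by rw [Real.rpow_neg_one, one_div]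
      rw [e5, Real.inv_rpow hj.le, ← Real.rpow_neg hj.le, Real.sqrt_eq_rpow, ← Real.rpow_natCast,
        ← Real.rpow_mul hj.le, ← Real.rpow_add hj]
      congr 1; unfold gam; ring
    rw [e1, Real.mul_rpow (by positivity) (by positivity), e2]
    field_simp
    rw [hm]; ring
  · rw [integral_const_mul]
    exact inv_mul_cancel₀ ho.ne'
  · have h0 : Tendsto (fun z : EuclideanSpace ℝ ι => (omg ι)⁻¹ * m * (1 + ‖z‖ ^ 2)⁻¹)
        (Bornology.cobounded _) (𝓝 ((omg ι)⁻¹ * m * 0)) := by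
      refine Tendsto.const_mul _ (tendsto_inv_atTop_zero.comp ?_)
      refine tendsto_atTop_add_const_left _ _ ?_
      exact (tendsto_pow_atTop two_ne_zero).comp tendsto_norm_cobounded_atTop
    rw [mul_zero] at h0
    refine squeeze_zero (fun z => by positivity) (fun z => ?_) h0
    rw [finrank_euclideanSpace]
    have e3 : ‖z‖ ^ Fintype.card ι ≤ (1 + ‖z‖ ^ 2) ^ ((Fintype.card ι : ℝ) / 2) := by
      have : ‖z‖ ^ Fintype.card ι = (‖z‖ ^ 2) ^ ((Fintype.card ι : ℝ) / 2) := by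
        rw [← Real.rpow_natCast, ← Real.rpow_natCast, ← Real.rpow_mul (norm_nonneg _)]
        congr 1; push_cast; ring
      rw [this]
      exact Real.rpow_le_rpow (by positivity) (by linarith) (by positivity)
    calc _ ≤ (1 + ‖z‖ ^ 2) ^ ((Fintype.card ι : ℝ) / 2) *
          ((omg ι)⁻¹ * (m * (1 + ‖z‖ ^ 2) ^ (gam ι - 2))) := by gcongr
      _ = (omg ι)⁻¹ * m * ((1 + ‖z‖ ^ 2) ^ ((Fintype.card ι : ℝ) / 2) * (1 + ‖z‖ ^ 2) ^ (gam ι - 2)) := by ring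
      _ = _ := by
        rw [← Real.rpow_add (by positivity), ← Real.rpow_neg_one (1 + ‖z‖ ^ 2)]
        congr 2; unfold gam; ring

/-- Newton potential of a `C¹` compactly supported density. -/
lemma near_C2 (hM : 3 ≤ Fintype.card ι) {g : EuclideanSpace ℝ ι → ℝ} (hg : ContDiff ℝ 1 g)
    (hc : HasCompactSupport g) (x : EuclideanSpace ℝ ι) :
    ContDiffAt ℝ 2 (Nw g) x ∧ lapG (Nw g) x = -(omg ι) * g x := by
  have hgm := gam_neg hM
  have hdim := gam_dim (ι := ι)
  have hg' : Continuous (fderiv ℝ g) := hg.continuous_fderiv (by norm_num)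
  obtain ⟨C, R, hC, hR⟩ := cs_bdd hg' (hc.fderiv ℝ)
  have hsm := hg'.stronglyMeasurable
  have hN := near_C1 hgm hdim hsm hC hR
  have h1 : ∀ x, HasFDerivAt (Nw g) (∫ y, kap 0 (gam ι) (x - y) • fderiv ℝ g y) x :=
    fun x => near_grad hgm hdim hg hc x
  have hcd : ContDiffAt ℝ 2 (Nw g) x :=
    c2_of (Eventually.of_forall h1) (Eventually.of_forall hN.1)
      (Eventually.of_forall fun x => hN.2.continuousAt)
  refine ⟨hcd, ?_⟩
  rw [lapG_of hcd (Eventually.of_forall h1) (hN.1 x)]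
  set L2 : (EuclideanSpace ℝ ι →L[ℝ] ℝ) →L[ℝ] (EuclideanSpace ℝ ι →L[ℝ] ℝ) →L[ℝ]
    (EuclideanSpace ℝ ι →L[ℝ] EuclideanSpace ℝ ι →L[ℝ] ℝ) :=
    ContinuousLinearMap.smulRightL ℝ _ _ with hL2
  have U2 := (conv_tunif hsm hC hR L2 (fun ε => dkap ε (gam ι)) (fun ε => dkap_sm)
    (fun ε hε => dkap_int hε hgm hdim) (dkap_tendsto_L1 hgm hdim) x).tendsto_at (mem_ball_self one_pos)
  have T1 : Tendsto (fun j : ℕ => ∑ i, (∫ y, L2 (dkap (1 / ((j : ℝ) + 1)) (gam ι) (x - y)) (fderiv ℝ g y))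
      (EuclideanSpace.single i 1) (EuclideanSpace.single i 1)) atTop
      (𝓝 (∑ i, (∫ y, L2 (dkap 0 (gam ι) (x - y)) (fderiv ℝ g y))
      (EuclideanSpace.single i 1) (EuclideanSpace.single i 1))) := by
    refine tendsto_finsetSum _ fun i _ => ?_
    have hcont : Continuous fun B : EuclideanSpace ℝ ι →L[ℝ] EuclideanSpace ℝ ι →L[ℝ] ℝ =>
      B (EuclideanSpace.single i 1) (EuclideanSpace.single i 1) :=
      (continuous_id.clm_apply continuous_const).clm_apply continuous_const
    exact (hcont.tendsto _).comp U2
  refine tendsto_nhds_unique T1 ((approx_id hM hg.continuous hc x).congr fun j => ?_)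
  have hε : (0 : ℝ) < 1 / ((j : ℝ) + 1) := by positivity
  have hintg := (conv_unif L2 hsm hC hR dkap_sm (dkap_int hε.le hgm hdim)).1 x
  have e1 : ∀ i : ι, (∫ y, L2 (dkap (1 / ((j : ℝ) + 1)) (gam ι) (x - y)) (fderiv ℝ g y))
      (EuclideanSpace.single i 1) (EuclideanSpace.single i 1) =
      ∫ y, d2kap (1 / ((j : ℝ) + 1)) (gam ι) (x - y) (EuclideanSpace.single i 1)
        (EuclideanSpace.single i 1) * g y := by
    intro i
    rw [int_apply2 hintg, ← (ibp hε hg hc x _).1]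
    rfl
  simp only [e1]
  rw [← integral_finsetSum _ fun i _ => (ibp hε hg hc x _).2]
  refine integral_congr_ae (Eventually.of_forall fun y => ?_)
  simp only
  rw [← Finset.sum_mul, trace_d2kap (γ := gam ι) rfl (by positivity)]

end newton


section newton2
open MeasureTheory Metric Filter Topology
variable {ι : Type} [Fintype ι] [DecidableEq ι]

lemma Nw_eq (g : EuclideanSpace ℝ ι → ℝ) : Nw g = fun x => ∫ y, g y • kap 0 (gam ι) (x - y) := by
  funext x
  unfold Nw
  simp only [smul_eq_mul, mul_comm]

lemma far_C2 (hM : 3 ≤ Fintype.card ι) {g : EuclideanSpace ℝ ι → ℝ} {x₀ : EuclideanSpace ℝ ι} {r : ℝ}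
    (hr : 0 < r) (hg : StronglyMeasurable g) (hg0 : ∀ y ∈ ball x₀ (2 * r), g y = 0)
    (hi : Integrable fun y => kap 0 (gam ι) (x₀ - y) * g y) :
    ContDiffAt ℝ 2 (Nw g) x₀ ∧ lapG (Nw g) x₀ = 0 := by
  obtain ⟨a1, a2, a3, a4, a5⟩ := far_all (gam_neg hM) hr hg hg0 hi
  have hb : ball x₀ r ∈ 𝓝 x₀ := ball_mem_nhds x₀ hr
  have hcd : ContDiffAt ℝ 2 (Nw g) x₀ := by
    rw [Nw_eq]
    exact c2_of (eventually_of_mem hb a1) (eventually_of_mem hb a2) (eventually_of_mem hb a3)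
  refine ⟨hcd, ?_⟩
  rw [Nw_eq] at hcd ⊢
  rw [lapG_of hcd (eventually_of_mem hb a1) (a2 x₀ (mem_ball_self hr))]
  have hI := a5 x₀ (mem_ball_self hr)
  simp only [int_apply2 hI]
  rw [← integral_finsetSum]
  · refine integral_eq_zero_of_ae (Eventually.of_forall fun y => ?_)
    simp only [Pi.zero_apply]
    by_cases hy : y ∈ ball x₀ (2 * r)
    · simp [hg0 y hy]
    · have hy' : 2 * r ≤ ‖x₀ - y‖ := by
        rw [mem_ball, dist_comm, dist_eq_norm] at hy; push Not at hy; exact hy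
      have hpos : 0 < ‖x₀ - y‖ := by linarith
      have := trace_d2kap (ι := ι) (γ := gam ι) (ε := 0) (z := x₀ - y) rfl (by positivity)
      simp only [smul_apply, smul_eq_mul]
      rw [← Finset.mul_sum, this]
      simp
  · intro i _
    have h2 := (ContinuousLinearMap.apply ℝ _ (EuclideanSpace.single i (1:ℝ))).integrable_comp hI
    exact (ContinuousLinearMap.apply ℝ _ (EuclideanSpace.single i (1:ℝ))).integrable_comp h2

lemma near_int (hM : 3 ≤ Fintype.card ι) {g : EuclideanSpace ℝ ι → ℝ} (hg : StronglyMeasurable g)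
    {C R : ℝ} (hC : ∀ y, ‖g y‖ ≤ C) (hR : ∀ y, R ≤ ‖y‖ → g y = 0) (x : EuclideanSpace ℝ ι) :
    Integrable fun y => kap 0 (gam ι) (x - y) * g y :=
  (conv_unif (ContinuousLinearMap.lsmul ℝ ℝ) hg hC hR kap_sm
    (kap_int le_rfl (gam_neg hM) gam_dim)).1 x

lemma far_int' (hM : 3 ≤ Fintype.card ι) {g : EuclideanSpace ℝ ι → ℝ} {x₀ : EuclideanSpace ℝ ι} {r : ℝ}
    (hr : 0 < r) (hg : StronglyMeasurable g) (hg0 : ∀ y ∈ ball x₀ (2 * r), g y = 0)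
    (hi : Integrable fun y => kap 0 (gam ι) (x₀ - y) * g y) (x) (hx : x ∈ ball x₀ r) :
    Integrable fun y => kap 0 (gam ι) (x - y) * g y := by
  have := (far_all (gam_neg hM) hr hg hg0 hi).2.2.2.1 x hx
  simpa only [smul_eq_mul, mul_comm] using this

lemma Nw_split {g g1 g2 : EuclideanSpace ℝ ι → ℝ} (h : ∀ y, g y = g1 y + g2 y) {x}
    (h1 : Integrable fun y => kap 0 (gam ι) (x - y) * g1 y)
    (h2 : Integrable fun y => kap 0 (gam ι) (x - y) * g2 y) : Nw g x = Nw g1 x + Nw g2 x := by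
  unfold Nw
  simp only [smul_eq_mul]
  rw [← integral_add h1 h2]
  simp [h, mul_add]

lemma Nw_C1 (hM : 3 ≤ Fintype.card ι) {g : EuclideanSpace ℝ ι → ℝ} {x₀ : EuclideanSpace ℝ ι} {r C : ℝ}
    (hr : 0 < r) (hg : StronglyMeasurable g) (hb : ∀ y ∈ ball x₀ (2 * r), ‖g y‖ ≤ C)
    (hi : Integrable fun y => kap 0 (gam ι) (x₀ - y) * g y) :
    ContDiffAt ℝ 1 (Nw g) x₀ := by
  set B := ball x₀ (2 * r) with hB
  set g1 := B.indicator g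
  set g2 := Bᶜ.indicator g
  have hg1 : StronglyMeasurable g1 := hg.indicator measurableSet_ball
  have hg2 : StronglyMeasurable g2 := hg.indicator measurableSet_ball.compl
  have hC0 : 0 ≤ C := (norm_nonneg _).trans (hb x₀ (mem_ball_self (by linarith)))
  have h1b : ∀ y, ‖g1 y‖ ≤ C := by
    intro y
    by_cases hy : y ∈ B
    · simp only [g1, indicator_of_mem hy]; exact hb y hy
    · simp only [g1, indicator_of_notMem hy]; simpa using hC0
  have h1R : ∀ y, ‖x₀‖ + 2 * r ≤ ‖y‖ → g1 y = 0 := by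
    intro y hy
    refine indicator_of_notMem (fun h => ?_) _
    rw [hB, mem_ball, dist_eq_norm] at h
    have := norm_sub_norm_le y x₀
    linarith
  have h20 : ∀ y ∈ ball x₀ (2 * r), g2 y = 0 := by
    intro y hy
    exact indicator_of_notMem (s := Bᶜ) (fun h : y ∈ Bᶜ => h hy) _
  have hi2 : Integrable fun y => kap 0 (gam ι) (x₀ - y) * g2 y := by
    have := hi.indicator (s := Bᶜ) measurableSet_ball.compl
    refine this.congr (Eventually.of_forall fun y => ?_)
    by_cases hy : y ∈ Bᶜ
    · simp only [g2, indicator_of_mem hy]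
    · simp only [g2, indicator_of_notMem hy, mul_zero]
  have e : ∀ y, g y = g1 y + g2 y := fun y => (indicator_self_add_compl_apply B g y).symm
  have ev : Nw g =ᶠ[𝓝 x₀] fun x => Nw g1 x + Nw g2 x := by
    filter_upwards [ball_mem_nhds x₀ hr] with x hx
    exact Nw_split e (near_int hM hg1 h1b h1R x) (far_int' hM hr hg2 h20 hi2 x hx)
  refine ContDiffAt.congr_of_eventuallyEq ?_ ev
  refine ContDiffAt.add ?_ ((far_C2 hM hr hg2 h20 hi2).1.of_le (by norm_num))
  have hN := near_C1 (gam_neg hM) gam_dim hg1 h1b h1R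
  rw [contDiffAt_one_iff]
  exact ⟨_, univ, univ_mem, hN.2.continuousOn, fun x _ => hN.1 x⟩

lemma Nw_C2 (hM : 3 ≤ Fintype.card ι) {g : EuclideanSpace ℝ ι → ℝ} {x₀ : EuclideanSpace ℝ ι} {r : ℝ}
    (hr : 0 < r) (hg : StronglyMeasurable g) (hd : ContDiffOn ℝ 1 g (ball x₀ r))
    (hi : Integrable fun y => kap 0 (gam ι) (x₀ - y) * g y) :
    ContDiffAt ℝ 2 (Nw g) x₀ ∧ lapG (Nw g) x₀ = -(omg ι) * g x₀ := by
  let χ : ContDiffBump x₀ := ⟨r / 4, r / 2, by linarith, by linarith⟩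
  set g1 : EuclideanSpace ℝ ι → ℝ := fun y => χ y * g y
  set g2 : EuclideanSpace ℝ ι → ℝ := fun y => (1 - χ y) * g y
  have hχ : Continuous (χ : EuclideanSpace ℝ ι → ℝ) := χ.continuous
  have hts : tsupport (χ : EuclideanSpace ℝ ι → ℝ) = closedBall x₀ (r / 2) := χ.tsupport_eq
  have hg1 : ContDiff ℝ 1 g1 := by
    rw [contDiff_iff_contDiffAt]
    intro y
    by_cases hy : y ∈ ball x₀ r
    · exact (χ.contDiff.contDiffAt (n := 1)).mul (hd.contDiffAt (isOpen_ball.mem_nhds hy))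
    · have : y ∉ tsupport (χ : EuclideanSpace ℝ ι → ℝ) := by
        rw [hts, mem_closedBall]
        rw [mem_ball] at hy
        intro h; linarith
      have h0 : g1 =ᶠ[𝓝 y] fun _ => 0 := by
        filter_upwards [(isClosed_tsupport _).isOpen_compl.mem_nhds this] with z hz
        simp only [g1]
        rw [image_eq_zero_of_notMem_tsupport hz, zero_mul]
      exact contDiffAt_const.congr_of_eventuallyEq h0
  have hc1 : HasCompactSupport g1 := χ.hasCompactSupport.mul_right
  have hg1s : StronglyMeasurable g1 := hg1.continuous.stronglyMeasurable
  have hg2s : StronglyMeasurable g2 :=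
    (continuous_const.sub hχ).stronglyMeasurable.mul hg
  obtain ⟨C, R, hC, hR⟩ := cs_bdd hg1.continuous hc1
  have h20 : ∀ y ∈ ball x₀ (2 * (r / 8)), g2 y = 0 := by
    intro y hy
    have : χ y = 1 := χ.one_of_mem_closedBall (by
      rw [mem_ball] at hy; rw [mem_closedBall]; change dist y x₀ ≤ r / 4; linarith)
    simp [g2, this]
  have i1 := near_int hM hg1s hC hR x₀
  have hi2 : Integrable fun y => kap 0 (gam ι) (x₀ - y) * g2 y := by
    refine (hi.sub i1).congr (Eventually.of_forall fun y => ?_)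
    simp only [g1, g2, Pi.sub_apply]; ring
  have ev : Nw g =ᶠ[𝓝 x₀] fun x => Nw g1 x + Nw g2 x := by
    filter_upwards [ball_mem_nhds x₀ (show 0 < r / 8 by linarith)] with x hx
    exact Nw_split (fun y => by simp only [g1, g2]; ring) (near_int hM hg1s hC hR x)
      (far_int' hM (by linarith) hg2s h20 hi2 x hx)
  obtain ⟨n1, n2⟩ := near_C2 hM hg1 hc1 x₀
  obtain ⟨f1, f2⟩ := far_C2 hM (show 0 < r / 8 by linarith) hg2s h20 hi2
  have hcd := (n1.add f1).congr_of_eventuallyEq ev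
  refine ⟨hcd, ?_⟩
  have e1 : lapG (Nw g) x₀ = lapG (fun x => Nw g1 x + Nw g2 x) x₀ := by
    unfold lapG
    rw [(ev.iteratedFDeriv ℝ 2).eq_of_nhds]
  rw [e1, ((HL.of_cd n1).add (HL.of_cd f1)).la, n2, f2, add_zero]
  have : χ x₀ = 1 := χ.one_of_mem_closedBall (mem_closedBall_self (by positivity))
  simp [g1, this]

/-- Boundedness and decay of the potential. -/
lemma Nw_decay (hM : 3 ≤ Fintype.card ι) {g : EuclideanSpace ℝ ι → ℝ} (hg : StronglyMeasurable g)
    {C R : ℝ} (hC : ∀ y, ‖g y‖ ≤ C) (hR : ∀ y, R ≤ ‖y‖ → g y = 0) :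
    ∃ B : ℝ, 0 ≤ B ∧ (∀ x, |Nw g x| ≤ B) ∧ ∀ x, x ≠ 0 → |Nw g x| ≤ B * ‖x‖ ^ (2 * gam ι) := by
  have hgm := gam_neg hM
  wlog hR1 : 1 ≤ R generalizing R
  · exact this (R := max R 1) (fun y hy => hR y (le_trans (le_max_left _ _) hy)) (le_max_right _ _)
  have hC0 : 0 ≤ C := (norm_nonneg _).trans (hC 0)
  have gint : Integrable g := by
    have hb : Integrable ((ball (0 : EuclideanSpace ℝ ι) R).indicator fun _ => C) :=
      (integrable_indicator_iff measurableSet_ball).mpr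
        (integrableOn_const (measure_ball_lt_top.ne))
    refine hb.mono' hg.aestronglyMeasurable (Eventually.of_forall fun y => ?_)
    by_cases hy : R ≤ ‖y‖
    · rw [hR y hy, norm_zero]
      exact indicator_nonneg (fun _ _ => hC0) _
    · rw [indicator_of_mem (by simpa using hy)]; exact hC y
  set L := (ContinuousLinearMap.lsmul ℝ ℝ : ℝ →L[ℝ] ℝ →L[ℝ] ℝ)
  set B1 := ‖L‖ * C * ∫ z in ball (0 : EuclideanSpace ℝ ι) (R + 2 * R + 1), ‖kap 0 (gam ι) z‖
  set B2 := ∫ y, ‖g y‖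
  have hB1 : 0 ≤ B1 := by positivity
  have hB2 : 0 ≤ B2 := by positivity
  have n1 : ∀ x : EuclideanSpace ℝ ι, ‖x‖ ≤ 2 * R → |Nw g x| ≤ B1 := by
    intro x hx
    have := (conv_unif L hg hC hR kap_sm (kap_int le_rfl hgm gam_dim)).2 x x (mem_ball_self one_pos)
    refine this.trans ?_
    refine mul_le_mul_of_nonneg_left ?_ (by positivity)
    refine setIntegral_mono_set (kap_int le_rfl hgm gam_dim _).norm
      (Eventually.of_forall fun z => norm_nonneg _) ?_
    exact (ball_subset_ball (by linarith)).eventuallyLE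
  have n2 : ∀ x : EuclideanSpace ℝ ι, 2 * R ≤ ‖x‖ → |Nw g x| ≤ B2 * (‖x‖ / 2) ^ (2 * gam ι) := by
    intro x hx
    have : |Nw g x| ≤ ∫ y, ‖g y‖ * (‖x‖ / 2) ^ (2 * gam ι) := by
      change ‖∫ y, kap 0 (gam ι) (x - y) • g y‖ ≤ _
      refine norm_integral_le_of_norm_le (gint.norm.mul_const _) (Eventually.of_forall fun y => ?_)
      by_cases hy : R ≤ ‖y‖
      · simp [hR y hy]
      · rw [norm_smul, mul_comm, Real.norm_of_nonneg (kap_nonneg le_rfl _), kap_zero]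
        gcongr ?_ * ?_
        refine Real.rpow_le_rpow_of_nonpos (by linarith) ?_ (by linarith)
        have := norm_sub_norm_le x y
        push Not at hy
        linarith
    rwa [integral_mul_const] at this
  have hpow : ∀ x : EuclideanSpace ℝ ι, (‖x‖ / 2) ^ (2 * gam ι) = (1 / 2) ^ (2 * gam ι) * ‖x‖ ^ (2 * gam ι) := by
    intro x
    rw [← Real.mul_rpow (by norm_num) (norm_nonneg _)]; congr 1; ring
  refine ⟨B1 * (2 * R) ^ (- (2 * gam ι)) + B1 + B2 * (1 / 2) ^ (2 * gam ι) + B2, by positivity, fun x => ?_, fun x hx => ?_⟩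
  · have p1 : 0 ≤ B1 * (2 * R) ^ (- (2 * gam ι)) := by positivity
    have p2 : 0 ≤ B2 * (1 / 2) ^ (2 * gam ι) := by positivity
    rcases le_total ‖x‖ (2 * R) with h | h
    · have := n1 x h; linarith
    · have := n2 x h
      have h3 : (‖x‖ / 2) ^ (2 * gam ι) ≤ 1 :=
        Real.rpow_le_one_of_one_le_of_nonpos (by linarith) (by linarith)
      have := mul_le_mul_of_nonneg_left h3 hB2
      linarith
  · have hx' : 0 < ‖x‖ := norm_pos_iff.mpr hx
    have hxp : 0 < ‖x‖ ^ (2 * gam ι) := by positivity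
    rcases le_total ‖x‖ (2 * R) with h | h
    · have h1 := n1 x h
      have h2 : 1 ≤ (2 * R) ^ (- (2 * gam ι)) * ‖x‖ ^ (2 * gam ι) := by
        have h4 : (2 * R) ^ (2 * gam ι) ≤ ‖x‖ ^ (2 * gam ι) :=
          Real.rpow_le_rpow_of_nonpos hx' h (by linarith)
        calc (1 : ℝ) = (2 * R) ^ (- (2 * gam ι)) * (2 * R) ^ (2 * gam ι) := by
              rw [← Real.rpow_add (by linarith)]; simp
          _ ≤ _ := by gcongr
      calc |Nw g x| ≤ B1 * 1 := by linarith
        _ ≤ B1 * ((2 * R) ^ (- (2 * gam ι)) * ‖x‖ ^ (2 * gam ι)) := by gcongr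
        _ = (B1 * (2 * R) ^ (- (2 * gam ι))) * ‖x‖ ^ (2 * gam ι) := by ring
        _ ≤ _ := by
          gcongr
          have p2 : 0 ≤ B2 * (1 / 2) ^ (2 * gam ι) := by positivity
          linarith
    · have h1 := n2 x h
      rw [hpow, ← mul_assoc] at h1
      refine h1.trans ?_
      gcongr
      have p1 : 0 ≤ B1 * (2 * R) ^ (- (2 * gam ι)) := by positivity
      linarith

end newton2


section maxprin
open Metric Filter Topology

lemma locmin_second {φ : ℝ → ℝ} {t : ℝ} (hm : IsLocalMin φ t) (hc : ContinuousAt φ t) :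
    0 ≤ deriv (deriv φ) t := by
  by_contra hneg
  push Not at hneg
  have hmax := isLocalMax_of_deriv_deriv_neg hneg hm.deriv_eq_zero hc
  have e : φ =ᶠ[𝓝 t] fun _ => φ t := by
    filter_upwards [hm, hmax] with y h1 h2
    exact le_antisymm h2 h1
  have e2 : deriv φ =ᶠ[𝓝 t] deriv fun _ => φ t := e.deriv
  have := e2.deriv_eq
  simp at this
  linarith

variable {κ : Type} [Fintype κ] [DecidableEq κ]

lemma locmin_lap {u : EuclideanSpace ℝ κ → ℝ} {x : EuclideanSpace ℝ κ} (hu : ContDiffAt ℝ 2 u x)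
    (hm : IsLocalMin u x) : 0 ≤ lapG u x := by
  unfold lapG
  refine Finset.sum_nonneg fun i _ => ?_
  rw [iter2_eq hu]
  set v : EuclideanSpace ℝ κ := EuclideanSpace.single i 1
  have hl : ∀ t : ℝ, HasDerivAt (fun t : ℝ => x + t • v) v t := fun t => by
    simpa using ((hasDerivAt_id t).smul_const v).const_add x
  have hlc : Tendsto (fun t : ℝ => x + t • v) (𝓝 0) (𝓝 x) := by
    have := (hl 0).continuousAt.tendsto
    simpa using this
  have hev : ∀ᶠ y in 𝓝 x, DifferentiableAt ℝ u y :=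
    cd_ev hu
  have h1 : deriv (fun t : ℝ => u (x + t • v)) =ᶠ[𝓝 0] fun t => fderiv ℝ u (x + t • v) v := by
    filter_upwards [hlc.eventually hev] with t ht
    exact (ht.hasFDerivAt.comp_hasDerivAt t (hl t)).deriv
  have h2 : deriv (deriv (fun t : ℝ => u (x + t • v))) 0 = fderiv ℝ (fun y => fderiv ℝ u y v) x v := by
    rw [h1.deriv_eq]
    have hd : DifferentiableAt ℝ (fun y => fderiv ℝ u y v) x :=
      cd_dir hu v
    have e0 : x + (0 : ℝ) • v = x := by simp
    have hd' : HasFDerivAt (fun y => fderiv ℝ u y v) (fderiv ℝ (fun y => fderiv ℝ u y v) x)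
        (x + (0 : ℝ) • v) := by rw [e0]; exact hd.hasFDerivAt
    exact (hd'.comp_hasDerivAt (0 : ℝ) (hl 0)).deriv
  rw [← h2]
  refine locmin_second ?_ ?_
  · have := hlc.eventually hm
    filter_upwards [this] with t ht
    simpa using ht
  · refine ContinuousAt.comp (g := u) ?_ (hl 0).continuousAt
    simpa using hu.continuousAt

/-- half space -/
def HS (o : κ) : Set (EuclideanSpace ℝ κ) := {x | 0 < x o}

lemma HS_open (o : κ) : IsOpen (HS o) :=
  isOpen_lt continuous_const (EuclideanSpace.proj (𝕜 := ℝ) o).continuous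

/-- exhaustion -/
noncomputable def psi (o : κ) (x : EuclideanSpace ℝ κ) : ℝ := (x o) ^ (-2 : ℝ) + ‖x‖ ^ 2

lemma psi_compact (o : κ) (R : ℝ) : IsCompact {x : EuclideanSpace ℝ κ | 0 < x o ∧ psi o x ≤ R} := by
  have e : {x : EuclideanSpace ℝ κ | 0 < x o ∧ psi o x ≤ R}
      = {x | 0 ≤ x o ∧ 1 + ‖x‖ ^ 2 * (x o) ^ 2 ≤ R * (x o) ^ 2} := by
    ext x
    simp only [mem_ofPred_eq, psi]
    constructor
    · rintro ⟨h, h2⟩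
      refine ⟨h.le, ?_⟩
      have := mul_le_mul_of_nonneg_right h2 (sq_nonneg (x o))
      rw [Real.rpow_neg h.le, Real.rpow_two, add_mul, inv_mul_cancel₀ (by positivity)] at this
      exact this
    · rintro ⟨h, h2⟩
      have hp : 0 < x o := by
        rcases h.eq_or_lt with h0 | h0
        · rw [← h0] at h2; norm_num at h2
        · exact h0
      refine ⟨hp, ?_⟩
      rw [Real.rpow_neg h, Real.rpow_two]
      have h3 : ((x o ^ 2)⁻¹ + ‖x‖ ^ 2) * (x o) ^ 2 ≤ R * (x o) ^ 2 := by
        rw [add_mul, inv_mul_cancel₀ (by positivity)]; exact h2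
      exact le_of_mul_le_mul_right h3 (by positivity)
  have hc : Continuous fun x : EuclideanSpace ℝ κ => x o := (EuclideanSpace.proj (𝕜 := ℝ) o).continuous
  refine Metric.isCompact_of_isClosed_isBounded ?_ ?_
  · rw [e]
    have c1 : Continuous fun x : EuclideanSpace ℝ κ => 1 + ‖x‖ ^ 2 * (x o) ^ 2 := by fun_prop
    have c2 : Continuous fun x : EuclideanSpace ℝ κ => R * (x o) ^ 2 := by fun_prop
    exact (isClosed_le continuous_const hc).inter (isClosed_le c1 c2)
  · refine (isBounded_closedBall (x := (0 : EuclideanSpace ℝ κ)) (r := |R| + 1)).subset ?_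
    rintro x ⟨h, h2⟩
    rw [mem_closedBall, dist_zero_right]
    unfold psi at h2
    have : 0 ≤ (x o) ^ (-2 : ℝ) := by positivity
    have h3 := le_abs_self R
    nlinarith [norm_nonneg x]

/-- the barrier -/
noncomputable def barr (o : κ) (a : ℝ) (x : EuclideanSpace ℝ κ) : ℝ :=
  (x o) ^ (-a - 2) + (x o) ^ (-a) * ‖x - 0‖ ^ 2

lemma barr_eq (o : κ) (a : ℝ) {x : EuclideanSpace ℝ κ} (hx : x ∈ HS o) :
    barr o a x = (x o) ^ (-a) * psi o x := by
  unfold barr psi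
  rw [mul_add, ← Real.rpow_add hx, sub_zero]; rfl

lemma sq_le_norm (o : κ) (x : EuclideanSpace ℝ κ) : (x o) ^ 2 ≤ ‖x‖ ^ 2 := by
  rw [EuclideanSpace.norm_sq_eq]
  have := Finset.single_le_sum (f := fun i => ‖x i‖ ^ 2) (fun i _ => by positivity) (Finset.mem_univ o)
  simpa using this

lemma barr_HL (o : κ) {a k : ℝ} (ha : 0 < a) (hk : (a + 2) * (a + 3) + 2 * Fintype.card κ ≤ k)
    {x : EuclideanSpace ℝ κ} (hx : x ∈ HS o) :
    ContDiffAt ℝ 2 (barr o a) x ∧ lapG (barr o a) x ≤ k / (x o) ^ 2 * barr o a x := by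
  have hx0 : 0 < x o := hx
  have h1 := (HL.coord (x := x) o).rpow hx0 (-a - 2)
  have h2 := (HL.coord (x := x) o).rpow hx0 (-a)
  have h3 := HL.normsq (x := x) (0 : EuclideanSpace ℝ κ)
  have h4 := h1.add (h2.mul h3)
  refine ⟨h4.cd, ?_⟩
  have hl := h4.la
  change lapG (barr o a) x = _ at hl
  rw [hl]
  have s1 : ∑ i, (Pi.single o (1:ℝ) : κ → ℝ) i ^ 2 = 1 := by
    rw [Finset.sum_eq_single o] <;> simp +contextual
  have s2 : ∑ i, (-a * x o ^ (-a - 1) * (Pi.single o (1:ℝ) : κ → ℝ) i) * (2 * (x i - (0 : EuclideanSpace ℝ κ) i))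
      = -2 * a * x o ^ (-a) := by
    rw [Finset.sum_eq_single o]
    · have : x o ^ (-a) = x o ^ (-a - 1) * x o := by
        conv_rhs => rw [← Real.rpow_add_one hx0.ne']
        congr 1; ring
      simp [this]; ring
    · intro i _ hi; simp [hi]
    · simp
  rw [s1, s2]
  unfold barr
  simp only [sub_zero]
  set t := x o ^ (-a - 4) with ht
  have htp : 0 < t := by positivity
  have e1 : x o ^ (-a - 2) = t * (x o) ^ 2 := by
    rw [ht, ← Real.rpow_two, ← Real.rpow_add hx0]; congr 1; ring
  have e2 : x o ^ (-a - 2 - 2) = t := by rw [ht]; congr 1; ring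
  have e3 : x o ^ (-a) = t * (x o) ^ 4 := by
    rw [ht, ← Real.rpow_natCast, ← Real.rpow_add hx0]; congr 1; push_cast; ring
  rw [e1, e2, e3]
  have e4 : k / x o ^ 2 * (t * x o ^ 2 + t * x o ^ 4 * ‖x‖ ^ 2) = t * (k + k * ((x o) ^ 2 * ‖x‖ ^ 2)) := by
    field_simp
  rw [e4]
  have e5 : (-a - 2) * x o ^ (-a - 2 - 1) * 0 + (-a - 2) * (-a - 2 - 1) * t * 1 +
      (t * x o ^ 4 * (2 * ↑(Fintype.card κ)) +
          ‖x‖ ^ 2 * (-a * x o ^ (-a - 1) * 0 + -a * (-a - 1) * (t * x o ^ 2) * 1) +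
        2 * (-2 * a * (t * x o ^ 4))) = t * ((a + 2) * (a + 3) + x o ^ 4 * (2 * ↑(Fintype.card κ)) +
          a * (a + 1) * ((x o) ^ 2 * ‖x‖ ^ 2) - 4 * a * (x o) ^ 4) := by ring
  rw [e5]
  refine mul_le_mul_of_nonneg_left ?_ htp.le
  have hq := sq_le_norm o x
  set q := (x o) ^ 2
  have hq0 : 0 ≤ q := sq_nonneg _
  have e6 : x o ^ 4 = q * q := by simp only [q]; ring
  rw [e6]
  have hn : (0 : ℝ) ≤ Fintype.card κ := by positivity
  have h7 : q * q ≤ q * ‖x‖ ^ 2 := mul_le_mul_of_nonneg_left hq hq0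
  have h8 : 0 ≤ q * q := by positivity
  set m := q * ‖x‖ ^ 2
  have h9 : (2 * (Fintype.card κ : ℝ)) * (q * q) ≤ (2 * (Fintype.card κ : ℝ)) * m := by gcongr
  have h10 : ((a + 2) * (a + 3) + 2 * (Fintype.card κ : ℝ)) * m ≤ k * m := by gcongr
  have h11 : a * (a + 1) * m ≤ (a + 2) * (a + 3) * m := by
    refine mul_le_mul_of_nonneg_right ?_ (by linarith); nlinarith
  have h12 : 0 ≤ 4 * a * (q * q) := by positivity
  nlinarith

/-- Maximum principle. -/
lemma mp2 (o : κ) {a k C : ℝ} (ha : 0 < a) (hk : (a + 2) * (a + 3) + 2 * Fintype.card κ ≤ k)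
    {z : EuclideanSpace ℝ κ → ℝ} (hz : ∀ x ∈ HS o, ContDiffAt ℝ 2 z x)
    (hlap : ∀ x ∈ HS o, lapG z x ≤ k / (x o) ^ 2 * z x)
    (hb : ∀ x ∈ HS o, -(C * (x o) ^ (-a)) ≤ z x) : ∀ x ∈ HS o, 0 ≤ z x := by
  have hk0 : 0 < k := by
    have : (0 : ℝ) ≤ Fintype.card κ := by positivity
    nlinarith
  have key : ∀ η > 0, ∀ x ∈ HS o, 0 ≤ z x + η * barr o a x := by
    intro η hη
    by_contra hcon
    push Not at hcon
    obtain ⟨x1, hx1, hneg⟩ := hcon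
    set Z := fun x => z x + η * barr o a x with hZ
    have hZc : ∀ x ∈ HS o, ContDiffAt ℝ 2 Z x := fun x hx =>
      (hz x hx).add (contDiffAt_const.mul (barr_HL o ha hk hx).1)
    set K := {x : EuclideanSpace ℝ κ | 0 < x o ∧ psi o x ≤ C / η}
    have hout : ∀ x ∈ HS o, x ∉ K → 0 ≤ Z x := by
      intro x hx hxK
      have hx0 : 0 < x o := hx
      have h1 : C / η < psi o x := by
        by_contra h; push Not at h; exact hxK ⟨hx, h⟩
      rw [div_lt_iff₀ hη] at h1
      have h2 := hb x hx
      have h3 : 0 ≤ (x o) ^ (-a) * (η * psi o x - C) :=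
        mul_nonneg (by positivity) (by linarith)
      simp only [hZ, barr_eq o a hx]
      linarith
    have hx1K : x1 ∈ K := by
      by_contra h; have := hout x1 hx1 h; simp only [hZ] at this; linarith
    obtain ⟨y, hyK, hmin⟩ := (psi_compact o (C / η)).exists_isMinOn ⟨x1, hx1K⟩
      (f := Z) (fun x hx => (hZc x hx.1).continuousAt.continuousWithinAt)
    have hyH : y ∈ HS o := hyK.1
    have hyneg : Z y < 0 := lt_of_le_of_lt (hmin hx1K) hneg
    have hloc : IsLocalMin Z y := by
      filter_upwards [(HS_open o).mem_nhds hyH] with x hx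
      by_cases hxK : x ∈ K
      · exact hmin hxK
      · exact hyneg.le.trans (hout x hx hxK)
    have h1 := locmin_lap (hZc y hyH) hloc
    have h2 : lapG Z y = lapG z y + η * lapG (barr o a) y :=
      ((HL.of_cd (hz y hyH)).add ((HL.of_cd (barr_HL o ha hk hyH).1).const_mul η)).la
    have h3 := hlap y hyH
    have h4 := mul_le_mul_of_nonneg_left (barr_HL o ha hk hyH).2 hη.le
    have hy0 : 0 < y o := hyH
    have h5 : k / (y o) ^ 2 * Z y < 0 := mul_neg_of_pos_of_neg (by positivity) hyneg
    simp only [hZ] at h5 h2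
    nlinarith
  intro x hx
  have hlim : Tendsto (fun η : ℝ => z x + η * barr o a x) (𝓝[>] 0) (𝓝 (z x)) := by
    have : Continuous fun η : ℝ => z x + η * barr o a x := by fun_prop
    have h := this.tendsto 0
    simp only [zero_mul, add_zero] at h
    exact h.mono_left nhdsWithin_le_nhds
  refine ge_of_tendsto hlim ?_
  filter_upwards [self_mem_nhdsWithin] with η hη
  exact key η hη x hx

end maxprin


section lifting
open MeasureTheory Metric Filter Topology
variable {κ : Type} [Fintype κ] [DecidableEq κ] {N : ℕ}

/-- embedding of the half space into the larger space -/
noncomputable def emb (N : ℕ) : EuclideanSpace ℝ κ →L[ℝ] EuclideanSpace ℝ (Fin N ⊕ κ) :=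
  LinearMap.toContinuousLinearMap
    { toFun := fun x => WithLp.toLp 2 (Sum.elim (fun _ => 0) x)
      map_add' := by
        intro x y; ext i; cases i <;> simp
      map_smul' := by
        intro c x; ext i; cases i <;> simp }

@[simp] lemma emb_inl (x : EuclideanSpace ℝ κ) (j : Fin N) : emb N x (Sum.inl j) = 0 := rfl
@[simp] lemma emb_inr (x : EuclideanSpace ℝ κ) (i : κ) : emb N x (Sum.inr i) = x i := rfl

lemma emb_single (i : κ) :
    emb N (EuclideanSpace.single i (1:ℝ)) = EuclideanSpace.single (Sum.inr i) 1 := by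
  ext k
  cases k with
  | inl j => simp
  | inr l => simp [EuclideanSpace.single]

lemma nsq (Y : EuclideanSpace ℝ (Fin N ⊕ κ)) :
    ‖Y‖ ^ 2 = ∑ j, Y (Sum.inl j) ^ 2 + ∑ i, Y (Sum.inr i) ^ 2 := by
  rw [EuclideanSpace.norm_sq_eq, Fintype.sum_sum_type]
  simp

/-- rotational invariance -/
def RotInv (o : κ) (w : EuclideanSpace ℝ (Fin N ⊕ κ) → ℝ) : Prop :=
  ∀ Y Y' : EuclideanSpace ℝ (Fin N ⊕ κ), (∀ i, i ≠ o → Y (Sum.inr i) = Y' (Sum.inr i)) →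
    ‖Y‖ = ‖Y'‖ → w Y = w Y'

lemma rot_grad {o : κ} {w : EuclideanSpace ℝ (Fin N ⊕ κ) → ℝ} (hw : RotInv o w)
    {Y : EuclideanSpace ℝ (Fin N ⊕ κ)} (hY : 0 < Y (Sum.inr o)) (hd : DifferentiableAt ℝ w Y)
    (j : Fin N) :
    fderiv ℝ w Y (EuclideanSpace.single (Sum.inl j) 1) * Y (Sum.inr o)
      - Y (Sum.inl j) * fderiv ℝ w Y (EuclideanSpace.single (Sum.inr o) 1) = 0 := by
  set ej : EuclideanSpace ℝ (Fin N ⊕ κ) := EuclideanSpace.single (Sum.inl j) 1 with hej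
  set eo : EuclideanSpace ℝ (Fin N ⊕ κ) := EuclideanSpace.single (Sum.inr o) 1 with heo
  set b := Y (Sum.inr o) with hb
  set c := Y (Sum.inl j) with hc
  let q : ℝ → ℝ := fun t => b ^ 2 - 2 * t * c - t ^ 2
  let cu : ℝ → EuclideanSpace ℝ (Fin N ⊕ κ) := fun t => Y + (t • ej + (Real.sqrt (q t) - b) • eo)
  have hq : HasDerivAt q (-2 * c) 0 := by
    have h1 : HasDerivAt (fun t : ℝ => b ^ 2 - 2 * t * c - t ^ 2) (-(2 * 1 * c) - 2 * (0:ℝ) ^ (2 - 1) * 1) 0 := by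
      refine HasDerivAt.sub ?_ ((hasDerivAt_id (0:ℝ)).pow 2)
      exact (((hasDerivAt_id (0:ℝ)).const_mul 2).mul_const c).const_sub (b ^ 2)
    exact h1.congr_deriv (by norm_num)
  have hq0 : q 0 = b ^ 2 := by simp [q]
  have hs0 : Real.sqrt (q 0) = b := by rw [hq0]; exact Real.sqrt_sq hY.le
  have hs : HasDerivAt (fun t => Real.sqrt (q t)) (-c / b) 0 := by
    have := hq.sqrt (by rw [hq0]; positivity)
    refine this.congr_deriv ?_
    rw [hs0]; field_simp
  have hcu0 : cu 0 = Y := by simp [cu, hs0]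
  have hcu : HasDerivAt cu (ej + (-c / b) • eo) 0 := by
    have h1 : HasDerivAt (fun t : ℝ => t • ej) ((1:ℝ) • ej) 0 := (hasDerivAt_id (0:ℝ)).smul_const ej
    have h2 := (hs.sub_const b).smul_const eo
    exact ((h1.add h2).const_add Y).congr_deriv (by simp)
  have hcn : ∀ t, 0 ≤ q t → ‖cu t‖ = ‖Y‖ := by
    intro t ht
    have h1 : ‖cu t‖ ^ 2 = ‖Y‖ ^ 2 := by
      have hr := Real.sq_sqrt ht
      simp only [cu]
      set τ := Real.sqrt (q t) with hτ
      have i1 : inner ℝ Y (t • ej + (τ - b) • eo) = t * c + (τ - b) * b := by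
        rw [inner_add_right, inner_smul_right, inner_smul_right]
        simp [hej, heo, EuclideanSpace.inner_single_right, hb, hc]
      have i2 : ‖t • ej + (τ - b) • eo‖ ^ 2 = t ^ 2 + (τ - b) ^ 2 := by
        have n1 : ‖ej‖ = 1 := by simp [hej]
        have n2 : ‖eo‖ = 1 := by simp [heo]
        have n3 : inner ℝ ej eo = (0:ℝ) := by
          rw [hej, heo, EuclideanSpace.inner_single_right]; simp
        rw [norm_add_sq_real, norm_smul, norm_smul, n1, n2, inner_smul_left, inner_smul_right, n3]
        simp
      rw [norm_add_sq_real, i1, i2]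
      have : τ ^ 2 = b ^ 2 - 2 * t * c - t ^ 2 := hr
      linarith [this, (by ring : (τ - b) ^ 2 = τ ^ 2 - 2 * τ * b + b ^ 2)]
    exact (sq_eq_sq₀ (norm_nonneg _) (norm_nonneg _)).mp h1
  have hcst : (fun t => w (cu t)) =ᶠ[𝓝 0] fun _ => w Y := by
    have hqc : ∀ᶠ t in 𝓝 (0:ℝ), 0 < q t :=
      hq.continuousAt.eventually (lt_mem_nhds (by rw [hq0]; positivity))
    filter_upwards [hqc] with t ht
    refine hw _ _ (fun i hi => ?_) (hcn t ht.le)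
    simp [cu, hej, heo, EuclideanSpace.single, hi]
  have hd' : HasFDerivAt w (fderiv ℝ w Y) (cu 0) := by rw [hcu0]; exact hd.hasFDerivAt
  have h1 := hd'.comp_hasDerivAt (0:ℝ) hcu
  have h2 : HasDerivAt (fun t => w (cu t)) 0 0 := (hasDerivAt_const (0:ℝ) (w Y)).congr_of_eventuallyEq hcst
  have h3 := h1.unique h2
  rw [map_add, map_smul, smul_eq_mul] at h3
  have h4 : fderiv ℝ w Y ej = c / b * fderiv ℝ w Y eo := by
    have : -c / b = -(c / b) := by ring
    rw [this] at h3; linarith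
  rw [h4]; field_simp; ring

lemma rot_second {o : κ} {w : EuclideanSpace ℝ (Fin N ⊕ κ) → ℝ} (hw : RotInv o w)
    {x : EuclideanSpace ℝ κ} (hx : x ∈ HS o) (hc : ContDiffAt ℝ 2 w (emb N x)) (j : Fin N) :
    iteratedFDeriv ℝ 2 w (emb N x) ![EuclideanSpace.single (Sum.inl j) 1, EuclideanSpace.single (Sum.inl j) 1]
      = fderiv ℝ w (emb N x) (EuclideanSpace.single (Sum.inr o) 1) / x o := by
  have hx0 : 0 < x o := hx
  rw [iter2_eq hc]
  set ej : EuclideanSpace ℝ (Fin N ⊕ κ) := EuclideanSpace.single (Sum.inl j) 1 with hej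
  set eo : EuclideanSpace ℝ (Fin N ⊕ κ) := EuclideanSpace.single (Sum.inr o) 1 with heo
  set X := emb N x with hX
  have ev : (fun Y => fderiv ℝ w Y ej * Y (Sum.inr o) - Y (Sum.inl j) * fderiv ℝ w Y eo)
      =ᶠ[𝓝 X] fun _ => (0:ℝ) := by
    have hcont : Continuous fun Y : EuclideanSpace ℝ (Fin N ⊕ κ) => Y (Sum.inr o) :=
      (EuclideanSpace.proj (𝕜 := ℝ) (Sum.inr o)).continuous
    filter_upwards [cd_ev hc, hcont.continuousAt.eventually (lt_mem_nhds (show 0 < X (Sum.inr o) from hx0))]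
      with Y h1 h2
    exact rot_grad hw h2 h1 j
  have d1 := (cd_dir hc ej).hasFDerivAt
  have d2 := (cd_dir hc eo).hasFDerivAt
  have p1 : HasFDerivAt (fun Y : EuclideanSpace ℝ (Fin N ⊕ κ) => Y (Sum.inr o))
    (EuclideanSpace.proj (𝕜 := ℝ) (Sum.inr o) : EuclideanSpace ℝ (Fin N ⊕ κ) →L[ℝ] ℝ) X :=
    (EuclideanSpace.proj (𝕜 := ℝ) (Sum.inr o) : EuclideanSpace ℝ (Fin N ⊕ κ) →L[ℝ] ℝ).hasFDerivAt
  have p2 : HasFDerivAt (fun Y : EuclideanSpace ℝ (Fin N ⊕ κ) => Y (Sum.inl j))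
    (EuclideanSpace.proj (𝕜 := ℝ) (Sum.inl j) : EuclideanSpace ℝ (Fin N ⊕ κ) →L[ℝ] ℝ) X :=
    (EuclideanSpace.proj (𝕜 := ℝ) (Sum.inl j) : EuclideanSpace ℝ (Fin N ⊕ κ) →L[ℝ] ℝ).hasFDerivAt
  have h := (d1.mul p1).sub (p2.mul d2)
  have h0 : HasFDerivAt (fun Y => fderiv ℝ w Y ej * Y (Sum.inr o) - Y (Sum.inl j) * fderiv ℝ w Y eo)
    (0 : EuclideanSpace ℝ (Fin N ⊕ κ) →L[ℝ] ℝ) X := (hasFDerivAt_const (0:ℝ) X).congr_of_eventuallyEq ev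
  have h2 := congrArg (fun L => L ej) (h.unique h0)
  have q1 : (EuclideanSpace.proj (𝕜 := ℝ) (Sum.inr o) : EuclideanSpace ℝ (Fin N ⊕ κ) →L[ℝ] ℝ) ej = 0 := by
    change ej (Sum.inr o) = 0
    simp [hej]
  have q2 : (EuclideanSpace.proj (𝕜 := ℝ) (Sum.inl j) : EuclideanSpace ℝ (Fin N ⊕ κ) →L[ℝ] ℝ) ej = 1 := by
    change ej (Sum.inl j) = 1
    simp [hej]
  have q3 : X (Sum.inl j) = 0 := rfl
  have q4 : X (Sum.inr o) = x o := rfl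
  simp only [sub_apply, add_apply, smul_apply, smul_eq_mul, q1, q2, q3, q4,
    zero_apply] at h2
  rw [eq_div_iff hx0.ne']
  linarith

lemma emb_cd {m : WithTop ℕ∞} (x : EuclideanSpace ℝ κ) : ContDiffAt ℝ m (fun y => emb N y) x := by
  have : ContDiff ℝ m (fun y : EuclideanSpace ℝ κ => emb N y) := by fun_prop
  exact this.contDiffAt

lemma emb_HL {w : EuclideanSpace ℝ (Fin N ⊕ κ) → ℝ} {x : EuclideanSpace ℝ κ}
    (hc : ContDiffAt ℝ 2 w (emb N x)) :
    HL (fun y => w (emb N y)) x (fun i => fderiv ℝ w (emb N x) (EuclideanSpace.single (Sum.inr i) 1))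
      (∑ i, iteratedFDeriv ℝ 2 w (emb N x)
        ![EuclideanSpace.single (Sum.inr i) 1, EuclideanSpace.single (Sum.inr i) 1]) := by
  have hcd : ContDiffAt ℝ 2 (fun y => w (emb N y)) x :=
    ContDiffAt.comp x hc (emb_cd x)
  have hg : ∀ y, DifferentiableAt ℝ w (emb N y) → ∀ v, fderiv ℝ (fun y => w (emb N y)) y v
      = fderiv ℝ w (emb N y) (emb N v) := by
    intro y hy v
    have : HasFDerivAt (fun y => w (emb N y)) ((fderiv ℝ w (emb N y)).comp (emb N)) y :=
      hy.hasFDerivAt.comp y (emb N).hasFDerivAt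
    rw [this.fderiv]; rfl
  refine ⟨hcd, fun i => ?_, ?_⟩
  · rw [hg x (hc.differentiableAt (by norm_num)), emb_single]
  · unfold lapG
    refine Finset.sum_congr rfl fun i _ => ?_
    rw [iter2_eq hcd, iter2_eq hc]
    have ev : (fun y => fderiv ℝ (fun y => w (emb N y)) y (EuclideanSpace.single i 1))
        =ᶠ[𝓝 x] fun y => fderiv ℝ w (emb N y) (EuclideanSpace.single (Sum.inr i) 1) := by
      filter_upwards [(emb N).continuous.continuousAt.eventually (cd_ev hc)] with y hy
      rw [hg y hy, emb_single]
    rw [ev.fderiv_eq]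
    have : HasFDerivAt (fun y => fderiv ℝ w (emb N y) (EuclideanSpace.single (Sum.inr i) 1))
      ((fderiv ℝ (fun Y => fderiv ℝ w Y (EuclideanSpace.single (Sum.inr i) 1)) (emb N x)).comp (emb N)) x :=
      (cd_dir hc _).hasFDerivAt.comp x (emb N).hasFDerivAt
    rw [this.fderiv, ← emb_single]; rfl

lemma lap_lift {o : κ} {s : ℕ} {w : EuclideanSpace ℝ (Fin (2 * s) ⊕ κ) → ℝ} (hw : RotInv o w)
    {x : EuclideanSpace ℝ κ} (hx : x ∈ HS o) (hc : ContDiffAt ℝ 2 w (emb (2 * s) x)) :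
    ContDiffAt ℝ 2 (fun y => (y o) ^ s * w (emb (2 * s) y)) x ∧
    lapG (fun y => (y o) ^ s * w (emb (2 * s) y)) x =
      (x o) ^ s * lapG w (emb (2 * s) x) + (s * (s - 1)) / (x o) ^ 2 * ((x o) ^ s * w (emb (2 * s) x)) := by
  have hx0 : 0 < x o := hx
  have h1 := (HL.coord (x := x) o).rpow hx0 s
  have h2 := h1.mul (emb_HL hc)
  simp only [Real.rpow_natCast] at h2
  refine ⟨h2.cd, ?_⟩
  rw [h2.la]
  have s1 : ∑ i, (Pi.single o (1:ℝ) : κ → ℝ) i ^ 2 = 1 := by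
    rw [Finset.sum_eq_single o] <;> simp +contextual
  set D := fderiv ℝ w (emb (2 * s) x) (EuclideanSpace.single (Sum.inr o) 1) with hD
  have s2 : ∑ i, (s * x o ^ ((s : ℝ) - 1) * (Pi.single o (1:ℝ) : κ → ℝ) i) *
      fderiv ℝ w (emb (2 * s) x) (EuclideanSpace.single (Sum.inr i) 1) = s * x o ^ ((s : ℝ) - 1) * D := by
    rw [Finset.sum_eq_single o]
    · simp [hD]
    · intro i _ hi; simp [hi]
    · simp
  rw [s1, s2]
  have e : lapG w (emb (2 * s) x) = 2 * s * (D / x o) + ∑ i, iteratedFDeriv ℝ 2 w (emb (2 * s) x)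
        ![EuclideanSpace.single (Sum.inr i) 1, EuclideanSpace.single (Sum.inr i) 1] := by
    unfold lapG
    rw [Fintype.sum_sum_type]
    congr 1
    rw [Finset.sum_congr rfl fun j _ => rot_second hw hx hc j]
    simp [hD]
  rw [e]
  have e1 : x o ^ ((s:ℝ) - 1) = x o ^ s / x o := by
    rw [Real.rpow_sub_one hx0.ne', Real.rpow_natCast]
  have e2 : x o ^ ((s:ℝ) - 2) = x o ^ s / x o ^ 2 := by
    rw [Real.rpow_sub hx0, Real.rpow_natCast, Real.rpow_two]
  rw [e1, e2]
  field_simp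
  ring

end lifting


section lifting2
open MeasureTheory Metric Filter Topology
variable {κ : Type} [Fintype κ] [DecidableEq κ] {N : ℕ}

noncomputable def rad (o : κ) (Y : EuclideanSpace ℝ (Fin N ⊕ κ)) : ℝ :=
  Real.sqrt (∑ j, Y (Sum.inl j) ^ 2 + Y (Sum.inr o) ^ 2)

noncomputable def rho (o : κ) (Y : EuclideanSpace ℝ (Fin N ⊕ κ)) : EuclideanSpace ℝ κ :=
  WithLp.toLp 2 (fun i => if i = o then rad o Y else Y (Sum.inr i))

noncomputable def lft (s : ℕ) (o : κ) (h : EuclideanSpace ℝ κ → ℝ) (Y : EuclideanSpace ℝ (Fin N ⊕ κ)) : ℝ :=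
  ((rad o Y) ^ s)⁻¹ * h (rho o Y)

lemma rad_nonneg (o : κ) (Y : EuclideanSpace ℝ (Fin N ⊕ κ)) : 0 ≤ rad o Y := Real.sqrt_nonneg _

lemma rad_sq (o : κ) (Y : EuclideanSpace ℝ (Fin N ⊕ κ)) :
    rad o Y ^ 2 = ∑ j, Y (Sum.inl j) ^ 2 + Y (Sum.inr o) ^ 2 :=
  Real.sq_sqrt (by positivity)

lemma rho_o (o : κ) (Y : EuclideanSpace ℝ (Fin N ⊕ κ)) : rho o Y o = rad o Y := by simp [rho]

lemma rho_ne (o : κ) (Y : EuclideanSpace ℝ (Fin N ⊕ κ)) {i : κ} (hi : i ≠ o) :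
    rho o Y i = Y (Sum.inr i) := by simp [rho, hi]

lemma rad_sq' (o : κ) (Y : EuclideanSpace ℝ (Fin N ⊕ κ)) :
    rad o Y ^ 2 = ‖Y‖ ^ 2 - ∑ i ∈ Finset.univ.erase o, Y (Sum.inr i) ^ 2 := by
  rw [rad_sq, nsq, ← Finset.add_sum_erase _ _ (Finset.mem_univ o)]; ring

lemma norm_rho (o : κ) (Y : EuclideanSpace ℝ (Fin N ⊕ κ)) : ‖rho o Y‖ ^ 2 = ‖Y‖ ^ 2 := by
  rw [EuclideanSpace.norm_sq_eq, ← Finset.add_sum_erase _ _ (Finset.mem_univ o), rho_o]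
  have := rad_sq' o Y
  simp only [Real.norm_eq_abs, sq_abs]
  have e : ∑ i ∈ Finset.univ.erase o, rho o Y i ^ 2 = ∑ i ∈ Finset.univ.erase o, Y (Sum.inr i) ^ 2 :=
    Finset.sum_congr rfl fun i hi => by rw [rho_ne o Y (Finset.ne_of_mem_erase hi)]
  rw [this, e]
  ring

lemma rho_inv {o : κ} {Y Y' : EuclideanSpace ℝ (Fin N ⊕ κ)}
    (h : ∀ i, i ≠ o → Y (Sum.inr i) = Y' (Sum.inr i)) (hn : ‖Y‖ = ‖Y'‖) : rho o Y = rho o Y' := by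
  have e : rad o Y = rad o Y' := by
    have : rad o Y ^ 2 = rad o Y' ^ 2 := by
      rw [rad_sq', rad_sq', hn]
      congr 1
      exact Finset.sum_congr rfl fun i hi => by rw [h i (Finset.ne_of_mem_erase hi)]
    exact (sq_eq_sq₀ (rad_nonneg _ _) (rad_nonneg _ _)).mp this
  ext i
  by_cases hi : i = o
  · subst hi; rw [rho_o, rho_o, e]
  · rw [rho_ne _ _ hi, rho_ne _ _ hi, h i hi]

lemma rad_emb {o : κ} {x : EuclideanSpace ℝ κ} (hx : x ∈ HS o) : rad o (emb N x) = x o := by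
  unfold rad
  simp only [emb_inl, emb_inr]
  simp [Real.sqrt_sq (show 0 ≤ x o from (show 0 < x o from hx).le)]

lemma rho_emb {o : κ} {x : EuclideanSpace ℝ κ} (hx : x ∈ HS o) : rho o (emb N x) = x := by
  ext i
  by_cases hi : i = o
  · subst hi; rw [rho_o, rad_emb hx]
  · rw [rho_ne _ _ hi]; rfl

lemma norm_emb (x : EuclideanSpace ℝ κ) : ‖emb N x‖ = ‖x‖ := by
  have : ‖emb N x‖ ^ 2 = ‖x‖ ^ 2 := by
    rw [nsq, EuclideanSpace.norm_sq_eq]; simp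
  exact (sq_eq_sq₀ (norm_nonneg _) (norm_nonneg _)).mp this

lemma rad_cont (o : κ) : Continuous (rad (N := N) o) := by
  unfold rad; fun_prop

lemma rho_cont (o : κ) : Continuous (rho (N := N) o) := by
  unfold rho
  refine (PiLp.continuous_toLp 2 _).comp (continuous_pi fun i => ?_)
  by_cases hi : i = o
  · simpa [hi] using rad_cont o
  · simp only [hi, if_false]; fun_prop

lemma rad_cd {o : κ} {Y : EuclideanSpace ℝ (Fin N ⊕ κ)} (hY : 0 < rad o Y) :
    ContDiffAt ℝ 1 (rad o) Y := by
  have h2 := rad_sq o Y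
  have hne : ∑ j, Y (Sum.inl j) ^ 2 + Y (Sum.inr o) ^ 2 ≠ 0 := by
    rw [← h2]; positivity
  unfold rad
  have h : ContDiffAt ℝ 1 (fun Y : EuclideanSpace ℝ (Fin N ⊕ κ) =>
      ∑ j, Y (Sum.inl j) ^ 2 + Y (Sum.inr o) ^ 2) Y := by
    fun_prop
  exact h.sqrt hne

lemma rho_cd {o : κ} {Y : EuclideanSpace ℝ (Fin N ⊕ κ)} (hY : 0 < rad o Y) :
    ContDiffAt ℝ 1 (rho o) Y := by
  rw [contDiffAt_euclidean]
  intro i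
  by_cases hi : i = o
  · subst hi
    simp only [rho_o]
    exact rad_cd hY
  · simp only [rho_ne _ _ hi]
    fun_prop

lemma lft_cd {s : ℕ} {o : κ} {h : EuclideanSpace ℝ κ → ℝ} (hh : ContDiffOn ℝ 1 h (HS o))
    {Y : EuclideanSpace ℝ (Fin N ⊕ κ)} (hY : 0 < rad o Y) : ContDiffAt ℝ 1 (lft s o h) Y := by
  unfold lft
  refine ContDiffAt.mul (((rad_cd hY).pow s).inv (by positivity)) ?_
  refine ContDiffAt.comp Y (g := h) (hh.contDiffAt ((HS_open o).mem_nhds ?_)) (rho_cd hY)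
  change 0 < rho o Y o
  rw [rho_o]; exact hY

lemma lft_sm {s : ℕ} {o : κ} {h : EuclideanSpace ℝ κ → ℝ} (hh : StronglyMeasurable h) :
    StronglyMeasurable (lft (N := N) s o h) := by
  unfold lft
  exact (((rad_cont o).measurable.pow_const s).inv.stronglyMeasurable).mul
    (hh.comp_measurable (rho_cont o).measurable)

lemma lft_emb {s : ℕ} {o : κ} {h : EuclideanSpace ℝ κ → ℝ} {x : EuclideanSpace ℝ κ} (hx : x ∈ HS o) :
    lft s o h (emb N x) = ((x o) ^ s)⁻¹ * h x := by
  unfold lft; rw [rad_emb hx, rho_emb hx]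

lemma Nw_inv {ι : Type} [Fintype ι] [DecidableEq ι] (R : EuclideanSpace ℝ ι ≃ₗᵢ[ℝ] EuclideanSpace ℝ ι)
    {g : EuclideanSpace ℝ ι → ℝ} (hg : ∀ y, g (R y) = g y) (x : EuclideanSpace ℝ ι) :
    Nw g (R x) = Nw g x := by
  unfold Nw
  rw [← (R.measurePreserving).integral_comp R.toHomeomorph.measurableEmbedding]
  refine integral_congr_ae (Eventually.of_forall fun y => ?_)
  simp only [hg]
  rw [← map_sub]
  unfold kap
  rw [R.norm_map]

lemma Nw_rot {s : ℕ} {o : κ} (h : EuclideanSpace ℝ κ → ℝ) : RotInv (N := N) o (Nw (lft s o h)) := by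
  intro Y Y' he hn
  set R := (ℝ ∙ (Y - Y'))ᗮ.reflection with hR
  have h1 : R Y = Y' := Submodule.reflection_sub hn
  rw [← h1]
  symm
  refine Nw_inv R (fun Z => ?_) Y
  have e : rho o (R Z) = rho o Z := by
    refine rho_inv (fun i hi => ?_) (R.norm_map Z)
    have h2 : ∃ c : ℝ, R Z = Z - c • (Y - Y') := by
      have h3 : R Z = -((ℝ ∙ (Y - Y')).reflection Z) := by
        rw [hR, Submodule.reflection_orthogonal]; rfl
      have h4 := Submodule.reflection_apply (K := (ℝ ∙ (Y - Y'))) Z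
      have h5 : (ℝ ∙ (Y - Y')).starProjection Z ∈ (ℝ ∙ (Y - Y')) := Submodule.starProjection_apply_mem _ _
      obtain ⟨c, hc⟩ := Submodule.mem_span_singleton.mp h5
      refine ⟨2 * c, ?_⟩
      rw [h3, h4, ← hc, two_smul, mul_smul, two_smul]
      abel
    obtain ⟨c, hc⟩ := h2
    rw [hc]
    simp [he i hi]
  unfold lft
  have e2 : rad o (R Z) = rad o Z := by rw [← rho_o, ← rho_o, e]
  rw [e, e2]

end lifting2


section green
open MeasureTheory Metric Filter Topology
variable {κ : Type} [Fintype κ] [DecidableEq κ]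

/-- parameter requirements -/
structure Par (κ : Type) [Fintype κ] (a : ℝ) (s : ℕ) : Prop where
  ha : 0 < a
  hs : 1 ≤ s
  hsa : a ≤ s
  hk : (a + 2) * (a + 3) + 2 * Fintype.card κ ≤ (s : ℝ) * (s - 1)
  hc : 2 ≤ Fintype.card κ

variable {a : ℝ} {s : ℕ} {o : κ}

lemma Par.hM (P : Par κ a s) : 3 ≤ Fintype.card (Fin (2 * s) ⊕ κ) := by
  have := P.hs; have := P.hc
  simp; omega

lemma Par.gam (P : Par κ a s) : 2 * gam (Fin (2 * s) ⊕ κ) ≤ -a - s := by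
  unfold _root_.gam
  have h1 := P.hsa
  have h2 : (2 : ℝ) ≤ Fintype.card κ := by exact_mod_cast P.hc
  simp; linarith

noncomputable def GG (s : ℕ) (o : κ) (h : EuclideanSpace ℝ κ → ℝ) (x : EuclideanSpace ℝ κ) : ℝ :=
  (omg (Fin (2 * s) ⊕ κ))⁻¹ * ((x o) ^ s * Nw (lft s o h) (emb (2 * s) x))

/-- integrability at a point -/
def KI (s : ℕ) (o : κ) (h : EuclideanSpace ℝ κ → ℝ) (x : EuclideanSpace ℝ κ) : Prop :=
  Integrable fun Y => kap 0 (gam (Fin (2 * s) ⊕ κ)) (emb (2 * s) x - Y) * lft s o h Y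

lemma HS_nhd {x : EuclideanSpace ℝ κ} (hx : x ∈ HS o) : ∃ r > 0,
    ∀ Y ∈ ball (emb (2 * s) x) r, x o / 2 < rad o Y := by
  have hx0 : 0 < x o := hx
  have h1 : ∀ᶠ Y in 𝓝 (emb (2 * s) x), x o / 2 < rad o Y :=
    (rad_cont o).continuousAt.eventually (lt_mem_nhds (by rw [rad_emb hx]; linarith))
  obtain ⟨r, hr, h⟩ := Metric.eventually_nhds_iff_ball.mp h1
  exact ⟨r, hr, h⟩

lemma GG_C2 (P : Par κ a s) {h : EuclideanSpace ℝ κ → ℝ} (hm : StronglyMeasurable h)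
    (hd : ContDiffOn ℝ 1 h (HS o)) {x : EuclideanSpace ℝ κ} (hx : x ∈ HS o) (hi : KI s o h x) :
    ContDiffAt ℝ 2 (GG s o h) x ∧
      lapG (GG s o h) x = (s * (s - 1)) / (x o) ^ 2 * GG s o h x - h x := by
  have hx0 : 0 < x o := hx
  obtain ⟨r, hr, hr2⟩ := HS_nhd (s := s) hx
  have hd' : ContDiffOn ℝ 1 (lft s o h) (ball (emb (2 * s) x) r) := fun Y hY =>
    (lft_cd hd (lt_trans (by positivity) (hr2 Y hY))).contDiffWithinAt
  obtain ⟨c1, c2⟩ := Nw_C2 P.hM hr (lft_sm hm) hd' hi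
  obtain ⟨c3, c4⟩ := lap_lift (Nw_rot h) hx c1
  have c5 := (HL.of_cd c3).const_mul (omg (Fin (2 * s) ⊕ κ))⁻¹
  refine ⟨c5.cd, ?_⟩
  have hw := omg_pos P.hM
  have : lapG (GG s o h) x = _ := c5.la
  rw [this, c4, c2, lft_emb hx]
  unfold GG
  field_simp
  ring

lemma GG_C1 (P : Par κ a s) {h : EuclideanSpace ℝ κ → ℝ} (hm : StronglyMeasurable h) {C : ℝ} (hC : 0 ≤ C)
    (hb : ∀ x ∈ HS o, |h x| ≤ C * (x o) ^ (-a - 2)) {x : EuclideanSpace ℝ κ} (hx : x ∈ HS o) (hi : KI s o h x) :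
    ContDiffAt ℝ 1 (GG s o h) x := by
  have hx0 : 0 < x o := hx
  obtain ⟨r, hr, hr2⟩ := HS_nhd (s := s) hx
  have hbd : ∀ Y ∈ ball (emb (2 * s) x) (2 * (r / 2)),
      ‖lft s o h Y‖ ≤ ((x o / 2) ^ s)⁻¹ * (C * (x o / 2) ^ (-a - 2)) := by
    intro Y hY
    have h1 := hr2 Y (by convert hY using 2; ring)
    have hH : rho o Y ∈ HS o := by
      change 0 < rho o Y o; rw [rho_o]; linarith
    have h2 := hb _ hH
    rw [rho_o] at h2
    unfold lft
    rw [norm_mul, Real.norm_of_nonneg (by have := rad_nonneg o Y; positivity), Real.norm_eq_abs]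
    have h3 : rad o Y ^ (-a - 2) ≤ (x o / 2) ^ (-a - 2) :=
      Real.rpow_le_rpow_of_nonpos (by positivity) h1.le (by have := P.ha; linarith)
    gcongr ?_ * ?_
    · gcongr
    · exact h2.trans (by gcongr)
  have h1 := Nw_C1 P.hM (show 0 < r / 2 by linarith) (lft_sm hm) hbd hi
  unfold GG
  refine contDiffAt_const.mul (ContDiffAt.mul ?_ (ContDiffAt.comp x (g := Nw (lft s o h)) h1 (emb_cd x)))
  fun_prop

lemma GG_cpt_bound (P : Par κ a s) {h : EuclideanSpace ℝ κ → ℝ} (hm : StronglyMeasurable h) {C R : ℝ}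
    (hC : ∀ Y : EuclideanSpace ℝ (Fin (2 * s) ⊕ κ), ‖lft s o h Y‖ ≤ C)
    (hR : ∀ Y : EuclideanSpace ℝ (Fin (2 * s) ⊕ κ), R ≤ ‖Y‖ → lft s o h Y = 0) :
    ∃ D : ℝ, ∀ x ∈ HS o, |GG s o h x| ≤ D * (x o) ^ (-a) := by
  obtain ⟨B, hB, b1, b2⟩ := Nw_decay P.hM (lft_sm hm) hC hR
  have hw := omg_pos P.hM
  refine ⟨(omg (Fin (2 * s) ⊕ κ))⁻¹ * B, fun x hx => ?_⟩
  have hx0 : 0 < x o := hx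
  unfold GG
  rw [abs_mul, abs_mul, abs_of_pos (inv_pos.mpr hw), abs_of_pos (pow_pos hx0 s), mul_assoc]
  refine mul_le_mul_of_nonneg_left ?_ (inv_pos.mpr hw).le
  rcases le_total (x o) 1 with h1 | h1
  · have h2 : x o ^ s ≤ x o ^ (-a) := by
      rw [← Real.rpow_natCast]
      refine Real.rpow_le_rpow_of_exponent_ge hx0 h1 ?_
      have := P.ha; have : (0:ℝ) ≤ s := by positivity
      linarith
    rw [mul_comm]
    exact mul_le_mul (b1 _) h2 (by positivity) hB
  · have hn : x o ≤ ‖emb (2 * s) x‖ := by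
      rw [norm_emb]
      exact le_of_sq_le_sq (sq_le_norm o x) (norm_nonneg _)
    have hne : emb (2 * s) x ≠ 0 := norm_pos_iff.mp (by linarith)
    have hg := P.gam
    have h3 : ‖emb (2 * s) x‖ ^ (2 * gam (Fin (2 * s) ⊕ κ)) ≤ (x o) ^ (-a - s) := by
      calc _ ≤ (x o) ^ (2 * gam (Fin (2 * s) ⊕ κ)) :=
            Real.rpow_le_rpow_of_nonpos hx0 hn (by have := gam_neg P.hM; linarith)
        _ ≤ _ := Real.rpow_le_rpow_of_exponent_le h1 hg
    calc x o ^ s * |Nw (lft s o h) (emb (2 * s) x)|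
        ≤ x o ^ s * (B * (x o) ^ (-a - s)) := by
          gcongr; exact (b2 _ hne).trans (by gcongr)
      _ = B * (x o) ^ (-a) := by
          rw [← Real.rpow_natCast, mul_left_comm, ← Real.rpow_add hx0]; congr 2; ring

/-- truncations -/
noncomputable def trc (a : ℝ) (o : κ) (j : ℕ) (x : EuclideanSpace ℝ κ) : ℝ :=
  Real.smoothTransition (2 - psi o x / (j + 1)) * (x o) ^ (-a - 2)

noncomputable def dom (a : ℝ) (o : κ) (x : EuclideanSpace ℝ κ) : ℝ := (x o) ^ (-a - 2)

lemma psi_meas : Measurable (psi o) := by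
  unfold psi; fun_prop

lemma dom_sm : StronglyMeasurable (dom a o) := by
  unfold dom
  exact Measurable.stronglyMeasurable (by fun_prop)

lemma trc_sm (j : ℕ) : StronglyMeasurable (trc a o j) := by
  unfold trc
  refine Measurable.stronglyMeasurable (Measurable.mul ?_ (by fun_prop))
  exact Real.smoothTransition.continuous.measurable.comp ((psi_meas.div_const _).const_sub _)

lemma psi_cd : ContDiffOn ℝ 1 (psi o) (HS o) := by
  intro x hx
  have hx0 : 0 < x o := hx
  unfold psi
  refine (ContDiffAt.add ?_ (contDiff_norm_sq ℝ).contDiffAt).contDiffWithinAt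
  have : ContDiffAt ℝ 1 (fun x : EuclideanSpace ℝ κ => x o) x := by fun_prop
  exact this.rpow_const_of_ne hx0.ne'

lemma trc_cd (j : ℕ) : ContDiffOn ℝ 1 (trc a o j) (HS o) := by
  unfold trc
  refine ContDiffOn.mul ?_ ?_
  · exact Real.smoothTransition.contDiff.comp_contDiffOn
      (contDiffOn_const.sub (psi_cd.div_const _))
  · intro x hx
    have hx0 : 0 < x o := hx
    have : ContDiffAt ℝ 1 (fun x : EuclideanSpace ℝ κ => x o) x := by fun_prop
    exact (this.rpow_const_of_ne hx0.ne').contDiffWithinAt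

lemma trc_nonneg (j : ℕ) {x : EuclideanSpace ℝ κ} (hx : 0 ≤ x o) : 0 ≤ trc a o j x :=
  mul_nonneg (Real.smoothTransition.nonneg _) (by positivity)

lemma trc_le (j : ℕ) {x : EuclideanSpace ℝ κ} (hx : 0 ≤ x o) : trc a o j x ≤ dom a o x :=
  mul_le_of_le_one_left (by positivity) (Real.smoothTransition.le_one _)

lemma lft_trc_bdd (P : Par κ a s) (j : ℕ) (Y : EuclideanSpace ℝ (Fin (2 * s) ⊕ κ)) :
    ‖lft s o (trc a o j) Y‖ ≤ (2 * ((j:ℝ) + 1)) ^ (((s:ℝ) + a + 2) / 2) ∧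
    (Real.sqrt (2 * ((j:ℝ) + 1)) ≤ ‖Y‖ → lft s o (trc a o j) Y = 0) := by
  have hj : (0:ℝ) < 2 * ((j:ℝ) + 1) := by positivity
  by_cases h0 : lft s o (trc a o j) Y = 0
  · rw [h0]; exact ⟨by simp; positivity, fun _ => rfl⟩
  have hr : 0 < rad o Y := by
    rcases (rad_nonneg o Y).eq_or_lt with h | h
    · exfalso; apply h0; unfold lft; rw [← h, zero_pow (by have := P.hs; omega)]; simp
    · exact h
  have hps : psi o (rho o Y) < 2 * ((j:ℝ) + 1) := by
    by_contra hc
    push Not at hc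
    apply h0
    unfold lft trc
    rw [Real.smoothTransition.zero_of_nonpos]
    · simp
    · rw [sub_nonpos, le_div_iff₀ (by positivity)]; exact hc
  unfold psi at hps
  rw [rho_o, norm_rho] at hps
  have q1 : rad o Y ^ (-2:ℝ) ≤ 2 * ((j:ℝ) + 1) := by nlinarith [sq_nonneg ‖Y‖]
  have q2 : ‖Y‖ ^ 2 < 2 * ((j:ℝ) + 1) := by
    have : 0 < rad o Y ^ (-2:ℝ) := by positivity
    linarith
  constructor
  · unfold lft
    rw [norm_mul, Real.norm_of_nonneg (by positivity), Real.norm_of_nonneg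
      (trc_nonneg _ (by rw [rho_o]; exact hr.le))]
    have h1 := trc_le (a := a) (o := o) j (x := rho o Y) (by rw [rho_o]; exact hr.le)
    unfold dom at h1
    rw [rho_o] at h1
    calc (rad o Y ^ s)⁻¹ * trc a o j (rho o Y) ≤ (rad o Y ^ s)⁻¹ * rad o Y ^ (-a - 2) := by gcongr
      _ = (rad o Y ^ (-2:ℝ)) ^ (((s:ℝ) + a + 2) / 2) := by
        rw [← Real.rpow_natCast, ← Real.rpow_neg hr.le, ← Real.rpow_add hr, ← Real.rpow_mul hr.le]
        congr 1; ring
      _ ≤ _ := by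
        have := P.ha
        gcongr
  · intro h
    exfalso
    have := (Real.sqrt_le_left (norm_nonneg _)).mp h
    linarith

lemma KI_trc (P : Par κ a s) (j : ℕ) (x : EuclideanSpace ℝ κ) : KI s o (trc a o j) x :=
  near_int P.hM (lft_sm (trc_sm j)) (fun Y => (lft_trc_bdd P j Y).1) (fun Y => (lft_trc_bdd P j Y).2) _

lemma GG_trc_le (P : Par κ a s) (j : ℕ) {x : EuclideanSpace ℝ κ} (hx : x ∈ HS o) :
    GG s o (trc a o j) x ≤ (x o) ^ (-a) := by
  obtain ⟨D, hD⟩ := GG_cpt_bound P (trc_sm (a := a) (o := o) j) (fun Y => (lft_trc_bdd P j Y).1)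
    (fun Y => (lft_trc_bdd P j Y).2)
  have key := mp2 o (C := D) P.ha P.hk (z := fun x => (x o) ^ (-a) - GG s o (trc a o j) x) ?_ ?_ ?_ x hx
  · linarith
  · intro x hx
    exact ((HL.coord (x := x) o).rpow hx (-a)).cd.sub (GG_C2 P (trc_sm j) (trc_cd j) hx (KI_trc P j x)).1
  · intro x hx
    have hx0 : 0 < x o := hx
    obtain ⟨g1, g2⟩ := GG_C2 P (trc_sm j) (trc_cd j) hx (KI_trc P j x)
    have h := (((HL.coord (x := x) o).rpow hx (-a)).sub (HL.of_cd g1)).la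
    rw [h, g2]
    have s1 : ∑ i, (Pi.single o (1:ℝ) : κ → ℝ) i ^ 2 = 1 := by
      rw [Finset.sum_eq_single o] <;> simp +contextual
    rw [s1]
    have h3 := trc_le (a := a) (o := o) j (x := x) hx0.le
    unfold dom at h3
    have e1 : x o ^ (-a - 2) = x o ^ (-a) / x o ^ 2 := by
      rw [Real.rpow_sub hx0, Real.rpow_two]
    have hk : a * (a + 1) + 1 ≤ (s:ℝ) * (s - 1) := by
      have := P.hk; have := P.ha
      have : (0:ℝ) ≤ Fintype.card κ := by positivity
      nlinarith
    have h5 : (a * (a + 1) + 1) * x o ^ (-a - 2) ≤ ((s:ℝ) * (s - 1)) * x o ^ (-a - 2) := by gcongr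
    have e2 : ((s:ℝ) * (s - 1)) / x o ^ 2 * (x o ^ (-a) - GG s o (trc a o j) x)
      = ((s:ℝ) * (s - 1)) * x o ^ (-a - 2) - ((s:ℝ) * (s - 1)) / x o ^ 2 * GG s o (trc a o j) x := by
      rw [e1]; ring
    rw [e2]
    nlinarith
  · intro x hx
    have hx0 : 0 < x o := hx
    have h1 := (abs_le.mp (hD x hx)).2
    have : 0 < x o ^ (-a) := by positivity
    simp only
    linarith

lemma dom_main (P : Par κ a s) {x : EuclideanSpace ℝ κ} (hx : x ∈ HS o) :
    KI s o (dom a o) x ∧ GG s o (dom a o) x ≤ (x o) ^ (-a) := by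
  have hx0 : 0 < x o := hx
  have hw := omg_pos P.hM
  set K : EuclideanSpace ℝ (Fin (2 * s) ⊕ κ) → ℝ := fun Y => kap 0 (gam (Fin (2 * s) ⊕ κ)) (emb (2 * s) x - Y)
    with hK
  have hKm : Measurable K := kap_sm.measurable.comp (measurable_const.sub measurable_id)
  have hK0 : ∀ Y, 0 ≤ K Y := fun Y => kap_nonneg le_rfl _
  set D := omg (Fin (2 * s) ⊕ κ) * ((x o) ^ (-a) / (x o) ^ s) with hD
  have hD0 : 0 ≤ D := by positivity
  have hro : ∀ Y : EuclideanSpace ℝ (Fin (2 * s) ⊕ κ), 0 ≤ rho o Y o := fun Y => by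
    rw [rho_o]; exact rad_nonneg _ _
  have fnn : ∀ j Y, 0 ≤ K Y * lft s o (trc a o j) Y := fun j Y =>
    mul_nonneg (hK0 Y) (mul_nonneg (by have := rad_nonneg o Y; positivity) (trc_nonneg j (hro Y)))
  have f0nn : ∀ Y, 0 ≤ K Y * lft s o (dom a o) Y := fun Y =>
    mul_nonneg (hK0 Y) (mul_nonneg (by have := rad_nonneg o Y; positivity)
      (by unfold dom; have := hro Y; positivity))
  have fint : ∀ j, ∫ Y, K Y * lft s o (trc a o j) Y ≤ D := by
    intro j
    have h1 := GG_trc_le P j hx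
    have h2 : GG s o (trc a o j) x = (omg (Fin (2 * s) ⊕ κ))⁻¹ * ((x o) ^ s *
      ∫ Y, K Y * lft s o (trc a o j) Y) := rfl
    rw [h2, inv_mul_le_iff₀ hw] at h1
    rw [hD, ← mul_div_assoc, le_div_iff₀ (by positivity), mul_comm]
    exact h1
  have hmeas : ∀ j, Measurable fun Y => K Y * lft s o (trc a o j) Y := fun j =>
    hKm.mul (lft_sm (trc_sm j)).measurable
  have hmeas0 : Measurable fun Y => K Y * lft s o (dom a o) Y :=
    hKm.mul (lft_sm dom_sm).measurable
  have hlim : ∀ Y, Tendsto (fun j => ENNReal.ofReal (K Y * lft s o (trc a o j) Y)) atTop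
      (𝓝 (ENNReal.ofReal (K Y * lft s o (dom a o) Y))) := by
    intro Y
    refine tendsto_const_nhds.congr' ?_
    filter_upwards [eventually_ge_atTop ⌈psi o (rho o Y)⌉₊] with j hj
    have : psi o (rho o Y) ≤ j + 1 := by
      have := Nat.ceil_le.mp hj; linarith
    have h1 : trc a o j (rho o Y) = dom a o (rho o Y) := by
      unfold trc dom
      rw [Real.smoothTransition.one_of_one_le, one_mul]
      have : psi o (rho o Y) / (j + 1) ≤ 1 := by rw [div_le_one (by positivity)]; exact this
      linarith
    unfold lft
    rw [h1]
  have hle : ∫⁻ Y, ENNReal.ofReal (K Y * lft s o (dom a o) Y) ≤ ENNReal.ofReal D := by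
    calc _ = ∫⁻ Y, liminf (fun j => ENNReal.ofReal (K Y * lft s o (trc a o j) Y)) atTop :=
          lintegral_congr fun Y => ((hlim Y).liminf_eq).symm
      _ ≤ liminf (fun j => ∫⁻ Y, ENNReal.ofReal (K Y * lft s o (trc a o j) Y)) atTop :=
          lintegral_liminf_le fun j => (hmeas j).ennreal_ofReal
      _ ≤ liminf (fun _ : ℕ => ENNReal.ofReal D) atTop := by
          refine liminf_le_liminf (Eventually.of_forall fun j => ?_)
          rw [← ofReal_integral_eq_lintegral_ofReal (KI_trc P j x) (Eventually.of_forall (fnn j))]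
          exact ENNReal.ofReal_le_ofReal (fint j)
      _ = ENNReal.ofReal D := by simp
  have hI : Integrable fun Y => K Y * lft s o (dom a o) Y := by
    refine ⟨hmeas0.aestronglyMeasurable, ?_⟩
    rw [hasFiniteIntegral_iff_ofReal (Eventually.of_forall f0nn)]
    exact lt_of_le_of_lt hle ENNReal.ofReal_lt_top
  refine ⟨hI, ?_⟩
  have h2 : ∫ Y, K Y * lft s o (dom a o) Y ≤ D := by
    rw [← ofReal_integral_eq_lintegral_ofReal hI (Eventually.of_forall f0nn)] at hle
    exact (ENNReal.ofReal_le_ofReal_iff hD0).mp hle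
  have h3 : GG s o (dom a o) x = (omg (Fin (2 * s) ⊕ κ))⁻¹ * ((x o) ^ s *
      ∫ Y, K Y * lft s o (dom a o) Y) := rfl
  rw [h3, inv_mul_le_iff₀ hw]
  rw [hD, ← mul_div_assoc, le_div_iff₀ (by positivity), mul_comm] at h2
  exact h2

/-- admissible densities -/
structure Adm (a : ℝ) (o : κ) (C : ℝ) (h : EuclideanSpace ℝ κ → ℝ) : Prop where
  sm : StronglyMeasurable h
  hC : 0 ≤ C
  bd : ∀ x ∈ HS o, |h x| ≤ C * (x o) ^ (-a - 2)

lemma lft_le (P : Par κ a s) {C : ℝ} {h : EuclideanSpace ℝ κ → ℝ} (A : Adm a o C h)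
    (Y : EuclideanSpace ℝ (Fin (2 * s) ⊕ κ)) : |lft s o h Y| ≤ C * lft s o (dom a o) Y := by
  unfold lft dom
  rw [rho_o]
  rcases (rad_nonneg o Y).eq_or_lt with h0 | h0
  · rw [← h0, zero_pow (by have := P.hs; omega)]; simp
  · have h1 := A.bd (rho o Y) (by change 0 < rho o Y o; rwa [rho_o])
    rw [rho_o] at h1
    rw [abs_mul, abs_of_pos (by positivity), mul_left_comm]
    gcongr

lemma Adm.KI (P : Par κ a s) {C : ℝ} {h : EuclideanSpace ℝ κ → ℝ} (A : Adm a o C h)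
    {x : EuclideanSpace ℝ κ} (hx : x ∈ HS o) : KI s o h x := by
  refine Integrable.mono' ((dom_main P hx).1.const_mul C) ?_ (Eventually.of_forall fun Y => ?_)
  · exact ((kap_sm.measurable.comp (measurable_const.sub measurable_id)).mul
      (lft_sm A.sm).measurable).aestronglyMeasurable
  · have h1 := lft_le P A Y
    rw [norm_mul, Real.norm_of_nonneg (kap_nonneg le_rfl _), mul_left_comm]
    exact mul_le_mul_of_nonneg_left h1 (kap_nonneg le_rfl _)

lemma GG_mono (P : Par κ a s) {C C' : ℝ} {h h' : EuclideanSpace ℝ κ → ℝ} (A : Adm a o C h)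
    (A' : Adm a o C' h') (hle : ∀ x ∈ HS o, h x ≤ h' x)
    {x : EuclideanSpace ℝ κ} (hx : x ∈ HS o) : GG s o h x ≤ GG s o h' x := by
  have hw := omg_pos P.hM
  have hx0 : 0 < x o := hx
  unfold GG Nw
  gcongr ?_ * (?_ * ?_)
  refine integral_mono (A.KI P hx) (A'.KI P hx) fun Y => ?_
  refine mul_le_mul_of_nonneg_left ?_ (kap_nonneg le_rfl _)
  unfold lft
  rcases (rad_nonneg o Y).eq_or_lt with h0 | h0
  · rw [← h0, zero_pow (by have := P.hs; omega)]; simp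
  · gcongr
    exact hle _ (by change 0 < rho o Y o; rwa [rho_o])

lemma GG_bound (P : Par κ a s) {C : ℝ} {h : EuclideanSpace ℝ κ → ℝ} (A : Adm a o C h)
    {x : EuclideanSpace ℝ κ} (hx : x ∈ HS o) : |GG s o h x| ≤ C * (x o) ^ (-a) := by
  have hw := omg_pos P.hM
  have hx0 : 0 < x o := hx
  have h1 := (dom_main P hx).2
  refine le_trans ?_ (mul_le_mul_of_nonneg_left h1 A.hC)
  unfold GG Nw
  rw [abs_mul, abs_mul, abs_of_pos (inv_pos.mpr hw), abs_of_pos (pow_pos hx0 s), mul_left_comm C,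
    mul_left_comm C]
  gcongr ?_ * (?_ * ?_)
  rw [← integral_const_mul, ← Real.norm_eq_abs]
  refine norm_integral_le_of_norm_le ((dom_main P hx).1.const_mul C) (Eventually.of_forall fun Y => ?_)
  have h1 := lft_le P A Y
  rw [norm_smul, Real.norm_of_nonneg (kap_nonneg le_rfl _), smul_eq_mul, mul_left_comm]
  exact mul_le_mul_of_nonneg_left h1 (kap_nonneg le_rfl _)

lemma GG_tendsto (P : Par κ a s) {C : ℝ} {h : ℕ → EuclideanSpace ℝ κ → ℝ} {h' : EuclideanSpace ℝ κ → ℝ}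
    (A : ∀ j, Adm a o C (h j))
    (hl : ∀ x ∈ HS o, Tendsto (fun j => h j x) atTop (𝓝 (h' x)))
    {x : EuclideanSpace ℝ κ} (hx : x ∈ HS o) :
    Tendsto (fun j => GG s o (h j) x) atTop (𝓝 (GG s o h' x)) := by
  unfold GG Nw
  refine Tendsto.const_mul _ (Tendsto.const_mul _ ?_)
  refine tendsto_integral_of_dominated_convergence _ (fun j => ((A j).KI P hx).aestronglyMeasurable)
    ((dom_main P hx).1.const_mul C) (fun j => Eventually.of_forall fun Y => ?_)
    (Eventually.of_forall fun Y => ?_)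
  · have h1 := lft_le P (A j) Y
    rw [norm_smul, Real.norm_of_nonneg (kap_nonneg le_rfl _), mul_left_comm]
    exact mul_le_mul_of_nonneg_left h1 (kap_nonneg le_rfl _)
  · refine Tendsto.const_smul ?_ _
    unfold lft
    rcases (rad_nonneg o Y).eq_or_lt with h0 | h0
    · rw [← h0, zero_pow (by have := P.hs; omega)]; simp
    · refine Tendsto.const_mul _ (hl _ ?_)
      change 0 < rho o Y o; rwa [rho_o]

end green


section explicit
open Metric Filter Topology
variable {κ : Type} [Fintype κ] [DecidableEq κ] {o : κ}

lemma TQ_HL {Q : EuclideanSpace ℝ κ → ℝ} {x : EuclideanSpace ℝ κ} {g : κ → ℝ} {l : ℝ} (hQ : HL Q x g l)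
    (hx : x ∈ HS o) (hq : 0 < Q x) (e γ : ℝ) :
    ContDiffAt ℝ 2 (fun y => (y o) ^ e * Q y ^ γ) x ∧
    lapG (fun y => (y o) ^ e * Q y ^ γ) x =
      (x o) ^ e * (γ * Q x ^ (γ - 1) * l + γ * (γ - 1) * Q x ^ (γ - 2) * ∑ i, g i ^ 2)
      + Q x ^ γ * (e * (e - 1) * (x o) ^ (e - 2)) + 2 * (e * (x o) ^ (e - 1) * (γ * Q x ^ (γ - 1) * g o)) := by
  have h1 := (HL.coord (x := x) o).rpow hx e
  have h2 := h1.mul (hQ.rpow hq γ)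
  refine ⟨h2.cd, ?_⟩
  rw [h2.la]
  have s1 : ∑ i, (Pi.single o (1:ℝ) : κ → ℝ) i ^ 2 = 1 := by
    rw [Finset.sum_eq_single o] <;> simp +contextual
  have s2 : ∑ i, (e * x o ^ (e - 1) * (Pi.single o (1:ℝ) : κ → ℝ) i) * (γ * Q x ^ (γ - 1) * g i)
      = e * (x o) ^ (e - 1) * (γ * Q x ^ (γ - 1) * g o) := by
    rw [Finset.sum_eq_single o]
    · simp
    · intro i _ hi; simp [hi]
    · simp
  rw [s1, s2]
  ring

/-- the subsolution -/
noncomputable def subs (o : κ) (α β δ : ℝ) (y x : EuclideanSpace ℝ κ) : ℝ :=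
  δ * ((x o) ^ α * (‖x - y‖ ^ 2) ^ (-β / 2))

lemma dist_ge_x1 {x y : EuclideanSpace ℝ κ} (hy : y o = 0) : (x o) ^ 2 ≤ ‖x - y‖ ^ 2 := by
  have := sq_le_norm o (x - y)
  simpa [hy] using this

lemma subs_main {α β a p μ δ : ℝ} (hα : 0 < α) (hαμ : α * (α - 1) + μ = 0) (hβ : β = α + a) (ha : 0 < a)
    (hap : a * (p - 1) = 2) (hp : 1 < p) (hδ : 0 < δ)
    (hδ2 : δ ^ (p - 1) ≤ β * (a + 2 - Fintype.card κ - α))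
    {y x : EuclideanSpace ℝ κ} (hy : y o = 0) (hx : x ∈ HS o) :
    ContDiffAt ℝ 2 (subs o α β δ y) x ∧ 0 < subs o α β δ y x ∧
      subs o α β δ y x ^ p ≤ lapG (subs o α β δ y) x + μ / (x o) ^ 2 * subs o α β δ y x := by
  have hx0 : 0 < x o := hx
  have hq1 := dist_ge_x1 (x := x) hy
  have hq : 0 < ‖x - y‖ ^ 2 := lt_of_lt_of_le (by positivity) hq1
  obtain ⟨c1, c2⟩ := TQ_HL (HL.normsq (x := x) y) hx hq α (-β / 2)
  have h3 := (HL.of_cd c1).const_mul δ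
  have hpos : 0 < subs o α β δ y x := by unfold subs; positivity
  refine ⟨h3.cd, hpos, ?_⟩
  have e0 : lapG (subs o α β δ y) x = _ := h3.la
  rw [e0, c2]
  have sS : ∑ i, (2 * (x i - y i)) ^ 2 = 4 * ‖x - y‖ ^ 2 := by
    rw [EuclideanSpace.norm_sq_eq, Finset.mul_sum]
    refine Finset.sum_congr rfl fun i _ => ?_
    simp; ring
  rw [sS, hy, sub_zero]
  unfold subs
  set q := ‖x - y‖ ^ 2 with hqd
  set T := x o
  set B := T ^ α * q ^ (-β / 2 - 1) with hB
  have hBp : 0 < B := by positivity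
  have i1 : q ^ (-β / 2 - 2) = q ^ (-β / 2 - 1) / q := by
    rw [← Real.rpow_sub_one hq.ne']; congr 1; ring
  have i2 : q ^ (-β / 2) = q ^ (-β / 2 - 1) * q := by
    rw [← Real.rpow_add_one hq.ne']; congr 1; ring
  have i3 : T ^ (α - 1) = T ^ α / T := Real.rpow_sub_one hx0.ne' _
  have i4 : T ^ (α - 2) = T ^ α / T ^ 2 := by
    rw [Real.rpow_sub hx0, Real.rpow_two]
  have hμ : μ = -(α * (α - 1)) := by linarith
  have rhs : δ * (T ^ α * (-β / 2 * q ^ (-β / 2 - 1) * (2 * Fintype.card κ) +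
      -β / 2 * (-β / 2 - 1) * q ^ (-β / 2 - 2) * (4 * q)) + q ^ (-β / 2) * (α * (α - 1) * T ^ (α - 2)) +
      2 * (α * T ^ (α - 1) * (-β / 2 * q ^ (-β / 2 - 1) * (2 * T)))) + μ / T ^ 2 * (δ * (T ^ α * q ^ (-β / 2)))
      = δ * (β * (a + 2 - Fintype.card κ - α)) * B := by
    rw [i1, i2, i3, i4, hB, hμ]
    have : a = β - α := by linarith
    rw [this]
    field_simp
    ring
  rw [rhs]
  have lhs : (δ * (T ^ α * q ^ (-β / 2))) ^ p = δ * δ ^ (p - 1) * (B * (T ^ 2 / q) ^ (α * (p - 1) / 2)) := by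
    have e1 : δ * δ ^ (p - 1) = δ ^ p := by
      rw [mul_comm, ← Real.rpow_add_one hδ.ne']; congr 1; ring
    rw [e1, Real.mul_rpow hδ.le (by positivity), Real.mul_rpow (by positivity) (by positivity),
      Real.div_rpow (by positivity) hq.le, ← Real.rpow_mul hx0.le, ← Real.rpow_mul hq.le, hB]
    have e2 : (T ^ 2) ^ (α * (p - 1) / 2) = T ^ (α * (p - 1)) := by
      rw [← Real.rpow_two, ← Real.rpow_mul hx0.le]; congr 1; ring
    rw [e2]
    have e3 : T ^ (α * p) = T ^ α * T ^ (α * (p - 1)) := by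
      rw [← Real.rpow_add hx0]; congr 1; ring
    have e4 : q ^ (-β / 2 * p) = q ^ (-β / 2 - 1) / q ^ (α * (p - 1) / 2) := by
      rw [← Real.rpow_sub hq]; congr 1; rw [hβ]; linear_combination (-1/2) * hap
    rw [e3, e4]; ring
  rw [lhs]
  have hle : (T ^ 2 / q) ^ (α * (p - 1) / 2) ≤ 1 := by
    refine Real.rpow_le_one (by positivity) ((div_le_one hq).mpr hq1) ?_
    have : 0 < p - 1 := by linarith
    positivity
  calc δ * δ ^ (p - 1) * (B * (T ^ 2 / q) ^ (α * (p - 1) / 2)) ≤ δ * δ ^ (p - 1) * (B * 1) := by gcongr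
    _ = δ * δ ^ (p - 1) * B := by ring
    _ ≤ _ := by gcongr

/-- cubic cutoff -/
lemma cub_deriv (t : ℝ) : HasDerivAt (fun t : ℝ => (max 0 t) ^ 3) (3 * (max 0 t) ^ 2) t := by
  rcases lt_trichotomy t 0 with h | h | h
  · have e : (fun t : ℝ => (max 0 t) ^ 3) =ᶠ[𝓝 t] fun _ => 0 := by
      filter_upwards [gt_mem_nhds h] with y hy
      rw [max_eq_left hy.le]; norm_num
    rw [max_eq_left h.le]
    simpa using (hasDerivAt_const t (0:ℝ)).congr_of_eventuallyEq e
  · subst h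
    rw [max_self]
    have : (fun t : ℝ => (max 0 t) ^ 3) =O[𝓝 0] fun t => t ^ 2 := by
      refine Asymptotics.IsBigO.of_bound 1 ?_
      filter_upwards [ball_mem_nhds (0:ℝ) one_pos] with t ht
      rw [mem_ball, dist_zero_right, Real.norm_eq_abs] at ht
      have h0 : 0 ≤ max 0 t := le_max_left _ _
      have h1 : max 0 t ≤ |t| := max_le (abs_nonneg _) (le_abs_self _)
      rw [Real.norm_of_nonneg (by positivity), Real.norm_of_nonneg (by positivity), one_mul, ← sq_abs t]
      have h2 : (max 0 t) ^ 2 ≤ |t| ^ 2 := by gcongr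
      nlinarith
    have h2 : (fun t : ℝ => (max 0 t) ^ 3) =o[𝓝 0] fun t => t := by
      refine this.trans_isLittleO ?_
      exact Asymptotics.isLittleO_pow_id (by norm_num)
    rw [hasDerivAt_iff_isLittleO]
    simpa using h2
  · have e : (fun t : ℝ => (max 0 t) ^ 3) =ᶠ[𝓝 t] fun t => t ^ 3 := by
      filter_upwards [lt_mem_nhds h] with y hy
      rw [max_eq_right hy.le]
    rw [max_eq_right h.le]
    simpa using (hasDerivAt_pow 3 t).congr_of_eventuallyEq e

lemma cub_deriv2 (t : ℝ) : HasDerivAt (fun t : ℝ => 3 * (max 0 t) ^ 2) (6 * max 0 t) t := by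
  rcases lt_trichotomy t 0 with h | h | h
  · have e : (fun t : ℝ => 3 * (max 0 t) ^ 2) =ᶠ[𝓝 t] fun _ => 0 := by
      filter_upwards [gt_mem_nhds h] with y hy
      rw [max_eq_left hy.le]; norm_num
    rw [max_eq_left h.le]
    simpa using (hasDerivAt_const t (0:ℝ)).congr_of_eventuallyEq e
  · subst h
    rw [max_self]
    have : (fun t : ℝ => 3 * (max 0 t) ^ 2) =O[𝓝 0] fun t => t ^ 2 := by
      refine Asymptotics.IsBigO.of_bound 3 (Eventually.of_forall fun t => ?_)
      have h0 : 0 ≤ max 0 t := le_max_left _ _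
      have h1 : max 0 t ≤ |t| := max_le (abs_nonneg _) (le_abs_self _)
      rw [Real.norm_of_nonneg (by positivity), Real.norm_of_nonneg (by positivity), ← sq_abs t]
      have h2 : (max 0 t) ^ 2 ≤ |t| ^ 2 := by gcongr
      linarith
    have h2 : (fun t : ℝ => 3 * (max 0 t) ^ 2) =o[𝓝 0] fun t => t := by
      refine this.trans_isLittleO ?_
      exact Asymptotics.isLittleO_pow_id (by norm_num)
    rw [hasDerivAt_iff_isLittleO]
    simpa using h2
  · have e : (fun t : ℝ => 3 * (max 0 t) ^ 2) =ᶠ[𝓝 t] fun t => 3 * t ^ 2 := by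
      filter_upwards [lt_mem_nhds h] with y hy
      rw [max_eq_right hy.le]
    rw [max_eq_right h.le]
    have h2 := ((hasDerivAt_pow 2 t).const_mul 3).congr_of_eventuallyEq e
    refine h2.congr_deriv ?_
    norm_num; ring

lemma cub_cd : ContDiff ℝ 2 (fun t : ℝ => (max 0 t) ^ 3) := by
  have e1 : deriv (fun t : ℝ => (max 0 t) ^ 3) = fun t => 3 * (max 0 t) ^ 2 := funext fun t => (cub_deriv t).deriv
  have e2 : deriv (fun t : ℝ => 3 * (max 0 t) ^ 2) = fun t => 6 * max 0 t := funext fun t => (cub_deriv2 t).deriv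
  rw [show (2 : WithTop ℕ∞) = 1 + 1 by norm_num, contDiff_succ_iff_deriv]
  refine ⟨fun t => (cub_deriv t).differentiableAt, by simp, ?_⟩
  rw [e1, contDiff_one_iff_deriv]
  refine ⟨fun t => (cub_deriv2 t).differentiableAt, ?_⟩
  rw [e2]; fun_prop

noncomputable def QQ (o : κ) (d : ℝ) (ξ x : EuclideanSpace ℝ κ) : ℝ :=
  (x o) ^ 2 + (d ^ 4)⁻¹ * (max 0 (d ^ 2 - ‖x - ξ‖ ^ 2)) ^ 3

lemma QQ_ge (d : ℝ) (ξ x : EuclideanSpace ℝ κ) : (x o) ^ 2 ≤ QQ o d ξ x := by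
  unfold QQ
  have : 0 ≤ (d ^ 4)⁻¹ * (max 0 (d ^ 2 - ‖x - ξ‖ ^ 2)) ^ 3 := by positivity
  linarith

lemma QQ_HL {d : ℝ} {ξ x : EuclideanSpace ℝ κ} (hξ : ξ o = 0) (hx : x ∈ HS o) : ∃ g : κ → ℝ, ∃ l : ℝ,
    HL (QQ o d ξ) x g l ∧ |l| ≤ 26 + 6 * Fintype.card κ ∧ ∑ i, g i ^ 2 ≤ 72 * QQ o d ξ x ∧
      |g o| ≤ 8 * x o := by
  have hx0 : 0 < x o := hx
  set m := max 0 (d ^ 2 - ‖x - ξ‖ ^ 2) with hm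
  set E := (d ^ 4)⁻¹ with hE
  have h1 := ((HL.const (x := x) (d ^ 2)).sub (HL.normsq (x := x) ξ)).comp
    (φ := fun t => (max 0 t) ^ 3) (φ' := fun t => 3 * (max 0 t) ^ 2) cub_cd.contDiffAt
    (Eventually.of_forall fun t => cub_deriv t) (cub_deriv2 _)
  have h2 := (HL.coord (x := x) o).sq.add (h1.const_mul E)
  refine ⟨_, _, h2, ?_⟩
  have hm0 : 0 ≤ m := le_max_left _ _
  have hr0 : 0 ≤ ‖x - ξ‖ ^ 2 := by positivity
  have hmd : m ≤ d ^ 2 := max_le (by positivity) (by linarith)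
  have hE0 : 0 ≤ E := by positivity
  have hEd : E * (d ^ 2 * d ^ 2) ≤ 1 := by
    have : d ^ 2 * d ^ 2 = d ^ 4 := by ring
    rw [this, hE]
    exact inv_mul_le_one
  have hmr : m * ‖x - ξ‖ ^ 2 ≤ m * d ^ 2 := by
    rcases le_total (d ^ 2 - ‖x - ξ‖ ^ 2) 0 with h | h
    · rw [hm, max_eq_left h]; simp
    · exact mul_le_mul_of_nonneg_left (by linarith) hm0
  have s1 : ∑ i, (Pi.single o (1:ℝ) : κ → ℝ) i ^ 2 = 1 := by
    rw [Finset.sum_eq_single o] <;> simp +contextual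
  have s2 : ∑ i, (x i - ξ i) ^ 2 = ‖x - ξ‖ ^ 2 := by
    rw [EuclideanSpace.norm_sq_eq]
    simp
  have s3 : ∑ i, (0 - 2 * (x i - ξ i)) ^ 2 = 4 * ‖x - ξ‖ ^ 2 := by
    rw [← s2, Finset.mul_sum]
    exact Finset.sum_congr rfl fun i _ => by ring
  have hEm2 : E * m ^ 2 ≤ 1 := by
    refine le_trans ?_ hEd
    rw [sq]; gcongr
  have hEm20 : 0 ≤ E * m ^ 2 := by positivity
  have hEmr : E * (m * ‖x - ξ‖ ^ 2) ≤ 1 := by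
    refine le_trans ?_ hEd
    exact mul_le_mul_of_nonneg_left (hmr.trans (mul_le_mul_of_nonneg_right hmd (by positivity))) hE0
  have hEmr0 : 0 ≤ E * (m * ‖x - ξ‖ ^ 2) := by positivity
  have hn : (0:ℝ) ≤ Fintype.card κ := by positivity
  refine ⟨?_, ?_, ?_⟩
  · simp only [s1, s3, ← hm]
    have e : 2 * x o * 0 + 2 * 1 + E * (3 * m ^ 2 * (0 - 2 * (Fintype.card κ : ℝ)) + 6 * m * (4 * ‖x - ξ‖ ^ 2))
      = 2 - 6 * (E * m ^ 2) * Fintype.card κ + 24 * (E * (m * ‖x - ξ‖ ^ 2)) := by ring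
    rw [e, abs_le]
    have : (E * m ^ 2) * Fintype.card κ ≤ 1 * Fintype.card κ := by gcongr
    have : 0 ≤ (E * m ^ 2) * Fintype.card κ := by positivity
    constructor <;> nlinarith
  · simp only [← hm]
    have b : ∀ i, (2 * x o * (Pi.single o (1:ℝ) : κ → ℝ) i + E * (3 * m ^ 2 * (0 - 2 * (x i - ξ i)))) ^ 2
        ≤ 8 * (x o) ^ 2 * (Pi.single o (1:ℝ) : κ → ℝ) i ^ 2 + 72 * (E * m ^ 2) ^ 2 * (x i - ξ i) ^ 2 := by
      intro i
      nlinarith [sq_nonneg (2 * x o * (Pi.single o (1:ℝ) : κ → ℝ) i - E * (3 * m ^ 2 * (0 - 2 * (x i - ξ i))))]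
    refine (Finset.sum_le_sum fun i _ => b i).trans ?_
    rw [Finset.sum_add_distrib, ← Finset.mul_sum, ← Finset.mul_sum, s1, s2]
    unfold QQ
    rw [← hm, ← hE]
    have : (E * m ^ 2) ^ 2 * ‖x - ξ‖ ^ 2 = (E * m ^ 3) * (E * (m * ‖x - ξ‖ ^ 2)) := by ring
    have h5 : (E * m ^ 3) * (E * (m * ‖x - ξ‖ ^ 2)) ≤ (E * m ^ 3) * 1 := by gcongr
    nlinarith [sq_nonneg (x o)]
  · simp only [← hm, Pi.single_eq_same, hξ]
    have e : 2 * x o * 1 + E * (3 * m ^ 2 * (0 - 2 * (x o - 0))) = (2 - 6 * (E * m ^ 2)) * x o := by ring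
    rw [e, abs_mul, abs_of_pos hx0]
    gcongr
    rw [abs_le]; constructor <;> linarith

end explicit


section superS
open Metric Filter Topology
variable {κ : Type} [Fintype κ] [DecidableEq κ] {o : κ}

noncomputable def cTQ (N : ℕ) (e γ : ℝ) : ℝ := |γ| * (26 + 6 * N) + |γ * (γ - 1)| * 72 + 16 * e * |γ|

lemma TQ_bound {d : ℝ} {ξ x : EuclideanSpace ℝ κ} (hξ : ξ o = 0) (hx : x ∈ HS o) {e : ℝ} (he : 0 ≤ e) (γ μ : ℝ) :
    ContDiffAt ℝ 2 (fun y => (y o) ^ e * QQ o d ξ y ^ γ) x ∧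
    ∃ R, |R| ≤ cTQ (Fintype.card κ) e γ ∧
     lapG (fun y => (y o) ^ e * QQ o d ξ y ^ γ) x + μ / (x o) ^ 2 * ((x o) ^ e * QQ o d ξ x ^ γ)
      = (x o) ^ e * QQ o d ξ x ^ (γ - 1) * R + (e * (e - 1) + μ) * ((x o) ^ e / (x o) ^ 2 * QQ o d ξ x ^ γ) := by
  have hx0 : 0 < x o := hx
  obtain ⟨g, l, h, hl, hg, hgo⟩ := QQ_HL (d := d) hξ hx
  have hq : 0 < QQ o d ξ x := lt_of_lt_of_le (by positivity) (QQ_ge (o := o) d ξ x)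
  obtain ⟨c1, c2⟩ := TQ_HL h hx hq e γ
  refine ⟨c1, γ * l + γ * (γ - 1) * ((∑ i, g i ^ 2) / QQ o d ξ x) + 2 * e * γ * (g o / x o), ?_, ?_⟩
  · have b2 : |(∑ i, g i ^ 2) / QQ o d ξ x| ≤ 72 := by
      rw [abs_of_nonneg (by positivity), div_le_iff₀ hq]; exact hg
    have b3 : |g o / x o| ≤ 8 := by
      rw [abs_div, abs_of_pos hx0, div_le_iff₀ hx0]; exact hgo
    refine (abs_add_three _ _ _).trans ?_
    unfold cTQ
    rw [abs_mul, abs_mul (γ * (γ - 1)), abs_mul (2 * e * γ), abs_mul (2 * e), abs_of_nonneg (by positivity : 0 ≤ 2 * e)]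
    have : 2 * e * |γ| * |g o / x o| ≤ 2 * e * |γ| * 8 := by gcongr
    have : |γ| * |l| ≤ |γ| * (26 + 6 * Fintype.card κ) := by gcongr
    have : |γ * (γ - 1)| * |(∑ i, g i ^ 2) / QQ o d ξ x| ≤ |γ * (γ - 1)| * 72 := by gcongr
    linarith
  · rw [c2]
    set q := QQ o d ξ x
    set T := x o
    have i1 : q ^ (γ - 2) = q ^ (γ - 1) / q := by
      rw [← Real.rpow_sub_one hq.ne']; congr 1; ring
    have i3 : T ^ (e - 1) = T ^ e / T := Real.rpow_sub_one hx0.ne' _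
    have i4 : T ^ (e - 2) = T ^ e / T ^ 2 := by
      rw [Real.rpow_sub hx0, Real.rpow_two]
    rw [i1, i3, i4]
    field_simp
    ring

noncomputable def supr (o : κ) (α β A d : ℝ) (ξ x : EuclideanSpace ℝ κ) : ℝ :=
  A * ((x o) ^ α * QQ o d ξ x ^ (-β / 2)) - A / 2 * ((x o) ^ (α + 1) * QQ o d ξ x ^ (-β / 2 - 1 / 2))

lemma T_le_sqrt {d : ℝ} {ξ x : EuclideanSpace ℝ κ} (hx : x ∈ HS o) :
    x o / √(QQ o d ξ x) ≤ 1 := by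
  have hx0 : 0 < x o := hx
  refine div_le_one_of_le₀ ?_ (by positivity)
  exact Real.le_sqrt_of_sq_le (QQ_ge d ξ x)

lemma supr_eq {α β A d : ℝ} {ξ x : EuclideanSpace ℝ κ} (hx : x ∈ HS o) :
    supr o α β A d ξ x = A * ((x o) ^ α * QQ o d ξ x ^ (-β / 2)) * (1 - x o / √(QQ o d ξ x) / 2) := by
  have hx0 : 0 < x o := hx
  have hq : 0 < QQ o d ξ x := lt_of_lt_of_le (by positivity) (QQ_ge (o := o) d ξ x)
  unfold supr
  rw [Real.rpow_add_one hx0.ne', Real.rpow_sub hq, ← Real.sqrt_eq_rpow]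
  ring

lemma supr_le {α β A d : ℝ} {ξ x : EuclideanSpace ℝ κ} (hx : x ∈ HS o) (hA : 0 < A) :
    supr o α β A d ξ x ≤ A * ((x o) ^ α * QQ o d ξ x ^ (-β / 2)) := by
  have hx0 : 0 < x o := hx
  have hq : 0 < QQ o d ξ x := lt_of_lt_of_le (by positivity) (QQ_ge (o := o) d ξ x)
  rw [supr_eq hx]
  refine mul_le_of_le_one_right (by positivity) ?_
  have : 0 ≤ x o / √(QQ o d ξ x) := by positivity
  linarith

lemma supr_ge {α β A d : ℝ} {ξ x : EuclideanSpace ℝ κ} (hx : x ∈ HS o) (hA : 0 < A) :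
    A / 2 * ((x o) ^ α * QQ o d ξ x ^ (-β / 2)) ≤ supr o α β A d ξ x := by
  have hx0 : 0 < x o := hx
  have hq : 0 < QQ o d ξ x := lt_of_lt_of_le (by positivity) (QQ_ge (o := o) d ξ x)
  rw [supr_eq hx]
  have h1 := T_le_sqrt (d := d) (ξ := ξ) hx
  have : 0 < A * ((x o) ^ α * QQ o d ξ x ^ (-β / 2)) := by positivity
  nlinarith

/-- constant `C3` -/
noncomputable def C3 (N : ℕ) (α β : ℝ) : ℝ := cTQ N α (-β / 2) + cTQ N (α + 1) (-β / 2 - 1 / 2) / 2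

lemma C3_pos {N : ℕ} {α β : ℝ} (hα : 0 < α) (hβ : 0 < β) : 0 < C3 N α β := by
  unfold C3 cTQ
  have : 0 < |-β / 2| := abs_pos.2 (by linarith)
  positivity

lemma supr_main {α β a p μ A : ℝ} (hα : 0 < α) (hαμ : α * (α - 1) + μ = 0) (hβ : β = α + a) (ha : 0 < a)
    (hap : a * (p - 1) = 2) (hp : 1 < p) (hA : 0 < A)
    (hA2 : A * C3 (Fintype.card κ) α β ≤ (A / 2) ^ p * (α / C3 (Fintype.card κ) α β) ^ (α * (p - 1)))
    {d : ℝ} {ξ x : EuclideanSpace ℝ κ} (hξ : ξ o = 0) (hx : x ∈ HS o) :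
    ContDiffAt ℝ 2 (supr o α β A d ξ) x ∧ 0 < supr o α β A d ξ x ∧
      lapG (supr o α β A d ξ) x + μ / (x o) ^ 2 * supr o α β A d ξ x ≤ supr o α β A d ξ x ^ p := by
  have hx0 : 0 < x o := hx
  have hq : 0 < QQ o d ξ x := lt_of_lt_of_le (by positivity) (QQ_ge (o := o) d ξ x)
  have hge := supr_ge (α := α) (β := β) (d := d) (ξ := ξ) hx hA
  have hpos : 0 < supr o α β A d ξ x := lt_of_lt_of_le (by positivity) hge
  obtain ⟨c1, R1, r1, l1⟩ := TQ_bound (d := d) hξ hx hα.le (-β / 2) μ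
  obtain ⟨c2, R2, r2, l2⟩ := TQ_bound (d := d) hξ hx (by linarith : 0 ≤ α + 1) (-β / 2 - 1 / 2) μ
  have h := ((HL.of_cd c1).const_mul A).sub ((HL.of_cd c2).const_mul (A / 2))
  refine ⟨h.cd, hpos, ?_⟩
  have e0 : lapG (supr o α β A d ξ) x = _ := h.la
  set C := C3 (Fintype.card κ) α β with hC
  have hCp : 0 < C := C3_pos hα (by linarith)
  set q := QQ o d ξ x with hqd
  set T := x o with hT
  set t := T / √q with ht
  have hsq : 0 < √q := by positivity
  have htp : 0 < t := by positivity
  have ht1 : t ≤ 1 := T_le_sqrt hx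
  set B := T ^ α * q ^ (-β / 2 - 1) with hB
  have hBp : 0 < B := by positivity
  have hL : lapG (supr o α β A d ξ) x + μ / T ^ 2 * supr o α β A d ξ x
      = A * B * (R1 - t / 2 * R2 - α / t) := by
    rw [e0]
    have : μ / T ^ 2 * supr o α β A d ξ x = A * (μ / T ^ 2 * (T ^ α * q ^ (-β / 2))) - 
       A / 2 * (μ / T ^ 2 * (T ^ (α + 1) * q ^ (-β / 2 - 1 / 2))) := by unfold supr; ring
    rw [this]
    have j : (α + 1) * (α + 1 - 1) + μ = 2 * α := by linarith
    rw [j] at l2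
    rw [hαμ] at l1
    have i1 : q ^ (-β / 2 - 1 / 2 - 1) = q ^ (-β / 2 - 1) / √q := by
      rw [Real.sqrt_eq_rpow, ← Real.rpow_sub hq]; congr 1; ring
    have i2 : q ^ (-β / 2 - 1 / 2) = q ^ (-β / 2 - 1) * √q := by
      rw [Real.sqrt_eq_rpow, ← Real.rpow_add hq]; congr 1; ring
    have i3 : T ^ (α + 1) = T ^ α * T := Real.rpow_add_one hx0.ne' _
    have k1 : T ^ α * q ^ (-β / 2 - 1) * R1 = B * R1 := rfl
    have k2 : T ^ (α + 1) * q ^ (-β / 2 - 1 / 2 - 1) * R2 = B * (t * R2) := by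
      rw [i1, i3, hB, ht]; ring
    have k3 : 2 * α * (T ^ (α + 1) / T ^ 2 * q ^ (-β / 2 - 1 / 2)) = B * (2 * α / t) := by
      rw [i2, i3, hB, ht]; field_simp
    rw [k1] at l1
    rw [k2, k3] at l2
    linear_combination A * l1 - A / 2 * l2
  rw [hL]
  have hR : R1 - t / 2 * R2 ≤ C := by
    have u1 := (abs_le.1 r1).2
    have u2 : -(t * R2) ≤ 1 * cTQ (Fintype.card κ) (α + 1) (-β / 2 - 1 / 2) := by
      calc -(t * R2) ≤ |t * R2| := neg_le_abs _
        _ = t * |R2| := by rw [abs_mul, abs_of_pos htp]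
        _ ≤ _ := by gcongr
    rw [hC]; unfold C3; linarith
  rcases le_or_gt t (α / C) with hc | hc
  · refine le_trans ?_ (Real.rpow_nonneg hpos.le p)
    have : C ≤ α / t := by
      rw [le_div_iff₀ htp]; rw [le_div_iff₀ hCp] at hc; linarith
    have : R1 - t / 2 * R2 - α / t ≤ 0 := by linarith
    exact mul_nonpos_of_nonneg_of_nonpos (by positivity) this
  · have lhs : (A / 2 * (T ^ α * q ^ (-β / 2))) ^ p = (A / 2) ^ p * (B * t ^ (α * (p - 1))) := by
      rw [Real.mul_rpow (by positivity) (by positivity), Real.mul_rpow (by positivity) (by positivity),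
        ht, Real.div_rpow (by positivity) hsq.le, ← Real.rpow_mul hx0.le, ← Real.rpow_mul hq.le, hB]
      have e2 : √q ^ (α * (p - 1)) = q ^ (α * (p - 1) / 2) := by
        rw [Real.sqrt_eq_rpow, ← Real.rpow_mul hq.le]; congr 1; ring
      rw [e2]
      have e3 : T ^ (α * p) = T ^ α * T ^ (α * (p - 1)) := by
        rw [← Real.rpow_add hx0]; congr 1; ring
      have e4 : q ^ (-β / 2 * p) = q ^ (-β / 2 - 1) / q ^ (α * (p - 1) / 2) := by
        rw [← Real.rpow_sub hq]; congr 1; rw [hβ]; linear_combination (-1/2) * hap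
      rw [e3, e4]; ring
    have hp0 : 0 < p - 1 := by linarith
    calc A * B * (R1 - t / 2 * R2 - α / t) ≤ A * B * C := by
          have : 0 < α / t := by positivity
          gcongr; linarith
      _ = (A * C) * B := by ring
      _ ≤ ((A / 2) ^ p * (α / C) ^ (α * (p - 1))) * B := by gcongr
      _ ≤ ((A / 2) ^ p * t ^ (α * (p - 1))) * B := by gcongr
      _ = (A / 2 * (T ^ α * q ^ (-β / 2))) ^ p := by rw [lhs]; ring
      _ ≤ _ := by gcongr

lemma QQ_le {d : ℝ} (hd : 0 ≤ d) {ξ x y : EuclideanSpace ℝ κ} (hy : y o = 0) (hyd : d ≤ ‖ξ - y‖) :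
    QQ o d ξ x ≤ 9 * ‖x - y‖ ^ 2 := by
  unfold QQ
  have h1 := dist_ge_x1 (x := x) hy
  rcases le_total (d ^ 2 - ‖x - ξ‖ ^ 2) 0 with h | h
  · rw [max_eq_left h]
    have : 0 ≤ ‖x - y‖ ^ 2 := by positivity
    norm_num; linarith
  · rw [max_eq_right h]
    set r := ‖x - ξ‖ with hr
    have hr0 : 0 ≤ r := norm_nonneg _
    have hrd : r ≤ d := by nlinarith
    have tri : ‖ξ - y‖ ≤ r + ‖x - y‖ := by
      have : ξ - y = -(x - ξ) + (x - y) := by abel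
      rw [this]; refine (norm_add_le _ _).trans ?_
      rw [norm_neg]
    have hdr : d - r ≤ ‖x - y‖ := by linarith
    rcases hd.eq_or_lt with h0 | h0
    · have : 0 ≤ ‖x - y‖ ^ 2 := by positivity
      rw [← h0]; norm_num; linarith
    · have hm : d ^ 2 - r ^ 2 ≤ d ^ 2 := by nlinarith
      have hm2 : d ^ 2 - r ^ 2 ≤ 2 * d * ‖x - y‖ := by
        calc d ^ 2 - r ^ 2 = (d + r) * (d - r) := by ring
          _ ≤ (d + d) * ‖x - y‖ := by
            apply mul_le_mul (by linarith) hdr (by linarith) (by linarith)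
          _ = _ := by ring
      have : (d ^ 4)⁻¹ * (d ^ 2 - r ^ 2) ^ 3 ≤ 4 * ‖x - y‖ ^ 2 := by
        rw [inv_mul_le_iff₀ (by positivity)]
        calc (d ^ 2 - r ^ 2) ^ 3 = (d ^ 2 - r ^ 2) * (d ^ 2 - r ^ 2) ^ 2 := by ring
          _ ≤ d ^ 2 * (2 * d * ‖x - y‖) ^ 2 := by
            apply mul_le_mul hm (pow_le_pow_left₀ h hm2 2) (by positivity) (by positivity)
          _ = _ := by ring
      nlinarith [sq_nonneg ‖x - y‖]

lemma QQ_low {d D : ℝ} (hd : 0 ≤ d) (hD : 0 ≤ D) {ξ x : EuclideanSpace ℝ κ} (hx : x ∈ HS o) (h : ‖x - ξ‖ = x o) 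
   (hdD : D ≤ d + x o) : D ^ 2 / 9 ≤ QQ o d ξ x := by
  have hx0 : 0 < x o := hx
  rcases le_total d (2 * x o) with h1 | h1
  · have := QQ_ge (o := o) d ξ x
    nlinarith
  · unfold QQ
    rw [h]
    have hd0 : 0 < d := by linarith
    have : 3 / 4 * d ^ 2 ≤ d ^ 2 - (x o) ^ 2 := by nlinarith
    have h2 : 27 / 64 * d ^ 2 ≤ (d ^ 4)⁻¹ * (max 0 (d ^ 2 - x o ^ 2)) ^ 3 := by
      rw [le_inv_mul_iff₀ (by positivity)]
      calc d ^ 4 * (27 / 64 * d ^ 2) = (3 / 4 * d ^ 2) ^ 3 := by ring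
        _ ≤ _ := by gcongr; exact this.trans (le_max_right _ _)
    nlinarith

end superS


section iter
open MeasureTheory Metric Filter Topology
variable {κ : Type} [Fintype κ] [DecidableEq κ] {o : κ}

structure Dat (κ : Type) [Fintype κ] (a α β μ p A δ : ℝ) (s : ℕ) : Prop where
  P : Par κ a s
  hα : 0 < α
  hαμ : α * (α - 1) + μ = 0
  hβ : β = α + a
  hap : a * (p - 1) = 2
  hp : 1 < p
  hA : 0 < A
  hA2 : A * C3 (Fintype.card κ) α β ≤ (A / 2) ^ p * (α / C3 (Fintype.card κ) α β) ^ (α * (p - 1))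
  hδ : 0 < δ
  hδ2 : δ ^ (p - 1) ≤ β * (a + 2 - Fintype.card κ - α)
  hδA : δ ≤ A / 2 * 9 ^ (-β / 2)
  hK : p * A ^ (p - 1) ≤ s * (s - 1) + μ

variable {a α β μ p A δ : ℝ} {s : ℕ}

/-- scalar nonlinearity -/
noncomputable def fs (K p T u : ℝ) : ℝ := K / T ^ 2 * u - u ^ p

lemma fs_mono {K p T u v A a : ℝ} (hp : 1 < p) (hap : a * (p - 1) = 2) (hA : 0 < A) (hK : p * A ^ (p - 1) ≤ K) (hT : 0 < T)
    (hu : 0 ≤ u) (huv : u ≤ v) (hv : v ≤ A * T ^ (-a)) : fs K p T u ≤ fs K p T v := by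
  unfold fs
  rcases (hu.trans huv).eq_or_lt with h0 | h0
  · have : u = v := by linarith
    rw [this]
  have h1 : v ^ p - u ^ p ≤ p * v ^ (p - 1) * (v - u) := by
    have h := one_add_mul_self_le_rpow_one_add (s := u / v - 1) (by have : 0 ≤ u / v := by positivity
                                                                    linarith) hp.le
    rw [show 1 + (u / v - 1) = u / v by ring, Real.div_rpow hu h0.le, le_div_iff₀ (by positivity)] at h
    have e : v ^ p = v ^ (p - 1) * v := by
      rw [← Real.rpow_add_one h0.ne']; congr 1; ring
    have e2 : (1 + p * (u / v - 1)) * v ^ p = v ^ p - p * v ^ (p - 1) * (v - u) := by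
      rw [e]; field_simp; ring
    linarith
  have h2 : v ^ (p - 1) ≤ A ^ (p - 1) / T ^ 2 := by
    calc v ^ (p - 1) ≤ (A * T ^ (-a)) ^ (p - 1) := Real.rpow_le_rpow h0.le hv (by linarith)
      _ = _ := by
        rw [Real.mul_rpow hA.le (by positivity), ← Real.rpow_mul hT.le, show -a * (p - 1) = -2 by linarith,
          Real.rpow_neg hT.le, Real.rpow_two]; rfl
  have h3 : p * v ^ (p - 1) * (v - u) ≤ K / T ^ 2 * (v - u) := by
    apply mul_le_mul_of_nonneg_right _ (by linarith)
    calc p * v ^ (p - 1) ≤ p * (A ^ (p - 1) / T ^ 2) := by gcongr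
      _ = p * A ^ (p - 1) / T ^ 2 := by ring
      _ ≤ _ := by gcongr
  linarith

noncomputable def ff (o : κ) (K p : ℝ) (u : EuclideanSpace ℝ κ → ℝ) : EuclideanSpace ℝ κ → ℝ :=
  (HS o).indicator (fun x => fs K p (x o) (u x))

structure Good (o : κ) (a A : ℝ) (u : EuclideanSpace ℝ κ → ℝ) : Prop where
  m : Measurable u
  nn : ∀ x ∈ HS o, 0 ≤ u x
  le : ∀ x ∈ HS o, u x ≤ A * (x o) ^ (-a)

/-- zero order coefficient -/
noncomputable def KK (s : ℕ) (μ : ℝ) : ℝ := s * (s - 1) + μ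

lemma coord_meas (o : κ) : Measurable (fun x : EuclideanSpace ℝ κ => x o) := by
  have : Continuous (fun x : EuclideanSpace ℝ κ => x o) := by fun_prop
  exact this.measurable

lemma Dat.KK_pos (D : Dat κ a α β μ p A δ s) : 0 < KK s μ := by
  have := D.hK
  have := D.hA
  have := D.hp
  have : 0 < p * A ^ (p - 1) := by positivity
  unfold KK; linarith

lemma Good.adm {u : EuclideanSpace ℝ κ → ℝ} (G : Good o a A u) (D : Dat κ a α β μ p A δ s) :
    Adm a o (KK s μ * A) (ff o (KK s μ) p u) := by
  have hK := D.KK_pos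
  refine ⟨?_, by have := D.hA; positivity, ?_⟩
  · refine Measurable.stronglyMeasurable ?_
    refine Measurable.indicator ?_ (HS_open o).measurableSet
    unfold fs
    have := coord_meas o
    have := G.m
    fun_prop
  · intro x hx
    have hx0 : 0 < x o := hx
    unfold ff
    rw [indicator_of_mem hx]
    have h0 : 0 ≤ fs (KK s μ) p (x o) (u x) := by
      have := fs_mono (a := a) D.hp D.hap D.hA D.hK hx0 le_rfl (G.nn x hx) (G.le x hx)
      refine le_trans ?_ this
      unfold fs
      rw [Real.zero_rpow (by have := D.hp; linarith)]; simp
    rw [abs_of_nonneg h0]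
    unfold fs
    have : 0 ≤ u x ^ p := Real.rpow_nonneg (G.nn x hx) p
    calc KK s μ / x o ^ 2 * u x - u x ^ p ≤ KK s μ / x o ^ 2 * u x := by linarith
      _ ≤ KK s μ / x o ^ 2 * (A * x o ^ (-a)) := by
        have := G.le x hx
        gcongr
      _ = _ := by
        rw [Real.rpow_sub hx0, Real.rpow_two]; ring

lemma ff_mono (D : Dat κ a α β μ p A δ s) {u v : EuclideanSpace ℝ κ → ℝ} (G : Good o a A u) (G' : Good o a A v)
    (h : ∀ x ∈ HS o, u x ≤ v x) : ∀ x ∈ HS o, GG s o (ff o (KK s μ) p u) x ≤ GG s o (ff o (KK s μ) p v) x := by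
  intro x hx
  refine GG_mono D.P (G.adm D) (G'.adm D) ?_ hx
  intro y hy
  unfold ff
  rw [indicator_of_mem hy, indicator_of_mem hy]
  exact fs_mono (a := a) D.hp D.hap D.hA D.hK hy (G.nn y hy) (h y hy) (G'.le y hy)

lemma ff_C1 {u : EuclideanSpace ℝ κ → ℝ} {K : ℝ} (hu : ∀ x ∈ HS o, ContDiffAt ℝ 1 u x) (hpos : ∀ x ∈ HS o, 0 < u x) :
    ContDiffOn ℝ 1 (ff o K p u) (HS o) := by
  have : ContDiffOn ℝ 1 (fun x => fs K p (x o) (u x)) (HS o) := by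
    intro x hx
    have hx0 : 0 < x o := hx
    unfold fs
    refine ContDiffAt.contDiffWithinAt ?_
    have h1 : ContDiffAt ℝ 1 (fun x : EuclideanSpace ℝ κ => x o) x := by fun_prop
    refine ContDiffAt.sub (ContDiffAt.mul (ContDiffAt.div contDiffAt_const (h1.pow 2) (by positivity)) (hu x hx)) ?_
    exact (hu x hx).rpow_const_of_ne (hpos x hx).ne'
  refine this.congr ?_
  intro x hx
  unfold ff
  rw [indicator_of_mem hx]

lemma sub_step (D : Dat κ a α β μ p A δ s) {u : EuclideanSpace ℝ κ → ℝ} (G : Good o a A u)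
    (hu : ∀ x ∈ HS o, ContDiffAt ℝ 2 u x) (hpos : ∀ x ∈ HS o, 0 < u x)
    (hs : ∀ x ∈ HS o, u x ^ p ≤ lapG u x + μ / (x o) ^ 2 * u x) :
    ∀ x ∈ HS o, u x ≤ GG s o (ff o (KK s μ) p u) x := by
  have Ad := G.adm D
  have hd := ff_C1 (K := KK s μ) (p := p) (fun x hx => (hu x hx).of_le (by norm_num)) hpos
  have hG := fun x (hx : x ∈ HS o) => GG_C2 D.P Ad.sm hd hx (Ad.KI D.P hx)
  have := mp2 (z := fun x => GG s o (ff o (KK s μ) p u) x - u x) (C := KK s μ * A + A) o D.P.ha D.P.hk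
    (fun x hx => (hG x hx).1.sub (hu x hx)) ?_ ?_
  · intro x hx
    have := this x hx
    linarith
  · intro x hx
    have h := ((HL.of_cd (hG x hx).1).sub (HL.of_cd (hu x hx))).la
    rw [h, (hG x hx).2]
    have h2 := hs x hx
    unfold ff
    rw [indicator_of_mem hx]
    unfold fs KK
    have e : (s * (s - 1) + μ) / x o ^ 2 * u x = s * (s - 1) / x o ^ 2 * u x + μ / x o ^ 2 * u x := by ring
    linarith
  · intro x hx
    have h1 := (abs_le.1 (GG_bound D.P Ad hx)).1
    have h2 := G.le x hx
    linarith

lemma super_step (D : Dat κ a α β μ p A δ s) {u : EuclideanSpace ℝ κ → ℝ} (G : Good o a A u)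
    (hu : ∀ x ∈ HS o, ContDiffAt ℝ 2 u x) (hpos : ∀ x ∈ HS o, 0 < u x)
    (hs : ∀ x ∈ HS o, lapG u x + μ / (x o) ^ 2 * u x ≤ u x ^ p) :
    ∀ x ∈ HS o, GG s o (ff o (KK s μ) p u) x ≤ u x := by
  have Ad := G.adm D
  have hd := ff_C1 (K := KK s μ) (p := p) (fun x hx => (hu x hx).of_le (by norm_num)) hpos
  have hG := fun x (hx : x ∈ HS o) => GG_C2 D.P Ad.sm hd hx (Ad.KI D.P hx)
  have := mp2 (z := fun x => u x - GG s o (ff o (KK s μ) p u) x) (C := KK s μ * A) o D.P.ha D.P.hk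
    (fun x hx => (hu x hx).sub (hG x hx).1) ?_ ?_
  · intro x hx
    have := this x hx
    linarith
  · intro x hx
    have h := ((HL.of_cd (hu x hx)).sub (HL.of_cd (hG x hx).1)).la
    rw [h, (hG x hx).2]
    have h2 := hs x hx
    unfold ff
    rw [indicator_of_mem hx]
    unfold fs KK
    have e : (s * (s - 1) + μ) / x o ^ 2 * u x = s * (s - 1) / x o ^ 2 * u x + μ / x o ^ 2 * u x := by ring
    linarith
  · intro x hx
    have h1 := (abs_le.1 (GG_bound D.P Ad hx)).2
    have h2 := hpos x hx
    linarith

lemma QQ_pos {d : ℝ} {ξ x : EuclideanSpace ℝ κ} (hx : x ∈ HS o) : 0 < QQ o d ξ x := by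
  have hx0 : 0 < x o := hx
  exact lt_of_lt_of_le (by positivity) (QQ_ge (o := o) d ξ x)

lemma Dat.hβ0 (D : Dat κ a α β μ p A δ s) : 0 < β := by
  have := D.P.ha
  have := D.hα
  have := D.hβ
  linarith

lemma subs_le_supr (D : Dat κ a α β μ p A δ s) {d : ℝ} (hd : 0 ≤ d) {ξ y : EuclideanSpace ℝ κ} (hy : y o = 0)
    (hyd : d ≤ ‖ξ - y‖) : ∀ x ∈ HS o, subs o α β δ y x ≤ supr o α β A d ξ x := by
  intro x hx
  have hx0 : 0 < x o := hx
  refine le_trans ?_ (supr_ge hx D.hA)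
  have h1 := QQ_le (x := x) hd hy hyd
  have hq := QQ_pos (d := d) (ξ := ξ) hx
  have hβ := D.hβ0
  have hA := D.hA
  have h2 : 9 ^ (-β / 2) * (‖x - y‖ ^ 2) ^ (-β / 2) ≤ QQ o d ξ x ^ (-β / 2) := by
    rw [← Real.mul_rpow (by norm_num) (by positivity)]
    exact Real.rpow_le_rpow_of_nonpos hq h1 (by linarith)
  unfold subs
  calc δ * (x o ^ α * (‖x - y‖ ^ 2) ^ (-β / 2)) 
      ≤ (A / 2 * 9 ^ (-β / 2)) * (x o ^ α * (‖x - y‖ ^ 2) ^ (-β / 2)) := by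
        have := D.hδA
        apply mul_le_mul_of_nonneg_right this (by positivity)
    _ = A / 2 * (x o ^ α * (9 ^ (-β / 2) * (‖x - y‖ ^ 2) ^ (-β / 2))) := by ring
    _ ≤ _ := by
      apply mul_le_mul_of_nonneg_left _ (by positivity)
      exact mul_le_mul_of_nonneg_left h2 (by positivity)

lemma supr_good (D : Dat κ a α β μ p A δ s) {d : ℝ} {ξ : EuclideanSpace ℝ κ} (hξ : ξ o = 0) :
    Good o a A (supr o α β A d ξ) := by
  refine ⟨?_, fun x hx => (supr_main D.hα D.hαμ D.hβ D.P.ha D.hap D.hp D.hA D.hA2 hξ hx).2.1.le, ?_⟩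
  · have h1 := coord_meas o
    have h2 : Measurable (QQ o d ξ) := by
      have : Continuous (QQ o d ξ) := by unfold QQ; fun_prop
      exact this.measurable
    unfold supr
    fun_prop
  · intro x hx
    have hx0 : 0 < x o := hx
    refine (supr_le hx D.hA).trans ?_
    have hβ := D.hβ0
    have hA := D.hA
    calc A * (x o ^ α * QQ o d ξ x ^ (-β / 2)) ≤ A * (x o ^ α * ((x o) ^ 2) ^ (-β / 2)) := by
          apply mul_le_mul_of_nonneg_left _ hA.le
          apply mul_le_mul_of_nonneg_left _ (by positivity)
          exact Real.rpow_le_rpow_of_nonpos (by positivity) (QQ_ge d ξ x) (by linarith)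
      _ = _ := by
        rw [← Real.rpow_two, ← Real.rpow_mul hx0.le, ← Real.rpow_add hx0]
        congr 2
        have := D.hβ
        linarith

lemma subs_good (D : Dat κ a α β μ p A δ s) {y : EuclideanSpace ℝ κ} (hy : y o = 0) :
    Good o a A (subs o α β δ y) := by
  refine ⟨?_, ?_, ?_⟩
  · have h1 := coord_meas o
    unfold subs
    fun_prop
  · intro x hx
    have hx0 : 0 < x o := hx
    have := D.hδ
    unfold subs; positivity
  · intro x hx
    exact (subs_le_supr D le_rfl (ξ := y) hy (by simp) x hx).trans ((supr_good D hy).le x hx)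

noncomputable def w0 (o : κ) (α β δ : ℝ) (F : Set (EuclideanSpace ℝ κ)) : EuclideanSpace ℝ κ → ℝ :=
  (HS o).indicator fun x => δ * ((x o) ^ α * infDist x F ^ (-β))

noncomputable def Tt (o : κ) (s : ℕ) (μ p : ℝ) (u : EuclideanSpace ℝ κ → ℝ) : EuclideanSpace ℝ κ → ℝ :=
  (HS o).indicator (GG s o (ff o (KK s μ) p u))

noncomputable def ww (o : κ) (α β δ : ℝ) (s : ℕ) (μ p : ℝ) (F : Set (EuclideanSpace ℝ κ)) (j : ℕ) :
    EuclideanSpace ℝ κ → ℝ :=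
  (Tt o s μ p)^[j] (w0 o α β δ F)

lemma ww_succ (F : Set (EuclideanSpace ℝ κ)) (j : ℕ) :
    ww o α β δ s μ p F (j + 1) = Tt o s μ p (ww o α β δ s μ p F j) :=
  Function.iterate_succ_apply' _ _ _

lemma Tt_meas (D : Dat κ a α β μ p A δ s) {u : EuclideanSpace ℝ κ → ℝ} (G : Good o a A u) :
    Measurable (Tt o s μ p u) := by
  have Ad := G.adm D
  have hc : ContinuousOn (GG s o (ff o (KK s μ) p u)) (HS o) := fun x hx =>
    (GG_C1 D.P Ad.sm Ad.hC Ad.bd hx (Ad.KI D.P hx)).continuousAt.continuousWithinAt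
  unfold Tt
  classical
  rw [← Set.piecewise_eq_indicator]
  exact hc.measurable_piecewise continuousOn_const (HS_open o).measurableSet

lemma w0_eq (D : Dat κ a α β μ p A δ s) {F : Set (EuclideanSpace ℝ κ)} {y x : EuclideanSpace ℝ κ}
    (hx : x ∈ HS o) (h : infDist x F = dist x y) : w0 o α β δ F x = subs o α β δ y x := by
  unfold w0 subs
  rw [indicator_of_mem hx, h, dist_eq_norm, ← Real.rpow_natCast, ← Real.rpow_mul (norm_nonneg _)]
  congr 3; push_cast; ring

structure IvT (o : κ) (a α β δ A : ℝ) (F : Set (EuclideanSpace ℝ κ)) (u : EuclideanSpace ℝ κ → ℝ) : Prop where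
  m : Measurable u
  lo : ∀ y ∈ F, ∀ x ∈ HS o, subs o α β δ y x ≤ u x
  hi : ∀ ξ, ξ o = 0 → ∀ x ∈ HS o, u x ≤ supr o α β A (infDist ξ F) ξ x

lemma IvT.good (D : Dat κ a α β μ p A δ s) {F : Set (EuclideanSpace ℝ κ)} (hne : F.Nonempty)
    (hF : ∀ y ∈ F, y o = 0) {u : EuclideanSpace ℝ κ → ℝ} (I : IvT o a α β δ A F u) : Good o a A u := by
  obtain ⟨y, hy⟩ := hne
  exact ⟨I.m, fun x hx => ((subs_good D (hF y hy)).nn x hx).trans (I.lo y hy x hx),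
    fun x hx => (I.hi y (hF y hy) x hx).trans ((supr_good D (hF y hy)).le x hx)⟩

lemma ww_inv (D : Dat κ a α β μ p A δ s) {F : Set (EuclideanSpace ℝ κ)} (hne : F.Nonempty) (hcl : IsClosed F)
    (hF : ∀ y ∈ F, y o = 0) (j : ℕ) : IvT o a α β δ A F (ww o α β δ s μ p F j) := by
  induction j with
  | zero =>
    refine ⟨?_, ?_, ?_⟩
    · refine Measurable.indicator ?_ (HS_open o).measurableSet
      have := coord_meas o
      have h2 : Measurable (fun x => infDist x F) := (continuous_infDist_pt F).measurable
      fun_prop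
    · intro y hy x hx
      obtain ⟨z, hz, hxz⟩ := hcl.exists_infDist_eq_dist hne x
      have hx0 : 0 < x o := hx
      have e : ww o α β δ s μ p F 0 x = subs o α β δ z x := w0_eq D hx hxz
      rw [e]
      have h1 : ‖x - z‖ ≤ ‖x - y‖ := by
        rw [← dist_eq_norm, ← dist_eq_norm, ← hxz]; exact infDist_le_dist_of_mem hy
      have h2 := dist_ge_x1 (x := x) (hF z hz)
      have h3 : 0 < ‖x - z‖ ^ 2 := lt_of_lt_of_le (by positivity) h2
      have hδ := D.hδ
      have hβ := D.hβ0
      unfold subs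
      apply mul_le_mul_of_nonneg_left _ hδ.le
      apply mul_le_mul_of_nonneg_left _ (by positivity)
      exact Real.rpow_le_rpow_of_nonpos h3 (by gcongr) (by linarith)
    · intro ξ hξ x hx
      obtain ⟨z, hz, hxz⟩ := hcl.exists_infDist_eq_dist hne x
      have e : ww o α β δ s μ p F 0 x = subs o α β δ z x := w0_eq D hx hxz
      rw [e]
      exact subs_le_supr D infDist_nonneg (hF z hz) (by rw [← dist_eq_norm]; exact infDist_le_dist_of_mem hz) x hx
  | succ j ih =>
    have G := IvT.good D hne hF ih
    rw [ww_succ]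
    refine ⟨Tt_meas D G, ?_, ?_⟩
    · intro y hy x hx
      unfold Tt
      rw [indicator_of_mem hx]
      have M := fun x hx => subs_main (x := x) D.hα D.hαμ D.hβ D.P.ha D.hap D.hp D.hδ D.hδ2 (hF y hy) hx
      exact (sub_step D (subs_good D (hF y hy)) (fun x hx => (M x hx).1) (fun x hx => (M x hx).2.1)
        (fun x hx => (M x hx).2.2) x hx).trans (ff_mono D (subs_good D (hF y hy)) G (ih.lo y hy) x hx)
    · intro ξ hξ x hx
      unfold Tt
      rw [indicator_of_mem hx]
      have M := fun x hx => supr_main (x := x) (d := infDist ξ F) D.hα D.hαμ D.hβ D.P.ha D.hap D.hp D.hA D.hA2 hξ hx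
      exact (ff_mono D G (supr_good D hξ) (ih.hi ξ hξ) x hx).trans
        (super_step D (supr_good D hξ) (fun x hx => (M x hx).1) (fun x hx => (M x hx).2.1)
        (fun x hx => (M x hx).2.2) x hx)

lemma ww_mono (D : Dat κ a α β μ p A δ s) {F : Set (EuclideanSpace ℝ κ)} (hne : F.Nonempty) (hcl : IsClosed F)
    (hF : ∀ y ∈ F, y o = 0) (j : ℕ) : ∀ x ∈ HS o, ww o α β δ s μ p F j x ≤ ww o α β δ s μ p F (j + 1) x := by
  induction j with
  | zero =>
    intro x hx
    obtain ⟨z, hz, hxz⟩ := hcl.exists_infDist_eq_dist hne x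
    have e : ww o α β δ s μ p F 0 x = subs o α β δ z x := w0_eq D hx hxz
    rw [e]
    exact (ww_inv D hne hcl hF (0 + 1)).lo z hz x hx
  | succ j ih =>
    intro x hx
    rw [ww_succ F (j + 1), ww_succ F j]
    unfold Tt
    rw [indicator_of_mem hx, indicator_of_mem hx]
    have h := ff_mono D (IvT.good D hne hF (ww_inv D hne hcl hF j)) (IvT.good D hne hF (ww_inv D hne hcl hF (j + 1))) ih x hx
    rw [ww_succ F j] at h
    exact h

lemma ww_off (F : Set (EuclideanSpace ℝ κ)) (j : ℕ) {x : EuclideanSpace ℝ κ} (hx : x ∉ HS o) :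
    ww o α β δ s μ p F j x = 0 := by
  cases j with
  | zero => exact indicator_of_notMem (f := fun x : EuclideanSpace ℝ κ => δ * ((x o) ^ α * infDist x F ^ (-β))) hx
  | succ j => rw [ww_succ]; exact indicator_of_notMem hx _

theorem core (D : Dat κ a α β μ p A δ s) {F : Set (EuclideanSpace ℝ κ)} (hne : F.Nonempty) (hcl : IsClosed F)
    (hF : ∀ y ∈ F, y o = 0) : ∃ U : EuclideanSpace ℝ κ → ℝ, ∀ x ∈ HS o, ContDiffAt ℝ 2 U x ∧ 0 < U x ∧
      lapG U x + μ / (x o) ^ 2 * U x = U x ^ p ∧ δ * ((x o) ^ α * infDist x F ^ (-β)) ≤ U x ∧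
      U x ≤ A * 9 ^ (β / 2) * ((x o) ^ α * infDist x F ^ (-β)) := by
  set w := ww o α β δ s μ p F with hw
  have I : ∀ j, IvT o a α β δ A F (w j) := fun j => ww_inv D hne hcl hF j
  have G : ∀ j, Good o a A (w j) := fun j => IvT.good D hne hF (I j)
  have hlim : ∀ x, ∃ l, Tendsto (fun j => w j x) atTop (𝓝 l) := by
    intro x
    by_cases hx : x ∈ HS o
    · refine ⟨_, tendsto_atTop_ciSup (monotone_nat_of_le_succ fun j => ww_mono D hne hcl hF j x hx) ?_⟩
      refine ⟨A * (x o) ^ (-a), ?_⟩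
      rintro _ ⟨j, rfl⟩
      exact (G j).le x hx
    · refine ⟨0, ?_⟩
      have : (fun j => w j x) = fun _ => 0 := funext fun j => ww_off F j hx
      rw [this]; exact tendsto_const_nhds
  choose U hU using hlim
  have IU : IvT o a α β δ A F U := by
    refine ⟨measurable_of_tendsto_metrizable (fun j => (I j).m) (tendsto_pi_nhds.2 hU), ?_, ?_⟩
    · intro y hy x hx
      exact ge_of_tendsto' (hU x) fun j => (I j).lo y hy x hx
    · intro ξ hξ x hx
      exact le_of_tendsto' (hU x) fun j => (I j).hi ξ hξ x hx
  have GU := IvT.good D hne hF IU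
  have Ad := GU.adm D
  have hfix : ∀ x ∈ HS o, U x = GG s o (ff o (KK s μ) p U) x := by
    intro x hx
    have h1 := GG_tendsto D.P (fun j => (G j).adm D) (h' := ff o (KK s μ) p U) ?_ hx
    · have h2 := (hU x).comp (tendsto_add_atTop_nat 1)
      refine tendsto_nhds_unique h2 (h1.congr fun j => ?_)
      simp only [Function.comp, hw]
      rw [ww_succ]
      exact (indicator_of_mem hx _).symm
    · intro y hy
      unfold ff
      simp only [indicator_of_mem hy]
      unfold fs
      exact ((hU y).const_mul _).sub ((hU y).rpow_const (Or.inr (by have := D.hp; linarith)))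
  have hpos : ∀ x ∈ HS o, 0 < U x := by
    intro x hx
    obtain ⟨y, hy⟩ := hne
    exact lt_of_lt_of_le (subs_main D.hα D.hαμ D.hβ D.P.ha D.hap D.hp D.hδ D.hδ2 (hF y hy) hx).2.1 (IU.lo y hy x hx)
  have hev : ∀ x ∈ HS o, U =ᶠ[𝓝 x] GG s o (ff o (KK s μ) p U) := by
    intro x hx
    filter_upwards [(HS_open o).mem_nhds hx] with y hy using hfix y hy
  have hC1 : ∀ x ∈ HS o, ContDiffAt ℝ 1 U x := fun x hx =>
    (GG_C1 D.P Ad.sm Ad.hC Ad.bd hx (Ad.KI D.P hx)).congr_of_eventuallyEq (hev x hx)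
  refine ⟨U, fun x hx => ?_⟩
  have hx0 : 0 < x o := hx
  obtain ⟨g1, g2⟩ := GG_C2 D.P Ad.sm (ff_C1 hC1 hpos) hx (Ad.KI D.P hx)
  have h3 : lapG U x = lapG (GG s o (ff o (KK s μ) p U)) x := by
    unfold lapG
    rw [((hev x hx).iteratedFDeriv ℝ 2).eq_of_nhds]
  refine ⟨g1.congr_of_eventuallyEq (hev x hx), hpos x hx, ?_, ?_, ?_⟩
  · rw [h3, g2, ← hfix x hx]
    unfold ff
    rw [indicator_of_mem hx]
    unfold fs KK
    ring
  · obtain ⟨z, hz, hxz⟩ := hcl.exists_infDist_eq_dist hne x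
    have e := w0_eq D hx hxz
    unfold w0 at e
    rw [indicator_of_mem hx] at e
    rw [e]
    exact IU.lo z hz x hx
  · set ξ : EuclideanSpace ℝ κ := x - (x o) • EuclideanSpace.single o 1 with hξ
    have hξ0 : ξ o = 0 := by simp [hξ]
    have hn : ‖x - ξ‖ = x o := by
      simp [hξ, norm_smul, abs_of_pos hx0]
    have hD : infDist x F ≤ infDist ξ F + x o := by
      rw [← hn, ← dist_eq_norm]; exact infDist_le_infDist_add_dist
    have hl := QQ_low infDist_nonneg infDist_nonneg hx hn hD
    refine (IU.hi ξ hξ0 x hx).trans ((supr_le hx D.hA).trans ?_)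
    have hA := D.hA
    have hβ := D.hβ0
    have hDp : 0 < infDist x F := by
      obtain ⟨z, hz, hxz⟩ := hcl.exists_infDist_eq_dist hne x
      rw [hxz, dist_pos]
      rintro rfl
      have := hF x hz
      linarith
    have : QQ o (infDist ξ F) ξ x ^ (-β / 2) ≤ 9 ^ (β / 2) * infDist x F ^ (-β) := by
      calc QQ o (infDist ξ F) ξ x ^ (-β / 2) ≤ (infDist x F ^ 2 / 9) ^ (-β / 2) :=
            Real.rpow_le_rpow_of_nonpos (by positivity) hl (by linarith)
        _ = _ := by
          rw [Real.div_rpow (by positivity) (by norm_num), ← Real.rpow_two, ← Real.rpow_mul hDp.le,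
            show 2 * (-β / 2) = -β by ring, show -β / 2 = -(β / 2) by ring, Real.rpow_neg (by norm_num : (0:ℝ) ≤ 9)]
          field_simp
    calc A * (x o ^ α * QQ o (infDist ξ F) ξ x ^ (-β / 2)) 
        ≤ A * (x o ^ α * (9 ^ (β / 2) * infDist x F ^ (-β))) := by gcongr
      _ = _ := by ring

end iter


lemma exists_dat {κ : Type} [Fintype κ] [DecidableEq κ] {a α β μ p : ℝ} (hα : 0 < α)
    (hαμ : α * (α - 1) + μ = 0) (hβ : β = α + a) (ha : 0 < a) (hap : a * (p - 1) = 2) (hp : 1 < p)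
    (hc : 2 ≤ Fintype.card κ) (hgap : 0 < a + 2 - Fintype.card κ - α) :
    ∃ A δ : ℝ, ∃ s : ℕ, Dat κ a α β μ p A δ s := by
  have hβ0 : 0 < β := by linarith
  have hp0 : 0 < p - 1 := by linarith
  set C := C3 (Fintype.card κ) α β with hC
  have hCp : 0 < C := C3_pos hα hβ0
  set c := (α / C) ^ (α * (p - 1)) with hcdef
  have hcp : 0 < c := by positivity
  set A := 2 * (2 * C / c) ^ (p - 1)⁻¹ with hA
  have hAp : 0 < A := by positivity
  set M := β * (a + 2 - Fintype.card κ - α) with hM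
  have hMp : 0 < M := by positivity
  set δ := min (M ^ (p - 1)⁻¹) (A / 2 * 9 ^ (-β / 2)) with hδ
  have hδp : 0 < δ := lt_min (by positivity) (by positivity)
  obtain ⟨s, hs⟩ := exists_nat_ge (a + |(a + 2) * (a + 3) + 2 * Fintype.card κ| + |p * A ^ (p - 1) - μ| + 2)
  have b1 := le_abs_self ((a + 2) * (a + 3) + 2 * (Fintype.card κ : ℝ))
  have b2 := le_abs_self (p * A ^ (p - 1) - μ)
  have b3 := abs_nonneg ((a + 2) * (a + 3) + 2 * (Fintype.card κ : ℝ))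
  have b4 := abs_nonneg (p * A ^ (p - 1) - μ)
  have hs2 : (2:ℝ) ≤ s := by linarith
  have hss : (s:ℝ) ≤ s * (s - 1) := by nlinarith
  refine ⟨A, δ, s, ⟨ha, ?_, ?_, ?_, hc⟩, hα, hαμ, hβ, hap, hp, hAp, ?_, hδp, ?_, min_le_right _ _, ?_⟩
  · have : (1:ℝ) ≤ s := by linarith
    exact_mod_cast this
  · linarith
  · linarith
  · have e : (A / 2) ^ p = (A / 2) ^ (p - 1) * (A / 2) := by
      rw [← Real.rpow_add_one (by positivity)]; congr 1; ring
    have e2 : (A / 2) ^ (p - 1) = 2 * C / c := by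
      rw [hA, mul_div_cancel_left₀ _ (two_ne_zero), ← Real.rpow_mul (by positivity), inv_mul_cancel₀ hp0.ne', Real.rpow_one]
    rw [← hcdef, e, e2]
    apply le_of_eq
    field_simp
    rfl
  · calc δ ^ (p - 1) ≤ (M ^ (p - 1)⁻¹) ^ (p - 1) := Real.rpow_le_rpow hδp.le (min_le_left _ _) hp0.le
      _ = M := by rw [← Real.rpow_mul hMp.le, inv_mul_cancel₀ hp0.ne', Real.rpow_one]
  · linarith

/-- for `1 < p < p_c` and any nonempty closed subset `F` of the
boundary hyperplane there is a positive classical solution `U` of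
`ΔU + (μ/x₁²)U = U^p` on the half-space which vanishes on `∂ℝⁿ₊ \ F`, has a
strong singularity `≈ x₁^{−2/(p−1)}` above every point of `F`, and satisfies
`c⁻¹ x₁^{α₊} dist(x,F)^{−α₊−2/(p−1)} ≤ U ≤ c x₁^{α₊} dist(x,F)^{−α₊−2/(p−1)}`,
with `c > 0` depending only on `n, μ, p`. -/
theorem stmt5 (n : ℕ) (hn : 2 ≤ n) (μ p : ℝ) (hμ : μ < 1 / 4) (hp1 : 1 < p)
    (hpc : p < 1 + 2 / ((n : ℝ) - 2 + aPlus μ)) :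
    ∃ c > (0 : ℝ), ∀ F : Set (EuclideanSpace ℝ (Fin n)),
      F.Nonempty → IsClosed F → F ⊆ {x | x1 x = 0} →
      ∃ U : EuclideanSpace ℝ (Fin n) → ℝ,
        ContDiffOn ℝ 2 U (halfSpace n) ∧
        (∀ x ∈ halfSpace n, 0 < U x) ∧
        (∀ x ∈ halfSpace n, lap U x + (μ / (x1 x) ^ 2) * U x = U x ^ p) ∧
        (∀ y : EuclideanSpace ℝ (Fin n), x1 y = 0 → y ∉ F →
          Filter.Tendsto U (nhdsWithin y (halfSpace n)) (nhds 0)) ∧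
        (∀ y ∈ F, ∀ t ∈ Set.Ioo (0 : ℝ) 1,
          c⁻¹ * t ^ (-(2 / (p - 1))) ≤ U (y + t • e1 n) ∧
          U (y + t • e1 n) ≤ c * t ^ (-(2 / (p - 1)))) ∧
        (∀ x ∈ halfSpace n,
          c⁻¹ * x1 x ^ aPlus μ * Metric.infDist x F ^ (-(aPlus μ) - 2 / (p - 1)) ≤ U x ∧
          U x ≤ c * x1 x ^ aPlus μ * Metric.infDist x F ^ (-(aPlus μ) - 2 / (p - 1))) := by
  have hn0 : 0 < n := by omega
  set o : Fin n := ⟨0, hn0⟩ with ho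
  have hx1 : ∀ x : EuclideanSpace ℝ (Fin n), x1 x = x o := fun x => by
    unfold x1; rw [dif_pos hn0]
  have hHS : halfSpace n = HS o := by
    ext x
    simp only [halfSpace, HS, mem_setOf_eq, hx1]
  have he1 : e1 n = EuclideanSpace.single o 1 := by unfold e1; rw [dif_pos hn0]
  set α := aPlus μ with hαd
  set a := 2 / (p - 1) with had
  have hp0 : 0 < p - 1 := by linarith
  have ha : 0 < a := by positivity
  have hap : a * (p - 1) = 2 := by rw [had]; field_simp
  have hsq : √(1 / 4 - μ) ^ 2 = 1 / 4 - μ := Real.sq_sqrt (by linarith)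
  have hs0 : 0 ≤ √(1 / 4 - μ) := Real.sqrt_nonneg _
  have hα : 0 < α := by rw [hαd]; unfold aPlus; linarith
  have hαμ : α * (α - 1) + μ = 0 := by
    rw [hαd]; unfold aPlus; linear_combination hsq
  have hn2 : (2:ℝ) ≤ n := by exact_mod_cast hn
  have hden : 0 < (n:ℝ) - 2 + α := by linarith
  have hgap : 0 < a + 2 - Fintype.card (Fin n) - α := by
    rw [Fintype.card_fin]
    have h1 : p - 1 < 2 / ((n:ℝ) - 2 + α) := by linarith
    rw [lt_div_iff₀ hden] at h1
    have h2 : (n:ℝ) - 2 + α < a := by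
      rw [had, lt_div_iff₀ hp0]; linarith
    linarith
  obtain ⟨A, δ, s, D⟩ := exists_dat (κ := Fin n) hα hαμ rfl ha hap hp1 (by simpa using hn) hgap
  set β := α + a with hβ
  have hexp : -α - a = -β := by rw [hβ]; ring
  have hA := D.hA
  have hδ := D.hδ
  set c := max δ⁻¹ (A * 9 ^ (β / 2)) with hc
  have hcp : 0 < c := lt_of_lt_of_le (by positivity) (le_max_left _ _)
  have hcδ : c⁻¹ ≤ δ := by
    rw [inv_le_comm₀ hcp hδ]; exact le_max_left _ _
  have hcA : A * 9 ^ (β / 2) ≤ c := le_max_right _ _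
  refine ⟨c, hcp, ?_⟩
  intro F hne hcl hFs
  have hF : ∀ y ∈ F, y o = 0 := fun y hy => by rw [← hx1]; exact hFs hy
  obtain ⟨U, hU⟩ := core D hne hcl hF
  have key : ∀ x ∈ HS o, c⁻¹ * x o ^ α * Metric.infDist x F ^ (-β) ≤ U x ∧
      U x ≤ c * x o ^ α * Metric.infDist x F ^ (-β) := by
    intro x hx
    have hx0 : 0 < x o := hx
    obtain ⟨-, -, -, h1, h2⟩ := hU x hx
    have hi : 0 ≤ Metric.infDist x F := Metric.infDist_nonneg
    have hb : 0 ≤ x o ^ α * Metric.infDist x F ^ (-β) := by positivity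
    constructor
    · rw [mul_assoc]
      exact (mul_le_mul_of_nonneg_right hcδ hb).trans h1
    · rw [mul_assoc]
      exact h2.trans (mul_le_mul_of_nonneg_right hcA hb)
  refine ⟨U, ?_, ?_, ?_, ?_, ?_, ?_⟩
  · rw [hHS]; exact fun x hx => (hU x hx).1.contDiffWithinAt
  · rw [hHS]; exact fun x hx => (hU x hx).2.1
  · rw [hHS]; intro x hx
    rw [lap_eq_lapG, hx1]; exact (hU x hx).2.2.1
  · intro y hy hyF
    rw [hx1] at hy
    rw [hHS]
    have hd : 0 < Metric.infDist y F := (hcl.notMem_iff_infDist_pos hne).1 hyF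
    have hcont : ContinuousAt (fun x : EuclideanSpace ℝ (Fin n) => c * x o ^ α * Metric.infDist x F ^ (-β)) y := by
      have k1 : ContinuousAt (fun x : EuclideanSpace ℝ (Fin n) => x o) y := by fun_prop
      have k2 : ContinuousAt (fun x : EuclideanSpace ℝ (Fin n) => Metric.infDist x F) y :=
        (Metric.continuous_infDist_pt F).continuousAt
      exact (continuousAt_const.mul (k1.rpow_const (Or.inr hα.le))).mul (k2.rpow_const (Or.inl hd.ne'))
    have ht := hcont.tendsto
    simp only [hy, Real.zero_rpow hα.ne', mul_zero, zero_mul] at ht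
    refine tendsto_of_tendsto_of_tendsto_of_le_of_le' tendsto_const_nhds (ht.mono_left nhdsWithin_le_nhds) ?_ ?_
    · filter_upwards [self_mem_nhdsWithin] with x hx using (hU x hx).2.1.le
    · filter_upwards [self_mem_nhdsWithin] with x hx using (key x hx).2
  · intro y hy t ht
    have ht0 : 0 < t := ht.1
    rw [he1]
    set x : EuclideanSpace ℝ (Fin n) := y + t • EuclideanSpace.single o 1 with hxd
    have hxo : x o = t := by simp [hxd, hF y hy]
    have hx : x ∈ HS o := by
      show 0 < x o
      rw [hxo]; exact ht0
    have hdist : Metric.infDist x F = t := by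
      apply le_antisymm
      · refine (Metric.infDist_le_dist_of_mem hy).trans (le_of_eq ?_)
        rw [dist_eq_norm, hxd]
        simp [norm_smul, abs_of_pos ht0]
      · rw [Metric.le_infDist hne]
        intro z hz
        have h := dist_ge_x1 (x := x) (hF z hz)
        rw [hxo] at h
        rw [dist_eq_norm]
        exact abs_le_of_sq_le_sq' h (norm_nonneg _) |>.2
    have e : t ^ α * t ^ (-β) = t ^ (-a) := by
      rw [← Real.rpow_add ht0]; congr 1; rw [hβ]; ring
    have h := key x hx
    rw [hdist, hxo, mul_assoc, mul_assoc, e] at h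
    exact h
  · rw [hHS]; intro x hx
    rw [hx1, hexp]
    exact key x hx
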